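/- There exist a continuous function ψ_0 : ℝ → ℝ and a constant C > 0 with |ψ_0(x)| ≤ C·|x| for all |x| ≤ 1, such that for every prime q, every positive integer a coprime to q, and each choice of sign ± (with ∓ the opposite sign), writing a/q = [b_0; b_1, …, b_κ] with convergent denominators v_j, one has M_0*(±a, q) = Σ_{1≤j≤κ, (−1)^j = ∓1} (v_j/v_{j−1})^{1/2}·(log(v_j/v_{j−1}) + γ − log(8π)) − (π/2)·Σ_{1≤j≤κ, (−1)^j = ±1} (v_j/v_{j−1})^{1/2} + ζ(1/2)²·(κ+1) + Σ_{j=1}^κ ψ_0(±(−1)^j · v_{j−1}/v_j). -/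

import Mathlib

open Complex Real Finset

/-- `M_j*(a,q)`: the shifted twisted second moment (sum over all characters mod `q`),
with the extra zeta term. -/
noncomputable def Mstar (j : ℕ) (a : ℤ) (q : ℕ) [NeZero q] : ℂ :=
  ((q : ℂ) ^ ((1:ℂ)/2 - j) / (Nat.totient q : ℂ)) *
    ∑ χ : DirichletCharacter ℂ q,
      DirichletCharacter.LFunction (χ.ringHomComp (starRingEnd ℂ)) (1/2 - j) *
        χ.LFunction (1/2 + j) * χ (a : ZMod q)
  + ((q : ℂ) ^ (-(j:ℂ)) / (Nat.totient q : ℂ)) * riemannZeta (1/2 + j) *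
      riemannZeta (1/2 - j) * ((q : ℂ) ^ ((1:ℂ)/2) - (q : ℂ) ^ (-(1:ℂ)/2))

/-- The list `[b_0, b_1, …, b_κ]` of partial quotients of `a/q` produced by the
Euclidean algorithm. -/
def cfList : ℕ → ℕ → List ℕ
  | a, q =>
    if h : q = 0 then [] else (a / q) :: cfList q (a % q)
termination_by a q => q
decreasing_by exact Nat.mod_lt _ (Nat.pos_of_ne_zero h)

/-- The denominators `v_j` of the convergents of `a/q`:
`v_0 = 1`, `v_1 = b_1`, `v_j = b_j v_{j-1} + v_{j-2}`. -/
def cfDen (a q : ℕ) : ℕ → ℕ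
  | 0 => 1
  | 1 => (cfList a q).getD 1 0
  | (j+2) => (cfList a q).getD (j+2) 0 * cfDen a q (j+1) + cfDen a q j



/-- correction terms of the trapezoidal rule for `t ↦ t^(-1/2)` -/
noncomputable def rcE (x : ℝ) (n : ℕ) : ℝ :=
  1 / (2 * √(n + x) * √(n + 1 + x) * (√(n + x) + √(n + 1 + x)) ^ 3)

/-- The real Hurwitz zeta function at `s = 1/2`. -/
noncomputable def rcZ (x : ℝ) : ℝ := -2 * √x + 1 / (2 * √x) + ∑' n, rcE x n

lemma rcE_nonneg (x : ℝ) (n : ℕ) : 0 ≤ rcE x n := by unfold rcE; positivity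

lemma rcE_le {x : ℝ} (hx : 0 < x) (n : ℕ) :
    rcE x n ≤ 1 / √(n + x) ^ 3 - 1 / √((n + 1 : ℕ) + x) ^ 3 := by
  unfold rcE
  push_cast
  have ha : 0 < √(n + x) := Real.sqrt_pos.2 (by positivity)
  have hb : 0 < √(n + 1 + x) := Real.sqrt_pos.2 (by positivity)
  have ha2 : √(n + x) ^ 2 = n + x := Real.sq_sqrt (by positivity)
  have hb2 : √(n + 1 + x) ^ 2 = n + 1 + x := Real.sq_sqrt (by positivity)
  set a := √(n + x)
  set b := √(n + 1 + x)
  have h1 : (b - a) * (a + b) = 1 := by nlinarith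
  have h2 : b - a = 1 / (a + b) := by field_simp; linarith
  have h3 : 1 / a ^ 3 - 1 / b ^ 3 = (a^2 + a*b + b^2) / ((a + b) * a^3 * b^3) := by
    have : 1 / a ^ 3 - 1 / b ^ 3 = (b - a) * (a^2+a*b+b^2) / (a^3 * b^3) := by
      field_simp; ring
    rw [this, h2]; field_simp
  rw [h3, div_le_div_iff₀ (by positivity) (by positivity)]
  have : 1 * ((a + b) * a ^ 3 * b ^ 3) = (a * b * (a+b)) * (a^2*b^2) := by ring
  rw [this]
  have : (a ^ 2 + a * b + b ^ 2) * (2 * a * b * (a + b) ^ 3) = (a * b * (a+b)) * (2 * (a ^ 2 + a * b + b ^ 2) * (a+b)^2) := by ring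
  rw [this]
  apply mul_le_mul_of_nonneg_left _ (by positivity)
  have h5 : 0 < a * b := by positivity
  nlinarith [sq_nonneg (a-b), mul_pos h5 h5, sq_nonneg (a^2), sq_nonneg (b^2), mul_pos h5 (pow_pos ha 2), mul_pos h5 (pow_pos hb 2)]

lemma rcE_eq {x : ℝ} (hx : 0 < x) (n : ℕ) :
    rcE x n = (1 / √(n + x) + 1 / √(n + 1 + x)) / 2 - 2 * (√(n + 1 + x) - √(n + x)) := by
  unfold rcE
  have ha : 0 < √(n + x) := Real.sqrt_pos.2 (by positivity)
  have hb : 0 < √(n + 1 + x) := Real.sqrt_pos.2 (by positivity)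
  have ha2 : √(n + x) ^ 2 = n + x := Real.sq_sqrt (by positivity)
  have hb2 : √(n + 1 + x) ^ 2 = n + 1 + x := Real.sq_sqrt (by positivity)
  set a := √(n + x)
  set b := √(n + 1 + x)
  have h1 : (b - a) * (a + b) = 1 := by nlinarith
  have h2 : b - a = 1 / (a + b) := by field_simp; linarith
  have h3 : (1 / a + 1 / b) / 2 - 2 * (1 / (a + b)) = (b - a)^2 / (2 * a * b * (a + b)) := by
    field_simp; ring
  rw [h2, h3, h2]; field_simp

lemma rcE_sum_le {x : ℝ} (hx : 0 < x) (N : ℕ) : ∑ n ∈ range N, rcE x n ≤ 1 / √x ^ 3 := by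
  calc _ ≤ ∑ n ∈ range N, (1 / √(n + x) ^ 3 - 1 / √((n + 1 : ℕ) + x) ^ 3) :=
        sum_le_sum fun n _ => rcE_le hx n
    _ = 1 / √((0:ℕ) + x) ^ 3 - 1 / √(N + x) ^ 3 := sum_range_sub' (fun n : ℕ => 1 / √(n + x) ^ 3) N
    _ ≤ 1 / √x ^ 3 := by
        have : 0 ≤ 1 / √(N + x) ^ 3 := by positivity
        simp

lemma rcE_summable {x : ℝ} (hx : 0 < x) : Summable (rcE x) :=
  summable_of_sum_range_le (rcE_nonneg x) (rcE_sum_le hx)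

lemma rcZ_bound {x : ℝ} (hx : 0 < x) :
    0 ≤ rcZ x - (-2 * √x + 1 / (2 * √x)) ∧ rcZ x - (-2 * √x + 1 / (2 * √x)) ≤ 1 / √x ^ 3 := by
  unfold rcZ
  rw [add_sub_cancel_left]
  exact ⟨tsum_nonneg (rcE_nonneg x), Real.tsum_le_of_sum_range_le (rcE_nonneg x) (rcE_sum_le hx)⟩

lemma rcZ_succ {x : ℝ} (hx : 0 < x) : rcZ x = 1 / √x + rcZ (x + 1) := by
  unfold rcZ
  rw [(rcE_summable hx).tsum_eq_zero_add, rcE_eq hx 0]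
  have : ∀ n : ℕ, rcE x (n + 1) = rcE (x + 1) n := by
    intro n; unfold rcE; push_cast
    rw [show (n:ℝ) + 1 + x = n + (x + 1) by ring, show (n:ℝ) + 1 + 1 + x = n + 1 + (x + 1) by ring]
  simp only [this]
  simp only [Nat.cast_zero, zero_add]
  rw [add_comm 1 x]
  have ha : 0 < √x := Real.sqrt_pos.2 (by positivity)
  have hb : 0 < √(x + 1) := Real.sqrt_pos.2 (by positivity)
  field_simp; ring

lemma rcZ_add_nat {x : ℝ} (hx : 0 < x) (N : ℕ) :
    rcZ x = ∑ j ∈ range N, 1 / √(x + j) + rcZ (x + N) := by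
  induction N with
  | zero => simp
  | succ N ih =>
    rw [ih, sum_range_succ, rcZ_succ (x := x + N) (by positivity)]
    push_cast; ring_nf

/-- general difference of inverse square roots -/
lemma rc_inv_sqrt_sub {s t : ℝ} (hs : 0 < s) (hst : s ≤ t) :
    0 ≤ 1 / √s - 1 / √t ∧ 1 / √s - 1 / √t ≤ (t - s) / √s ^ 3 := by
  have ha : 0 < √s := Real.sqrt_pos.2 hs
  have hb : 0 < √t := Real.sqrt_pos.2 (hs.trans_le hst)
  have hab : √s ≤ √t := Real.sqrt_le_sqrt hst
  have ha2 : √s ^ 2 = s := Real.sq_sqrt hs.le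
  have hb2 : √t ^ 2 = t := Real.sq_sqrt (hs.le.trans hst)
  rw [← ha2, ← hb2] 
  simp only [Real.sqrt_sq ha.le, Real.sqrt_sq hb.le]
  set a := √s
  set b := √t
  refine ⟨?_, ?_⟩
  · rw [sub_nonneg]; exact one_div_le_one_div_of_le ha hab
  · have : 1 / a - 1 / b = (b - a) / (a * b) := by field_simp
    rw [this, div_le_div_iff₀ (by positivity) (by positivity)]
    have : (b ^ 2 - a ^ 2) * (a * b) - (b - a) * a ^ 3 = (b - a) * (a * ((b + a) * b - a ^ 2)) := by ring
    have h2 : 0 ≤ (b - a) * (a * ((b + a) * b - a ^ 2)) := by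
      apply mul_nonneg (by linarith) (mul_nonneg ha.le _)
      nlinarith
    linarith

lemma rc_sqrt_sub {s t : ℝ} (hs : 0 < s) (hst : s ≤ t) :
    0 ≤ √t - √s ∧ √t - √s ≤ (t - s) / √s := by
  have ha : 0 < √s := Real.sqrt_pos.2 hs
  have hab : √s ≤ √t := Real.sqrt_le_sqrt hst
  have ha2 : √s ^ 2 = s := Real.sq_sqrt hs.le
  have hb2 : √t ^ 2 = t := Real.sq_sqrt (hs.le.trans hst)
  refine ⟨by linarith, ?_⟩
  rw [le_div_iff₀ ha]
  nlinarith

lemma rc_tendsto_inv_sqrt : Filter.Tendsto (fun x : ℝ => 1 / √x) Filter.atTop (nhds 0) := by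
  simpa [Function.comp_def] using tendsto_inv_atTop_zero.comp Real.tendsto_sqrt_atTop

lemma rcZ_tail : Filter.Tendsto (fun x : ℝ => rcZ x + 2 * √x) Filter.atTop (nhds 0) := by
  have h := rc_tendsto_inv_sqrt
  have h3 : Filter.Tendsto (fun x : ℝ => 1 / 2 * (1 / √x) + (1 / √x) ^ 3) Filter.atTop (nhds 0) := by
    simpa using (h.const_mul (1/2:ℝ)).add (h.pow 3)
  refine squeeze_zero' ?_ ?_ h3
  · filter_upwards [Filter.eventually_gt_atTop 0] with x hx
    have := (rcZ_bound hx).1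
    have h2 : 0 ≤ 1 / (2 * √x) := by positivity
    linarith
  · filter_upwards [Filter.eventually_gt_atTop 0] with x hx
    have := (rcZ_bound hx).2
    have h2 : 1 / (2 * √x) = 1 / 2 * (1 / √x) := by field_simp
    have h3 : 1 / √x ^ 3 = (1 / √x) ^ 3 := by simp
    linarith

lemma rcZ_diff_tail (s t : ℝ) :
    Filter.Tendsto (fun x : ℝ => rcZ (s + x) - rcZ (t + x)) Filter.atTop (nhds 0) := by
  wlog hst : s ≤ t generalizing s t
  · have := (this t s (le_of_not_ge hst)).neg
    simpa using this
  have hs := rcZ_tail.comp (Filter.tendsto_atTop_add_const_left _ s Filter.tendsto_id)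
  have ht := rcZ_tail.comp (Filter.tendsto_atTop_add_const_left _ t Filter.tendsto_id)
  have hd : Filter.Tendsto (fun x : ℝ => √(t + x) - √(s + x)) Filter.atTop (nhds 0) := by
    have h0 : Filter.Tendsto (fun x : ℝ => (t - s) * (1 / √(s + x))) Filter.atTop (nhds 0) := by
      simpa using (rc_tendsto_inv_sqrt.comp
        (Filter.tendsto_atTop_add_const_left _ s Filter.tendsto_id)).const_mul (t - s)
    refine squeeze_zero' ?_ ?_ h0
    · filter_upwards [Filter.eventually_gt_atTop (-s)] with x hx
      exact (rc_sqrt_sub (s := s + x) (t := t + x) (by linarith) (by linarith)).1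
    · filter_upwards [Filter.eventually_gt_atTop (-s)] with x hx
      have := (rc_sqrt_sub (s := s + x) (t := t + x) (by linarith) (by linarith)).2
      calc _ ≤ _ := this
        _ = _ := by ring
  have := (hs.sub ht).add (hd.const_mul 2)
  simp only [Function.comp_def, id] at this
  convert this using 2
  · ring
  · simp

lemma rcZ_hasSum {s t : ℝ} (hs : 0 < s) (hst : s ≤ t) :
    HasSum (fun j : ℕ => 1 / √(s + j) - 1 / √(t + j)) (rcZ s - rcZ t) := by
  rw [hasSum_iff_tendsto_nat_of_nonneg]
  · have h : ∀ N : ℕ, ∑ j ∈ range N, (1 / √(s + j) - 1 / √(t + j)) =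
        rcZ s - rcZ t - (rcZ (s + N) - rcZ (t + N)) := by
      intro N
      rw [sum_sub_distrib, rcZ_add_nat hs N, rcZ_add_nat (hs.trans_le hst) N]; ring
    simp only [h]
    simpa using ((rcZ_diff_tail s t).comp tendsto_natCast_atTop_atTop).const_sub (rcZ s - rcZ t)
  · intro j
    exact (rc_inv_sqrt_sub (s := s + j) (t := t + j) (by positivity) (by linarith)).1

lemma rc_sqrt_cube {x : ℝ} (hx : 0 ≤ x) : √x ^ 3 = x ^ (3 / 2 : ℝ) := by
  rw [Real.sqrt_eq_rpow, ← Real.rpow_natCast, ← Real.rpow_mul hx]; norm_num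

lemma rc_summable32 : Summable (fun m : ℕ => 1 / √((m : ℝ) + 1) ^ 3) := by
  have h := (summable_nat_add_iff 1).2 (Real.summable_one_div_nat_rpow.2 (show (1:ℝ) < 3 / 2 by norm_num))
  refine h.congr fun m => ?_
  rw [rc_sqrt_cube (by positivity)]; push_cast; rfl

/-- the constant `ζ(3/2)` -/
noncomputable def rcK : ℝ := ∑' m : ℕ, 1 / √((m : ℝ) + 1) ^ 3

lemma rcK_ge : 1 ≤ rcK := by
  have := rc_summable32.le_tsum 0 (fun j _ => by positivity)
  simpa [rcK] using this

lemma rcZ_lip {s t : ℝ} (hs : 1 ≤ s) (hst : s ≤ t) :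
    0 ≤ rcZ s - rcZ t ∧ rcZ s - rcZ t ≤ rcK * (t - s) := by
  have h := rcZ_hasSum (by linarith) hst
  constructor
  · exact h.nonneg fun j : ℕ => (rc_inv_sqrt_sub (s := s + j) (t := t + j) (by positivity) (by linarith)).1
  · refine hasSum_le (fun j => ?_) h (rc_summable32.hasSum.mul_right (t - s))
    refine (rc_inv_sqrt_sub (s := s + j) (t := t + j) (by positivity) (by linarith)).2.trans ?_
    rw [div_eq_mul_one_div, mul_comm, show t + j - (s + j) = t - s by ring]
    apply mul_le_mul_of_nonneg_right _ (by linarith)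
    have : (j:ℝ) + 1 ≤ s + j := by linarith
    gcongr

lemma rcZ_lip' {s t : ℝ} (hs : 1 ≤ s) (ht : 1 ≤ t) : |rcZ s - rcZ t| ≤ rcK * |s - t| := by
  rcases le_total s t with h | h
  · have := rcZ_lip hs h
    rw [abs_of_nonneg this.1, abs_sub_comm, abs_of_nonneg (sub_nonneg.2 h)]; exact this.2
  · have := rcZ_lip ht h
    rw [abs_sub_comm, abs_of_nonneg this.1, abs_of_nonneg (sub_nonneg.2 h)]; exact this.2

lemma rcZ_cont1 : ContinuousOn rcZ (Set.Ici 1) := by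
  have : LipschitzOnWith (Real.toNNReal rcK) rcZ (Set.Ici 1) := by
    apply LipschitzOnWith.of_dist_le_mul
    intro x hx y hy
    rw [Real.coe_toNNReal _ (by linarith [rcK_ge]), Real.dist_eq, Real.dist_eq]
    exact rcZ_lip' hx hy
  exact this.continuousOn

lemma rcZ_cont : ContinuousOn rcZ (Set.Ioi 0) := by
  have : ContinuousOn (fun x : ℝ => 1 / √x + rcZ (x + 1)) (Set.Ioi 0) := by
    apply ContinuousOn.add
    · apply ContinuousOn.div continuousOn_const (by fun_prop)
      intro x hx; exact (Real.sqrt_pos.2 hx).ne'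
    · refine rcZ_cont1.comp (by fun_prop) ?_
      intro x hx; simp only [Set.mem_Ioi, Set.mem_Ici] at *; linarith
  exact this.congr fun x hx => rcZ_succ hx


/-- trapezoidal error on a single cell -/
noncomputable def rcErr (f : ℝ → ℝ) (u h : ℝ) : ℝ :=
  h * (f u + f (u + h)) / 2 - ∫ t in u..(u + h), f t

lemma rc_int_affine (u h c d : ℝ) :
    ∫ t in u..(u + h), (c + (t - u) * d) = h * c + h ^ 2 / 2 * d := by
  rw [intervalIntegral.integral_add (by simp) (Continuous.intervalIntegrable (by fun_prop) _ _)]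
  rw [intervalIntegral.integral_mul_const]
  have : ∫ t in u..(u + h), (t - u) = h ^ 2 / 2 := by
    rw [intervalIntegral.integral_sub (by simp) (by simp), integral_id]; simp; ring
  rw [this]; simp

lemma rcErr_nonneg {f : ℝ → ℝ} {u h : ℝ} (hh : 0 < h) (hf : ConvexOn ℝ (Set.Icc u (u + h)) f)
    (hc : ContinuousOn f (Set.Icc u (u + h))) : 0 ≤ rcErr f u h := by
  have h1 : ∫ t in u..(u + h), f t ≤ ∫ t in u..(u + h), (f u + (t - u) * ((f (u + h) - f u) / h)) := by
    apply intervalIntegral.integral_mono_on (by linarith)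
    · exact ContinuousOn.intervalIntegrable_of_Icc (by linarith) hc
    · exact Continuous.intervalIntegrable (by fun_prop) _ _
    · intro t ht
      have := hf.2 (show u ∈ Set.Icc u (u + h) from ⟨le_rfl, by linarith⟩)
        (show u + h ∈ Set.Icc u (u + h) from ⟨by linarith, le_rfl⟩)
        (show 0 ≤ (u + h - t) / h from div_nonneg (by linarith [ht.2]) hh.le)
        (show 0 ≤ (t - u) / h from div_nonneg (by linarith [ht.1]) hh.le) (by field_simp; ring)
      simp only [smul_eq_mul] at this
      have e : (u + h - t) / h * u + (t - u) / h * (u + h) = t := by field_simp; ring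
      rw [e] at this
      refine this.trans (le_of_eq ?_)
      field_simp; ring
  rw [rc_int_affine] at h1
  unfold rcErr
  have : h * f u + h ^ 2 / 2 * ((f (u + h) - f u) / h) = h * (f u + f (u + h)) / 2 := by
    field_simp; ring
  linarith

lemma rcErr_le {f : ℝ → ℝ} {u h : ℝ} (hh : 0 < h) (hf : ConvexOn ℝ (Set.Icc (u - h) (u + h)) f)
    (hc : ContinuousOn f (Set.Icc (u - h) (u + h))) :
    rcErr f u h ≤ h * ((f (u + h) - f u) - (f u - f (u - h))) / 2 := by
  have h1 : ∫ t in u..(u + h), (f u + (t - u) * ((f u - f (u - h)) / h)) ≤ ∫ t in u..(u + h), f t := by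
    apply intervalIntegral.integral_mono_on (by linarith)
    · exact Continuous.intervalIntegrable (by fun_prop) _ _
    · exact ContinuousOn.intervalIntegrable_of_Icc (by linarith)
        (hc.mono (Set.Icc_subset_Icc (by linarith) le_rfl))
    · intro t ht
      have hp : 0 < t - u + h := by linarith [ht.1]
      have := hf.2 (show u - h ∈ Set.Icc (u - h) (u + h) from ⟨le_rfl, by linarith⟩)
        (show t ∈ Set.Icc (u - h) (u + h) from ⟨by linarith [ht.1], ht.2⟩)
        (show 0 ≤ (t - u) / (t - u + h) from div_nonneg (by linarith [ht.1]) hp.le)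
        (show 0 ≤ h / (t - u + h) from div_nonneg hh.le hp.le) (by field_simp)
      simp only [smul_eq_mul] at this
      have e : (t - u) / (t - u + h) * (u - h) + h / (t - u + h) * t = u := by field_simp; ring
      rw [e, ← mul_le_mul_iff_of_pos_left hp] at this
      have e2 : (t - u + h) * ((t - u) / (t - u + h) * f (u - h) + h / (t - u + h) * f t) =
        (t - u) * f (u - h) + h * f t := by field_simp
      rw [e2] at this
      rw [← mul_le_mul_iff_of_pos_left hh]
      have e3 : h * (f u + (t - u) * ((f u - f (u - h)) / h)) = h * f u + (t - u) * (f u - f (u - h)) := by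
        field_simp
      rw [e3]; linarith
  rw [rc_int_affine] at h1
  unfold rcErr
  have : h * f u + h ^ 2 / 2 * ((f u - f (u - h)) / h) = h * f u + h * (f u - f (u - h)) / 2 := by
    field_simp
  linarith

lemma rcErr_sum_nonneg {f : ℝ → ℝ} {a h : ℝ} (n : ℕ) (hh : 0 < h)
    (hf : ConvexOn ℝ (Set.Icc a (a + n * h)) f)
    (hc : ContinuousOn f (Set.Icc a (a + n * h))) :
    0 ≤ ∑ j ∈ range n, rcErr f (a + j * h) h := by
  apply sum_nonneg
  intro j hj
  have hj' : (j : ℝ) + 1 ≤ n := by exact_mod_cast Nat.succ_le_of_lt (mem_range.1 hj)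
  have hj0 : (0 : ℝ) ≤ j * h := by positivity
  have hs : Set.Icc (a + j * h) (a + j * h + h) ⊆ Set.Icc a (a + n * h) :=
    Set.Icc_subset_Icc (by linarith) (by nlinarith)
  exact rcErr_nonneg hh (hf.subset hs (convex_Icc _ _)) (hc.mono hs)

lemma rcErr_sum_le {f : ℝ → ℝ} {a h : ℝ} (n : ℕ) (hh : 0 < h)
    (hf : ConvexOn ℝ (Set.Icc a (a + (n + 1) * h)) f)
    (hc : ContinuousOn f (Set.Icc a (a + (n + 1) * h))) :
    ∑ j ∈ range (n + 1), rcErr f (a + j * h) h ≤ rcErr f a h +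
      h * ((f (a + (n + 1) * h) - f (a + n * h)) - (f (a + h) - f a)) / 2 := by
  induction n with
  | zero => simp
  | succ n ih =>
    have hs : Set.Icc a (a + (n + 1) * h) ⊆ Set.Icc a (a + ((n + 1 : ℕ) + 1) * h) :=
      Set.Icc_subset_Icc le_rfl (by push_cast; nlinarith)
    have ih' := ih (hf.subset hs (convex_Icc _ _)) (hc.mono hs)
    rw [sum_range_succ]
    have hn0 : (0 : ℝ) ≤ n * h := by positivity
    have hs2 : Set.Icc (a + (n + 1 : ℕ) * h - h) (a + (n + 1 : ℕ) * h + h) ⊆ Set.Icc a (a + ((n + 1 : ℕ) + 1) * h) :=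
      Set.Icc_subset_Icc (by push_cast; nlinarith) (by push_cast; nlinarith)
    have := rcErr_le hh (hf.subset hs2 (convex_Icc _ _)) (hc.mono hs2)
    push_cast at this ⊢
    rw [show a + ((n:ℝ) + 1) * h + h = a + ((n:ℝ) + 1 + 1) * h by ring, show a + ((n:ℝ) + 1) * h - h = a + n * h by ring] at this
    linarith

lemma rcErr_le_anti {f : ℝ → ℝ} {u h : ℝ} (hh : 0 < h) (hf : AntitoneOn f (Set.Icc u (u + h)))
    (hc : ContinuousOn f (Set.Icc u (u + h))) : rcErr f u h ≤ h * (f u - f (u + h)) / 2 := by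
  have h1 : ∫ t in u..(u + h), f (u + h) ≤ ∫ t in u..(u + h), f t := by
    apply intervalIntegral.integral_mono_on (by linarith)
    · simp
    · exact ContinuousOn.intervalIntegrable_of_Icc (by linarith) hc
    · intro t ht
      exact hf ht ⟨by linarith, le_rfl⟩ ht.2
  simp at h1
  unfold rcErr
  linarith

/-- total trapezoidal error for convex antitone functions -/
lemma rcErr_sum_anti {f : ℝ → ℝ} {a h : ℝ} (n : ℕ) (hh : 0 < h)
    (hf : ConvexOn ℝ (Set.Ici a) f) (hm : AntitoneOn f (Set.Ici a))
    (hc : ContinuousOn f (Set.Ici a)) :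
    0 ≤ ∑ j ∈ range n, rcErr f (a + j * h) h ∧
    ∑ j ∈ range n, rcErr f (a + j * h) h ≤ h * (f a - f (a + h)) := by
  have hsub : ∀ b, Set.Icc a b ⊆ Set.Ici a := fun b x hx => hx.1
  refine ⟨rcErr_sum_nonneg n hh (hf.subset (hsub _) (convex_Icc _ _)) (hc.mono (hsub _)), ?_⟩
  have h0 : 0 ≤ f a - f (a + h) := sub_nonneg.2 (hm (by simp) (by simp [hh.le]) (by linarith))
  cases n with
  | zero => simp; positivity
  | succ n =>
    have h1 := rcErr_sum_le n hh (hf.subset (hsub _) (convex_Icc _ _)) (hc.mono (hsub _))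
    have h2 := rcErr_le_anti hh (hm.mono (hsub _)) (hc.mono (hsub (a + h)))
    have h3 : f (a + (n + 1) * h) ≤ f (a + n * h) :=
      hm (by simp; positivity) (by simp; positivity) (by nlinarith)
    nlinarith

lemma rcErr_add {f g : ℝ → ℝ} {u h : ℝ} (hh : 0 < h) (hf : ContinuousOn f (Set.Icc u (u + h)))
    (hg : ContinuousOn g (Set.Icc u (u + h))) :
    rcErr (fun t => f t + g t) u h = rcErr f u h + rcErr g u h := by
  unfold rcErr
  rw [intervalIntegral.integral_add]
  · ring
  · exact ContinuousOn.intervalIntegrable_of_Icc (by linarith) hf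
  · exact ContinuousOn.intervalIntegrable_of_Icc (by linarith) hg

lemma rcErr_const_mul {f : ℝ → ℝ} (c : ℝ) {u h : ℝ}  :
    rcErr (fun t => c * f t) u h = c * rcErr f u h := by
  unfold rcErr
  rw [intervalIntegral.integral_const_mul]
  ring

lemma rcErr_abs_le {f : ℝ → ℝ} {u h B : ℝ} (hh : 0 < h) (hB : ∀ t ∈ Set.Icc u (u + h), |f t| ≤ B) :
    |rcErr f u h| ≤ 2 * h * B := by
  unfold rcErr
  have h1 : |∫ t in u..(u + h), f t| ≤ B * |u + h - u| := by
    rw [← Real.norm_eq_abs]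
    apply intervalIntegral.norm_integral_le_of_norm_le_const
    intro t ht
    rw [Set.uIoc_of_le (by linarith)] at ht
    exact hB t ⟨ht.1.le, ht.2⟩
  rw [add_sub_cancel_left, abs_of_pos hh] at h1
  have h2 := hB u ⟨le_rfl, by linarith⟩
  have h3 := hB (u + h) ⟨by linarith, le_rfl⟩
  rw [abs_le] at *
  constructor <;> nlinarith

/-- summing trapezoidal errors -/
lemma rcErr_sum_eq {f : ℝ → ℝ} {a h : ℝ} (n : ℕ) (hh : 0 < h)
    (hc : ContinuousOn f (Set.Icc a (a + n * h))) :
    ∑ j ∈ range n, rcErr f (a + j * h) h =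
      h * (∑ j ∈ range n, f (a + j * h) + (f (a + n * h) - f a) / 2) - ∫ t in a..(a + n * h), f t := by
  induction n with
  | zero => simp
  | succ n ih =>
    have hn0 : (0 : ℝ) ≤ n * h := by positivity
    have hs : Set.Icc a (a + n * h) ⊆ Set.Icc a (a + (n + 1 : ℕ) * h) :=
      Set.Icc_subset_Icc le_rfl (by push_cast; nlinarith)
    have hs2 : Set.Icc (a + n * h) (a + (n + 1 : ℕ) * h) ⊆ Set.Icc a (a + (n + 1 : ℕ) * h) :=
      Set.Icc_subset_Icc (by linarith) le_rfl
    have e : a + (n + 1 : ℕ) * h = a + n * h + h := by push_cast; ring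
    rw [sum_range_succ, ih (hc.mono hs), sum_range_succ]
    rw [← intervalIntegral.integral_add_adjacent_intervals (b := a + n * h)
      (ContinuousOn.intervalIntegrable_of_Icc (by linarith) (hc.mono hs))
      (ContinuousOn.intervalIntegrable_of_Icc (by push_cast; nlinarith) (hc.mono hs2)), e]
    unfold rcErr; ring

/-- geometric means of affine functions are concave -/
lemma rc_concave_gm {S : Set ℝ} (hS : Convex ℝ S) (c d : ℝ) (hc : ∀ y ∈ S, 0 ≤ y + c)
    (hd : ∀ y ∈ S, 0 ≤ y + d) : ConcaveOn ℝ S (fun y => √(y + c) * √(y + d)) := by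
  refine ⟨hS, ?_⟩
  intro x hx y hy a b ha hb hab
  simp only [smul_eq_mul]
  have e1 : a * x + b * y + c = a * (x + c) + b * (y + c) := by
    linear_combination (-c) * hab
  have e2 : a * x + b * y + d = a * (x + d) + b * (y + d) := by
    linear_combination (-d) * hab
  have h1 := hc x hx; have h2 := hc y hy; have h3 := hd x hx; have h4 := hd y hy
  rw [e1, e2, ← Real.sqrt_mul (x := a * (x + c) + b * (y + c)) (by positivity)]
  apply Real.le_sqrt_of_sq_le
  have q1 := Real.sq_sqrt h1; have q2 := Real.sq_sqrt h2
  have q3 := Real.sq_sqrt h3; have q4 := Real.sq_sqrt h4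
  set A := √(x + c); set B := √(y + c); set C := √(x + d); set D := √(y + d)
  rw [← q1, ← q2, ← q3, ← q4]
  nlinarith [mul_nonneg (mul_nonneg ha hb) (sq_nonneg (A * D - B * C))]

lemma rc_concave_sqrt {S : Set ℝ} (hS : Convex ℝ S) (c : ℝ) (hc : ∀ y ∈ S, 0 ≤ y + c) :
    ConcaveOn ℝ S (fun y => √(y + c)) := by
  refine ⟨hS, ?_⟩
  intro x hx y hy a b ha hb hab
  simp only [smul_eq_mul]
  have e1 : a * x + b * y + c = a * (x + c) + b * (y + c) := by
    linear_combination (-c) * hab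
  have := Real.strictConcaveOn_sqrt.concaveOn.2 (hc x hx) (hc y hy) ha hb hab
  simp only [smul_eq_mul] at this
  rw [e1]; exact this

lemma rc_convex_inv {S : Set ℝ} {f : ℝ → ℝ} (hf : ConcaveOn ℝ S f) (hp : ∀ y ∈ S, 0 < f y) :
    ConvexOn ℝ S (fun y => 1 / f y) := by
  refine ⟨hf.1, ?_⟩
  intro x hx y hy a b ha hb hab
  simp only [smul_eq_mul]
  have h := hf.2 hx hy ha hb hab
  simp only [smul_eq_mul] at h
  have h1 := hp x hx; have h2 := hp y hy
  have h3 : 0 < a * f x + b * f y := by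
    rcases ha.eq_or_lt with rfl | ha
    · have : b = 1 := by linarith
      subst this; simpa
    · positivity
  refine (one_div_le_one_div_of_le h3 h).trans ?_
  have e : b = 1 - a := by linarith
  rw [div_le_iff₀ h3]
  have : (a * (1 / f x) + b * (1 / f y)) * (a * f x + b * f y) = 1 + a * b * (f x - f y) ^ 2 / (f x * f y) := by
    rw [e]; field_simp; ring
  rw [this]
  have : 0 ≤ a * b * (f x - f y) ^ 2 / (f x * f y) := by positivity
  linarith


noncomputable def rcB (t : ℝ) : ℝ := 2 * (1 / (1 + √t + √(1 - t)))

lemma rcB_cont : Continuous rcB := by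
  unfold rcB
  refine continuous_const.mul (Continuous.div continuous_const (by fun_prop) ?_)
  intro t; positivity

lemma rcB_convex : ConvexOn ℝ (Set.Icc 0 1) rcB := by
  have h1 : ConcaveOn ℝ (Set.Icc (0:ℝ) 1) (fun t => √t) :=
    Real.strictConcaveOn_sqrt.concaveOn.subset (fun x hx => hx.1) (convex_Icc _ _)
  have h2 : ConcaveOn ℝ (Set.Icc (0:ℝ) 1) (fun t => √(1 - t)) := by
    refine ⟨convex_Icc _ _, ?_⟩
    intro x hx y hy a b ha hb hab
    have := Real.strictConcaveOn_sqrt.concaveOn.2 (show 1 - x ∈ Set.Ici 0 by simpa using hx.2)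
      (show 1 - y ∈ Set.Ici 0 by simpa using hy.2) ha hb hab
    simp only [smul_eq_mul] at this ⊢
    rwa [show a * (1 - x) + b * (1 - y) = 1 - (a * x + b * y) by linear_combination hab] at this
  have h3 : ConcaveOn ℝ (Set.Icc (0:ℝ) 1) (fun t => 1 + √t + √(1 - t)) :=
    ((concaveOn_const 1 (convex_Icc _ _)).add h1).add h2
  have h4 := rc_convex_inv h3 (fun y _ => by positivity)
  exact h4.smul (show (0:ℝ) ≤ 2 by norm_num)

lemma rcB_bounds {t : ℝ} (h0 : 0 ≤ t) (h1 : t ≤ 1) :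
    rcB t ≤ 1 ∧ 1 - rcB t ≤ √t / 2 ∧ 1 - rcB t ≤ √(1 - t) / 2 := by
  unfold rcB
  have ha2 : √t ^ 2 = t := Real.sq_sqrt h0
  have hb2 : √(1 - t) ^ 2 = 1 - t := Real.sq_sqrt (by linarith)
  have ha : 0 ≤ √t := Real.sqrt_nonneg _
  have hb : 0 ≤ √(1 - t) := Real.sqrt_nonneg _
  set a := √t
  set b := √(1 - t)
  have hab : 1 ≤ a + b := by nlinarith [mul_nonneg ha hb]
  have ha1 : a ≤ 1 := by nlinarith
  have hb1 : b ≤ 1 := by nlinarith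
  have e : 1 - 2 * (1 / (1 + a + b)) = (a + b - 1) / (1 + a + b) := by field_simp; ring
  have hpos : 0 < 1 + a + b := by positivity
  refine ⟨?_, ?_, ?_⟩
  · have : 0 ≤ (a + b - 1) / (1 + a + b) := div_nonneg (by linarith) hpos.le
    linarith
  · rw [e, div_le_div_iff₀ hpos (by norm_num)]; nlinarith
  · rw [e, div_le_div_iff₀ hpos (by norm_num)]; nlinarith

lemma rcB_zero : rcB 0 = 1 := by unfold rcB; norm_num

lemma rcB_int : ∫ t in (0:ℝ)..1, rcB t = 4 - π := by
  have := intervalIntegral.integral_eq_sub_of_hasDerivAt_of_le (a := 0) (b := 1) (by norm_num)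
    (f := fun t => 2 * √t - 2 * √(1 - t) - Real.arcsin (2 * t - 1)) (f' := rcB)
    (Continuous.continuousOn (by fun_prop)) ?_ (rcB_cont.intervalIntegrable _ _)
  · rw [this]
    norm_num
    ring
  · intro t ht
    have hd1 : HasDerivAt (fun t : ℝ => √t) (1 / (2 * √t)) t := Real.hasDerivAt_sqrt ht.1.ne'
    have h1t : 0 < 1 - t := by linarith [ht.2]
    have hd2 : HasDerivAt (fun t : ℝ => √(1 - t)) (-1 / (2 * √(1 - t))) t :=
      ((hasDerivAt_id t).const_sub 1).sqrt h1t.ne'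
    have hd3 : HasDerivAt (fun t : ℝ => Real.arcsin (2 * t - 1)) (1 / √(1 - (2 * t - 1) ^ 2) * 2) t := by
      have h := Real.hasDerivAt_arcsin (x := 2 * t - 1) (by linarith [ht.1]) (by linarith)
      have h2 : HasDerivAt (fun t : ℝ => 2 * t - 1) 2 t := by
        simpa using ((hasDerivAt_id t).const_mul 2).sub_const 1
      exact HasDerivAt.comp (h₂ := Real.arcsin) (h := fun t : ℝ => 2 * t - 1) t h h2
    have hd := ((hd1.const_mul 2).sub (hd2.const_mul 2)).sub hd3
    refine HasDerivAt.congr_deriv hd ?_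
    have e : √(1 - (2 * t - 1) ^ 2) = 2 * (√t * √(1 - t)) := by
      rw [show 1 - (2 * t - 1) ^ 2 = 2 ^ 2 * (t * (1 - t)) by ring, Real.sqrt_mul (by norm_num),
        Real.sqrt_sq (by norm_num), Real.sqrt_mul ht.1.le]
    rw [e]
    unfold rcB
    have ha2 : √t ^ 2 = t := Real.sq_sqrt ht.1.le
    have hb2 : √(1 - t) ^ 2 = 1 - t := Real.sq_sqrt (by linarith)
    have ha : 0 < √t := Real.sqrt_pos.2 ht.1
    have hb : 0 < √(1 - t) := Real.sqrt_pos.2 h1t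
    set a := √t
    set b := √(1 - t)
    have hab : a ^ 2 + b ^ 2 = 1 := by linarith
    field_simp
    nlinarith

lemma rcB_sum {y : ℝ} (hy : 1 ≤ y) :
    |1 / y * ∑ m ∈ range ⌊y⌋₊, rcB ((m + 1) / y) - (3 - π + ⌊y⌋₊ / y)| ≤ 3 * (1 / y * √(1 / y)) := by
  obtain ⟨n, hn⟩ : ∃ n, ⌊y⌋₊ = n + 1 := ⟨⌊y⌋₊ - 1, by have := Nat.floor_pos.2 hy; omega⟩
  have hn1 : ((n:ℝ) + 1) ≤ y := by
    have := Nat.floor_le (show 0 ≤ y by linarith); rw [hn] at this; push_cast at this; exact this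
  have hn2 : y < (n:ℝ) + 2 := by
    have := Nat.lt_floor_add_one y; rw [hn] at this; push_cast at this; linarith
  rw [hn]
  have hy0 : 0 < y := by linarith
  set h := 1 / y with hh
  have hhpos : 0 < h := by positivity
  have hh1 : h ≤ 1 := by rw [hh, div_le_one hy0]; exact hy
  have hyh : y * h = 1 := by rw [hh]; field_simp
  have hnh1 : ((n:ℝ) + 1) * h ≤ 1 := by nlinarith
  have hnh2 : 1 - ((n:ℝ) + 1) * h ≤ h := by nlinarith
  have hnh0 : 0 ≤ (n:ℝ) * h := by positivity
  have e1 := rcErr_sum_eq (f := rcB) (a := 0) (n + 1) hhpos rcB_cont.continuousOn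
  have hs : Set.Icc (0:ℝ) (0 + (n + 1) * h) ⊆ Set.Icc 0 1 := Set.Icc_subset_Icc le_rfl (by linarith)
  have e2 := rcErr_sum_nonneg (f := rcB) (a := 0) (n + 1) hhpos
    (by push_cast; exact rcB_convex.subset hs (convex_Icc _ _)) rcB_cont.continuousOn
  have e3 := rcErr_sum_le (f := rcB) (a := 0) n hhpos
    (rcB_convex.subset hs (convex_Icc _ _)) rcB_cont.continuousOn
  simp only [zero_add] at e1 e2 e3
  have e4 : ∑ j ∈ range (n + 1), rcB (j * h) + (rcB ((n + 1 : ℕ) * h) - rcB 0) = ∑ m ∈ range (n + 1), rcB ((m + 1) / y) := by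
    have a1 := sum_range_succ (fun j : ℕ => rcB (j * h)) (n + 1)
    have a2 := sum_range_succ' (fun j : ℕ => rcB (j * h)) (n + 1)
    have a3 : ∑ m ∈ range (n + 1), rcB ((m + 1) / y) = ∑ m ∈ range (n + 1), rcB ((m + 1 : ℕ) * h) := by
      apply sum_congr rfl; intro m _; rw [hh]; push_cast; ring_nf
    rw [a3]
    simp only [Nat.cast_zero, zero_mul] at a2
    linarith
  rw [← e4]
  -- bounds
  have b1 := rcB_bounds (t := h) hhpos.le hh1
  have b2 := rcB_bounds (t := (n + 1) * h) (by positivity) hnh1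
  have b3 := rcB_bounds (t := n * h) (by positivity) (by linarith)
  have s1 : √(1 - (n + 1) * h) ≤ √h := Real.sqrt_le_sqrt hnh2
  have s2 : √(1 - n * h) ≤ 2 * √h := by
    rw [show 2 * √h = √(2 ^ 2 * h) by rw [Real.sqrt_mul (by norm_num), Real.sqrt_sq (by norm_num)]]
    exact Real.sqrt_le_sqrt (by linarith)
  have i1 : h * (1 - √h / 2) ≤ ∫ t in (0:ℝ)..h, rcB t := by
    have : ∫ t in (0:ℝ)..h, (1 - √h / 2) ≤ ∫ t in (0:ℝ)..h, rcB t := by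
      apply intervalIntegral.integral_mono_on hhpos.le (by simp) (rcB_cont.intervalIntegrable _ _)
      intro t ht
      have := (rcB_bounds (t := t) ht.1 (ht.2.trans hh1)).2.1
      have := Real.sqrt_le_sqrt ht.2
      linarith
    rw [intervalIntegral.integral_const] at this; simpa only [sub_zero, smul_eq_mul] using this
  have i2 : (1 - (n + 1) * h) * (1 - √h / 2) ≤ ∫ t in ((n + 1) * h)..1, rcB t := by
    have : ∫ t in ((n + 1) * h)..1, (1 - √h / 2) ≤ ∫ t in ((n + 1) * h)..1, rcB t := by
      apply intervalIntegral.integral_mono_on hnh1 (by simp) (rcB_cont.intervalIntegrable _ _)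
      intro t ht
      have ht0 : 0 ≤ t := le_trans (by positivity) ht.1
      have := (rcB_bounds (t := t) ht0 ht.2).2.2
      have : √(1 - t) ≤ √h := Real.sqrt_le_sqrt (by linarith [ht.1])
      linarith
    rw [intervalIntegral.integral_const] at this; simpa only [sub_zero, smul_eq_mul] using this
  have i3 : ∫ t in ((n + 1) * h)..1, rcB t ≤ 1 - (n + 1) * h := by
    have : ∫ t in ((n + 1) * h)..1, rcB t ≤ ∫ t in ((n + 1) * h)..1, (1:ℝ) := by
      apply intervalIntegral.integral_mono_on hnh1 (rcB_cont.intervalIntegrable _ _) (by simp)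
      intro t ht
      have ht0 : 0 ≤ t := le_trans (by positivity) ht.1
      exact (rcB_bounds (t := t) ht0 ht.2).1
    simpa using this
  have i4 : ∫ t in (0:ℝ)..((n + 1) * h), rcB t = 4 - π - ∫ t in ((n + 1) * h)..1, rcB t := by
    rw [← rcB_int, ← intervalIntegral.integral_add_adjacent_intervals (a := 0) (b := (n + 1) * h) (c := 1)
      (rcB_cont.intervalIntegrable _ _) (rcB_cont.intervalIntegrable _ _)]; ring
  have e5 : rcErr rcB 0 h ≤ h * (√h / 2) := by
    unfold rcErr; rw [zero_add, rcB_zero]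
    have : h * rcB h ≤ h * 1 := mul_le_mul_of_nonneg_left b1.1 hhpos.le
    nlinarith
  push_cast at e1 e2 e3 ⊢
  rw [i4] at e1
  rw [e1] at e2 e3
  rw [rcB_zero] at e2 e3 ⊢
  have hsq : 0 ≤ √h := Real.sqrt_nonneg _
  have e6 : ((n:ℝ) + 1) / y = (n + 1) * h := by rw [hh]; ring
  rw [e6]
  have p1 : h * (1 - rcB ((n + 1) * h)) ≤ h * (√h / 2) :=
    mul_le_mul_of_nonneg_left (by linarith [b2.2.2]) hhpos.le
  have p1' : 0 ≤ h * (1 - rcB ((n + 1) * h)) := mul_nonneg hhpos.le (by linarith [b2.1])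
  have p2 : h * (rcB ((n + 1) * h) - rcB (n * h) - (rcB h - 1)) ≤ h * (√h + √h / 2) :=
    mul_le_mul_of_nonneg_left (by linarith [b3.2.2, b2.1, b1.2.1]) hhpos.le
  have p3 : (1 - (n + 1) * h) * (√h / 2) ≤ h * (√h / 2) :=
    mul_le_mul_of_nonneg_right hnh2 (by positivity)
  have p4 : 0 ≤ h * √h := by positivity
  rw [abs_le]
  set S := ∑ j ∈ range (n + 1), rcB (j * h)
  set I := ∫ t in ((n + 1) * h)..1, rcB t
  set b := rcB ((n + 1) * h)
  set c := rcB (n * h)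
  constructor <;> linarith


noncomputable def rcs (m y : ℝ) : ℝ := -√(y - m) / (√m * (√y + √m))

lemma rcs_zero {m y : ℝ} (h : y ≤ m) : rcs m y = 0 := by
  unfold rcs; rw [Real.sqrt_eq_zero_of_nonpos (by linarith)]; simp

/-- algebraic identities for `rcs` -/
lemma rcs_eq1 {m y : ℝ} (hm : 0 < m) (h : m ≤ y) :
    rcs m y = -(1 / √m) + 2 / (√m + √y + √(y - m)) := by
  unfold rcs
  have ha2 : √m ^ 2 = m := Real.sq_sqrt hm.le
  have hb2 : √y ^ 2 = y := Real.sq_sqrt (by linarith)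
  have hc2 : √(y - m) ^ 2 = y - m := Real.sq_sqrt (by linarith)
  have ha : 0 < √m := Real.sqrt_pos.2 hm
  have hb : 0 < √y := Real.sqrt_pos.2 (by linarith)
  have hc : 0 ≤ √(y - m) := Real.sqrt_nonneg _
  set a := √m
  set b := √y
  set c := √(y - m)
  have hab : a ^ 2 + c ^ 2 = b ^ 2 := by linarith
  field_simp
  nlinarith

lemma rcs_eq2 {m y : ℝ} (hm : 0 < m) (h : m < y) :
    rcs m y = 1 / √(y - m) - 1 / √m * √y * (1 / √(y - m)) := by
  unfold rcs
  have ha2 : √m ^ 2 = m := Real.sq_sqrt hm.le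
  have hb2 : √y ^ 2 = y := Real.sq_sqrt (by linarith)
  have hc2 : √(y - m) ^ 2 = y - m := Real.sq_sqrt (by linarith)
  have ha : 0 < √m := Real.sqrt_pos.2 hm
  have hb : 0 < √y := Real.sqrt_pos.2 (by linarith)
  have hc : 0 < √(y - m) := Real.sqrt_pos.2 (by linarith)
  set a := √m
  set b := √y
  set c := √(y - m)
  have hab : a ^ 2 + c ^ 2 = b ^ 2 := by linarith
  field_simp
  nlinarith

lemma rcs_eqB {m y : ℝ} (hm : 0 < m) (h : m ≤ y) :
    rcs m y = -(1 / √m) + 1 / √y * rcB (m / y) := by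
  rw [rcs_eq1 hm h]
  have hy : 0 < y := by linarith
  unfold rcB
  have hb : 0 < √y := Real.sqrt_pos.2 hy
  have ha : 0 < √m := Real.sqrt_pos.2 hm
  have hc : 0 ≤ √(y - m) := Real.sqrt_nonneg _
  rw [show 1 - m / y = (y - m) / y by field_simp, Real.sqrt_div hm.le, Real.sqrt_div (by linarith)]
  congr 1
  field_simp
  ring

lemma rcs_abs {m y : ℝ} (hm : 0 < m) : |rcs m y| ≤ √(y - m) / m / 2 := by
  rcases le_total y m with h | h
  · rw [rcs_zero h]; simp; positivity
  · unfold rcs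
    have ha2 : √m ^ 2 = m := Real.sq_sqrt hm.le
    have ha : 0 < √m := Real.sqrt_pos.2 hm
    have hb : √m ≤ √y := Real.sqrt_le_sqrt h
    rw [neg_div, abs_neg, abs_of_nonneg (by positivity), div_div]
    apply div_le_div_of_nonneg_left (by positivity) (by positivity)
    nlinarith

noncomputable def rcg (y : ℝ) : ℝ := ∑ m ∈ range ⌊y⌋₊, rcs (m + 1) y

lemma rcg_eq {y : ℝ} {N : ℕ} (hy : y ≤ N + 1) : rcg y = ∑ m ∈ range N, rcs (m + 1) y := by
  unfold rcg
  rcases le_total ⌊y⌋₊ N with h | h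
  · refine sum_subset (range_mono h) ?_
    intro m _ hm
    apply rcs_zero
    rw [mem_range, not_lt] at hm
    have := Nat.lt_floor_add_one y
    have : (⌊y⌋₊ : ℝ) ≤ m := by exact_mod_cast hm
    linarith
  · symm
    refine sum_subset (range_mono h) ?_
    intro m _ hm
    apply rcs_zero
    rw [mem_range, not_lt] at hm
    have : (N : ℝ) ≤ m := by exact_mod_cast hm
    linarith

noncomputable def rcEE (y : ℝ) : ℝ := rcZ y + π * √y + rcZ 1 + rcg y

lemma rcs_cont {m : ℝ} (hm : 0 < m) : Continuous (rcs m) := by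
  unfold rcs
  refine Continuous.div (by fun_prop) (by fun_prop) ?_
  intro y; have : 0 < √m := Real.sqrt_pos.2 hm
  positivity

lemma rcg_cont : Continuous rcg := by
  rw [continuous_iff_continuousAt]
  intro y
  have hc : Continuous (fun z => ∑ m ∈ range (⌊y⌋₊ + 1), rcs (m + 1) z) :=
    continuous_finsetSum _ fun m _ => rcs_cont (by positivity)
  refine hc.continuousAt.congr ?_
  have : y < ⌊y⌋₊ + 1 + 1 := by linarith [Nat.lt_floor_add_one y]
  filter_upwards [gt_mem_nhds this] with z hz
  rw [rcg_eq (N := ⌊y⌋₊ + 1) (by push_cast; linarith)]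

lemma rcEE_cont : ContinuousOn rcEE (Set.Ioi 0) := by
  unfold rcEE
  exact ((rcZ_cont.add (by fun_prop)).add continuousOn_const).add rcg_cont.continuousOn

set_option maxHeartbeats 1000000 in
lemma rcEE_large {y : ℝ} (hy : 1 ≤ y) : |rcEE y| ≤ 20 / y := by
  have hy0 : 0 < y := by linarith
  have hB := rcB_sum hy
  set n := ⌊y⌋₊ with hn
  have hn1 : (n : ℝ) ≤ y := Nat.floor_le hy0.le
  have hn2 : y < n + 1 := Nat.lt_floor_add_one y
  have hn3 : (1:ℝ) ≤ n := by exact_mod_cast Nat.floor_pos.2 hy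
  have hg : rcg y = -(rcZ 1 - rcZ (1 + n)) + √y * (1 / y * ∑ m ∈ range n, rcB ((m + 1) / y)) := by
    rw [rcZ_add_nat (x := 1) one_pos n]
    unfold rcg
    rw [add_sub_cancel_right, ← hn, mul_sum, mul_sum, ← sum_neg_distrib, ← sum_add_distrib]
    apply sum_congr rfl
    intro m hm
    have : (m:ℝ) + 1 ≤ n := by exact_mod_cast mem_range.1 hm
    rw [rcs_eqB (by positivity) (by linarith), add_comm (1:ℝ) m]
    have hb2 : √y ^ 2 = y := Real.sq_sqrt hy0.le
    have hb : 0 < √y := Real.sqrt_pos.2 hy0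
    congr 1
    rw [← mul_assoc]; congr 1
    field_simp; linarith
  have z1 := rcZ_bound hy0
  have z2 := rcZ_bound (x := n) (by linarith)
  have z3 := rcZ_succ (x := n) (by linarith)
  rw [add_comm] at z3
  have a2 : √n ^ 2 = n := Real.sq_sqrt (by linarith)
  have b2 : √y ^ 2 = y := Real.sq_sqrt hy0.le
  have a1 : 1 ≤ √n := Real.one_le_sqrt.2 hn3
  have ab : √n ≤ √y := Real.sqrt_le_sqrt hn1
  have hs : √(1 / y) = 1 / √y := by rw [Real.sqrt_div (by norm_num)]; simp
  have hnext : rcZ (1 + n) = rcZ n - 1 / √n := by rw [add_comm] ; linarith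
  unfold rcEE
  rw [hg, hnext]
  set X := 1 / y * ∑ m ∈ range n, rcB ((m + 1) / y) with hX
  rw [hs] at hB
  set a := √n
  set b := √y
  have hb0 : 0 < b := by linarith
  have ha0 : 0 < a := by linarith
  have hX2 : |b * X - b * (3 - π + n / y)| ≤ 3 / y := by
    rw [← mul_sub, abs_mul, abs_of_pos hb0]
    calc b * _ ≤ b * (3 * (1 / y * (1 / b))) := mul_le_mul_of_nonneg_left hB hb0.le
      _ = 3 / y := by field_simp
  have hbn : b * (n / y) = a ^ 2 / b := by rw [← a2, ← b2]; field_simp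
  have r1 : 1 / b ^ 3 ≤ 1 / y := by
    rw [← b2]; apply one_div_le_one_div_of_le (by positivity); nlinarith
  have hya : b ^ 2 ≤ 2 * a ^ 2 := by nlinarith
  have r2 : 1 / a ^ 3 ≤ 2 / y := by
    rw [← b2, div_le_div_iff₀ (by positivity) (by positivity)]
    nlinarith [mul_nonneg (sq_nonneg a) (sub_nonneg.2 a1)]
  have hba : (b - a) * (b + a) ≤ 1 := by nlinarith
  have hba2 : b - a ≤ 1 / a := by rw [le_div_iff₀ ha0]; nlinarith
  have r3 : b - 2 * a + a ^ 2 / b ≤ 2 / y := by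
    have e : b - 2 * a + a ^ 2 / b = (b - a) ^ 2 / b := by field_simp; ring
    rw [e]
    calc (b - a) ^ 2 / b ≤ (1 / a) ^ 2 / 1 := by gcongr <;> linarith
      _ = 1 / a ^ 2 := by ring
      _ ≤ 2 / y := by rw [← b2, div_le_div_iff₀ (by positivity) (by positivity)]; linarith
  have r3' : 0 ≤ b - 2 * a + a ^ 2 / b := by
    have e : b - 2 * a + a ^ 2 / b = (b - a) ^ 2 / b := by field_simp; ring
    rw [e]; positivity
  have r4 : 1 / a - 1 / b ≤ 2 / y := by
    have := (rc_inv_sqrt_sub (s := n) (t := y) (by linarith) hn1).2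
    calc 1 / a - 1 / b ≤ (y - n) / a ^ 3 := this
      _ ≤ 1 / a ^ 3 := by gcongr; linarith
      _ ≤ _ := r2
  have r4' : 0 ≤ 1 / a - 1 / b := (rc_inv_sqrt_sub (s := n) (t := y) (by linarith) hn1).1
  have h2a : 1 / (2 * a) = 1 / a / 2 := by field_simp
  have h2b : 1 / (2 * b) = 1 / b / 2 := by field_simp
  rw [h2a] at z2; rw [h2b] at z1
  have hmul : b * (3 - π + n / y) = 3 * b - π * b + a ^ 2 / b := by rw [mul_add, hbn]; ring
  rw [hmul] at hX2
  rw [abs_le] at hX2 ⊢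
  have q : 20 / y = 20 * (1 / y) := by ring
  have q2 : 2 / y = 2 * (1 / y) := by ring
  have q3 : 3 / y = 3 * (1 / y) := by ring
  have q0 : 0 < 1 / y := by positivity
  rw [q2] at r2 r3 r4; rw [q3] at hX2; rw [q]
  constructor <;> linarith [z1.1, z1.2, z2.1, z2.2, hX2.1, hX2.2]

lemma rcEE_small_eq {y : ℝ} (hy0 : 0 < y) (hy : y ≤ 1) :
    rcEE y = 1 / √y + rcZ (y + 1) + π * √y + rcZ 1 := by
  unfold rcEE
  rw [rcg_eq (N := 0) (by simpa using hy), rcZ_succ hy0]; simp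

/-- the constant in the bound for `rcEE` -/
noncomputable def rcCE : ℝ := 20 + 2 * |rcZ 1| + rcK

lemma rcEE_bound {y : ℝ} (hy0 : 0 < y) : |rcEE y| ≤ rcCE / y := by
  have hK := rcK_ge
  have hz := abs_nonneg (rcZ 1)
  rcases le_total 1 y with hy | hy
  · refine (rcEE_large hy).trans ?_
    unfold rcCE; gcongr; linarith
  · rw [rcEE_small_eq hy0 hy]
    have hl := rcZ_lip (s := 1) (t := y + 1) le_rfl (by linarith)
    have b2 : √y ^ 2 = y := Real.sq_sqrt hy0.le
    have hb : 0 < √y := Real.sqrt_pos.2 hy0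
    have hb1 : √y ≤ 1 := Real.sqrt_le_one.2 hy
    have hpi := Real.pi_le_four
    have hpi0 := Real.pi_pos
    have h1y : 1 ≤ 1 / y := by rw [le_div_iff₀ hy0]; linarith
    have h2y : 1 / √y ≤ 1 / y := one_div_le_one_div_of_le hy0 (by nlinarith)
    have h3 : 0 < 1 / √y := by positivity
    have hp : π * √y ≤ 4 := by nlinarith
    have hp0 : 0 ≤ π * √y := by positivity
    have hk : rcK * (y + 1 - 1) ≤ rcK := by nlinarith
    have e : rcCE / y = rcCE * (1 / y) := by ring
    have e2 : 1 / y + (2 * |rcZ 1| + rcK + 4) ≤ rcCE / y := by rw [e]; unfold rcCE; nlinarith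
    refine le_trans ?_ e2
    have := le_abs_self (rcZ 1)
    have := neg_abs_le (rcZ 1)
    rw [abs_le]
    constructor <;> linarith


lemma rcD_term {x : ℝ} (hx : 0 < x) (v : ℕ) :
    |1 / √((v:ℝ) + 1) * rcEE (x * (v + 1))| ≤ rcCE / x * (1 / √((v:ℝ) + 1) ^ 3) := by
  have hv : (0:ℝ) < v + 1 := by positivity
  have := rcEE_bound (y := x * (v + 1)) (by positivity)
  rw [abs_mul, abs_of_nonneg (by positivity)]
  refine (mul_le_mul_of_nonneg_left this (by positivity)).trans (le_of_eq ?_)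
  have b2 : √((v:ℝ) + 1) ^ 2 = v + 1 := Real.sq_sqrt hv.le
  have hb : 0 < √((v:ℝ) + 1) := Real.sqrt_pos.2 hv
  rw [show √((v:ℝ) + 1) ^ 3 = √((v:ℝ) + 1) * (√((v:ℝ) + 1) ^ 2) by ring, b2]
  field_simp

noncomputable def rcD (x : ℝ) : ℝ := ∑' v : ℕ, 1 / √((v:ℝ) + 1) * rcEE (x * (v + 1))

lemma rcD_summable {x : ℝ} (hx : 0 < x) :
    Summable (fun v : ℕ => 1 / √((v:ℝ) + 1) * rcEE (x * (v + 1))) :=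
  Summable.of_norm_bounded (rc_summable32.mul_left (rcCE / x)) (rcD_term hx)

lemma rcD_bound {x : ℝ} (hx : 0 < x) : |rcD x| ≤ rcCE * rcK / x := by
  have := tsum_of_norm_bounded (f := fun v : ℕ => 1 / √((v:ℝ) + 1) * rcEE (x * (v + 1)))
    (rc_summable32.hasSum.mul_left (rcCE / x)) (rcD_term hx)
  refine this.trans (le_of_eq ?_)
  unfold rcK; ring

lemma rcCE_pos : 0 < rcCE := by
  unfold rcCE; have := rcK_ge; positivity

lemma rcD_cont : ContinuousOn rcD (Set.Ioi 0) := by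
  have key : ∀ c : ℝ, 0 < c → ContinuousOn rcD (Set.Ioi c) := by
    intro c hc
    unfold rcD
    refine continuousOn_tsum (u := fun v : ℕ => rcCE / c * (1 / √((v:ℝ) + 1) ^ 3)) ?_
      (rc_summable32.mul_left _) ?_
    · intro v
      refine continuousOn_const.mul (rcEE_cont.comp (by fun_prop) ?_)
      intro x hx
      have : 0 < x := hc.trans hx
      simp only [Set.mem_Ioi]; positivity
    · intro v x hx
      have hx' : c < x := hx
      refine (rcD_term (hc.trans hx') v).trans ?_
      have := rcCE_pos
      gcongr
  intro x hx
  have hx' : 0 < x := hx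
  exact ((key (x / 2) (by positivity)).continuousAt (Ioi_mem_nhds (by linarith))).continuousWithinAt

noncomputable def rcG (x : ℝ) : ℝ := π / 2 * √x - rcZ 1 ^ 2 + rcD x

lemma rc_inv_sum (n : ℕ) : ∑ m ∈ range n, 1 / √((m:ℝ) + 1) = rcZ 1 - rcZ (1 + n) := by
  rw [rcZ_add_nat one_pos n, add_sub_cancel_right]
  exact sum_congr rfl fun m _ => by rw [add_comm]

noncomputable def rcb (M : ℕ) : ℝ := ∑ r ∈ range M, 1 / √(r:ℝ) * (1 / √((M:ℝ) - r))

lemma rcb_eq (N : ℕ) : √((N:ℝ) + 1) * rcb (N + 1) = π * √((N:ℝ) + 1) + 2 * rcZ 1 - rcEE (N + 1) := by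
  have hg : rcg (N + 1) = ∑ m ∈ range N, rcs (m + 1) (N + 1) := rcg_eq le_rfl
  have h1 : rcg (N + 1) = (rcZ 1 - rcZ (1 + N)) - √((N:ℝ) + 1) * rcb (N + 1) := by
    rw [hg]
    have e : ∑ m ∈ range N, 1 / √((N:ℝ) - m) = rcZ 1 - rcZ (1 + N) := by
      rw [← rc_inv_sum, ← sum_range_reflect]
      apply sum_congr rfl
      intro m hm
      have := mem_range.1 hm
      rw [Nat.sub_sub, Nat.cast_sub (by omega)]; push_cast; congr 2; ring
    rw [← e]
    unfold rcb
    rw [sum_range_succ', mul_add, mul_sum]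
    simp only [Nat.cast_zero, Real.sqrt_zero, div_zero, zero_mul, mul_zero, add_zero]
    rw [← sum_sub_distrib]
    apply sum_congr rfl
    intro m hm
    have : (m:ℝ) + 1 ≤ N := by exact_mod_cast mem_range.1 hm
    rw [rcs_eq2 (by positivity) (by linarith)]
    push_cast
    rw [show (N:ℝ) + 1 - (m + 1) = N - m by ring]
    ring
  unfold rcEE
  rw [h1, add_comm (1:ℝ) N]
  ring

lemma rcb_tendsto : Filter.Tendsto rcb Filter.atTop (nhds π) := by
  rw [← Filter.tendsto_add_atTop_iff_nat 1]
  have h : ∀ N : ℕ, rcb (N + 1) = π + (2 * rcZ 1 - rcEE (N + 1)) * (1 / √((N:ℝ) + 1)) := by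
    intro N
    have := rcb_eq N
    have hb : 0 < √((N:ℝ) + 1) := Real.sqrt_pos.2 (by positivity)
    field_simp; linarith
  simp only [h]
  have h0 : Filter.Tendsto (fun N : ℕ => 1 / √((N:ℝ) + 1)) Filter.atTop (nhds 0) :=
    rc_tendsto_inv_sqrt.comp (Filter.tendsto_atTop_add_const_right _ 1 tendsto_natCast_atTop_atTop)
  have hb : Filter.IsBoundedUnder (· ≤ ·) Filter.atTop
      (norm ∘ fun N : ℕ => 2 * rcZ 1 - rcEE (N + 1)) := by
    refine Filter.isBoundedUnder_of ⟨2 * |rcZ 1| + rcCE, fun N => ?_⟩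
    have := rcEE_bound (y := (N:ℝ) + 1) (by positivity)
    have h2 : rcCE / ((N:ℝ) + 1) ≤ rcCE := div_le_self rcCE_pos.le (by linarith [(Nat.cast_nonneg N : (0:ℝ) ≤ N)])
    simp only [Function.comp, Real.norm_eq_abs]
    calc _ ≤ |2 * rcZ 1| + |rcEE (N + 1)| := abs_sub _ _
      _ ≤ _ := by rw [abs_mul, abs_two]; linarith
  have h3 := hb.smul_tendsto_zero h0
  simpa using h3.const_add π

/-- `Σ √r/√(M-r)` -/
lemma rcb_half (M : ℕ) : ∑ r ∈ range M, √(r:ℝ) * (1 / √((M:ℝ) - r)) = M / 2 * rcb M := by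
  cases M with
  | zero => simp
  | succ N =>
    have e1 : ∑ r ∈ range (N + 1), √(r:ℝ) * (1 / √((N + 1 : ℕ) - r)) =
        ∑ m ∈ range N, ((m:ℝ) + 1) * (1 / √((m:ℝ) + 1) * (1 / √((N:ℝ) - m))) := by
      rw [sum_range_succ']
      simp only [Nat.cast_zero, Real.sqrt_zero, zero_mul, add_zero]
      apply sum_congr rfl
      intro m _
      have hb : 0 < √((m:ℝ) + 1) := Real.sqrt_pos.2 (by positivity)
      have b2 : √((m:ℝ) + 1) ^ 2 = m + 1 := Real.sq_sqrt (by positivity)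
      push_cast
      rw [show (N:ℝ) + 1 - (m + 1) = N - m by ring, ← mul_assoc]
      congr 1
      field_simp; linarith
    have e2 : rcb (N + 1) = ∑ m ∈ range N, (1 / √((m:ℝ) + 1) * (1 / √((N:ℝ) - m))) := by
      unfold rcb
      rw [sum_range_succ']
      simp only [Nat.cast_zero, Real.sqrt_zero, div_zero, zero_mul, add_zero]
      apply sum_congr rfl
      intro m _
      push_cast
      rw [show (N:ℝ) + 1 - (m + 1) = N - m by ring]
    have e3 : ∑ m ∈ range N, ((m:ℝ) + 1) * (1 / √((m:ℝ) + 1) * (1 / √((N:ℝ) - m))) =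
        ∑ m ∈ range N, ((N:ℝ) - m) * (1 / √((m:ℝ) + 1) * (1 / √((N:ℝ) - m))) := by
      rw [← sum_range_reflect]
      apply sum_congr rfl
      intro m hm
      have := mem_range.1 hm
      rw [Nat.sub_sub, Nat.cast_sub (by omega)]; push_cast
      rw [show (N:ℝ) - (1 + m) + 1 = N - m by ring, show (N:ℝ) - (N - (1 + m)) = m + 1 by ring]
      ring
    have e4 : ∑ m ∈ range N, ((m:ℝ) + 1) * (1 / √((m:ℝ) + 1) * (1 / √((N:ℝ) - m))) +
        ∑ m ∈ range N, ((N:ℝ) - m) * (1 / √((m:ℝ) + 1) * (1 / √((N:ℝ) - m))) = (N + 1) * rcb (N + 1) := by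
      rw [e2, mul_sum, ← sum_add_distrib]
      exact sum_congr rfl fun m _ => by ring
    rw [e1]
    push_cast
    linarith

noncomputable def rce (Y : ℝ) : ℝ := rcZ (1 + Y) + 2 * √Y + 1 / (2 * √Y)

lemma rce_bound {Y : ℝ} (hY : 0 < Y) : |rce Y| ≤ 1 / √Y ^ 3 := by
  have h1 := rcZ_bound hY
  have h2 := rcZ_succ hY
  have h3 : 1 / (2 * √Y) = 1 / √Y / 2 := by have := Real.sqrt_pos.2 hY; field_simp
  unfold rce
  rw [add_comm 1 Y]
  rw [abs_of_nonneg (by linarith [h1.1])]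
  linarith [h1.2]

lemma rce_tendsto {x : ℝ} (hx : 0 < x) : Filter.Tendsto
    (fun M : ℕ => ∑ r ∈ range M, 1 / √((M:ℝ) - r) * rce (r / x)) Filter.atTop (nhds 0) := by
  have hsum : Summable (fun r : ℕ => |rce (r / x)|) := by
    rw [← summable_nat_add_iff 1]
    refine Summable.of_nonneg_of_le (fun r => abs_nonneg _) (fun r => ?_) (rc_summable32.mul_left (√x ^ 3))
    refine (rce_bound (by positivity)).trans (le_of_eq ?_)
    rw [Real.sqrt_div (by positivity)]
    have := Real.sqrt_pos.2 hx
    have h2 : 0 < √((r:ℝ) + 1) := Real.sqrt_pos.2 (by positivity)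
    push_cast
    field_simp
  have h := tendsto_tsum_of_dominated_convergence (𝓕 := Filter.atTop) (f := fun (M : ℕ) (r : ℕ) => 1 / √((M:ℝ) - r) * rce (r / x))
    (g := fun _ => 0) hsum ?_ ?_
  · rw [tsum_zero] at h
    refine h.congr fun M => ?_
    rw [tsum_eq_sum (s := range M)]
    intro r hr
    have : (M:ℝ) ≤ r := by exact_mod_cast not_lt.1 (fun h => hr (mem_range.2 h))
    rw [Real.sqrt_eq_zero_of_nonpos (by linarith)]; simp
  · intro r
    have h1 : Filter.Tendsto (fun M : ℕ => 1 / √((M:ℝ) - r)) Filter.atTop (nhds 0) := by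
      refine rc_tendsto_inv_sqrt.comp ?_
      simp only [sub_eq_add_neg]
      exact Filter.tendsto_atTop_add_const_right _ _ tendsto_natCast_atTop_atTop
    simpa using h1.mul_const (rce (r / x))
  · filter_upwards with M r
    rw [norm_mul, Real.norm_eq_abs, Real.norm_eq_abs]
    have : |1 / √((M:ℝ) - r)| ≤ 1 := by
      rw [abs_of_nonneg (by positivity)]
      rcases le_or_gt M r with h | h
      · have : (M:ℝ) ≤ r := by exact_mod_cast h
        rw [Real.sqrt_eq_zero_of_nonpos (by linarith)]; simp
      · have : (r:ℝ) + 1 ≤ M := by exact_mod_cast h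
        apply div_le_one_of_le₀ _ (by positivity)
        exact Real.one_le_sqrt.2 (by linarith)
    calc _ ≤ 1 * |rce (r / x)| := mul_le_mul_of_nonneg_right this (abs_nonneg _)
      _ = _ := one_mul _

lemma rcS_tendsto {x : ℝ} (hx : 0 < x) : Filter.Tendsto
    (fun M : ℕ => ∑ r ∈ range M, 1 / √((M:ℝ) - r) * rcZ (1 + r / x) +
      (π * M / √x + 2 * rcZ 1 * √M / √x)) Filter.atTop (nhds (-(π / 2 * √x))) := by
  have hsx := Real.sqrt_pos.2 hx
  have h1 : ∀ M : ℕ, ∑ r ∈ range M, 1 / √((M:ℝ) - r) * rcZ (1 + r / x) =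
      ∑ r ∈ range M, 1 / √((M:ℝ) - r) * rce (r / x) - 2 / √x * (M / 2 * rcb M) - √x / 2 * rcb M := by
    intro M
    rw [← rcb_half]
    unfold rcb
    rw [mul_sum, mul_sum, ← sum_sub_distrib, ← sum_sub_distrib]
    apply sum_congr rfl
    intro r _
    unfold rce
    rw [Real.sqrt_div (by positivity)]
    have : 1 / (2 * (√(r:ℝ) / √x)) = √x / 2 * (1 / √(r:ℝ)) := by
      rw [one_div, mul_inv, inv_div]; ring
    rw [this]; ring
  have h2 : Filter.Tendsto (fun M : ℕ => ∑ r ∈ range M, 1 / √((M:ℝ) - r) * rce (r / x) - √x / 2 * rcb M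
      + 1 / √x * (√M * rcEE M)) Filter.atTop (nhds (0 - √x / 2 * π + 1 / √x * 0)) := by
    refine ((rce_tendsto hx).sub (rcb_tendsto.const_mul _)).add (Filter.Tendsto.const_mul _ ?_)
    refine squeeze_zero_norm' (a := fun M : ℕ => rcCE * (1 / √(M:ℝ))) ?_ ?_
    · filter_upwards [Filter.eventually_gt_atTop 0] with M hM
      have hM' : (0:ℝ) < M := by exact_mod_cast hM
      have hs := Real.sqrt_pos.2 hM'
      rw [norm_mul, Real.norm_eq_abs, Real.norm_eq_abs, abs_of_pos hs]
      refine (mul_le_mul_of_nonneg_left (rcEE_bound hM') hs.le).trans (le_of_eq ?_)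
      have b2 : √(M:ℝ) ^ 2 = M := Real.sq_sqrt hM'.le
      field_simp; rw [b2]; ring
    · simpa using (rc_tendsto_inv_sqrt.comp tendsto_natCast_atTop_atTop).const_mul rcCE
  have e : (0 - √x / 2 * π + 1 / √x * 0) = -(π / 2 * √x) := by ring
  rw [e] at h2
  refine h2.congr' ?_
  filter_upwards [Filter.eventually_gt_atTop 0] with M hM
  obtain ⟨N, rfl⟩ : ∃ N, M = N + 1 := ⟨M - 1, by omega⟩
  rw [h1]
  have := rcb_eq N
  have hs : 0 < √((N:ℝ) + 1) := Real.sqrt_pos.2 (by positivity)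
  have b2 : √((N:ℝ) + 1) ^ 2 = N + 1 := Real.sq_sqrt (by positivity)
  push_cast
  have e3 : rcEE ((N:ℝ) + 1) = π * √((N:ℝ) + 1) + 2 * rcZ 1 - √((N:ℝ) + 1) * rcb (N + 1) := by linarith
  rw [e3]
  rw [show ((N:ℝ) + 1) / 2 = √((N:ℝ) + 1) ^ 2 / 2 by rw [b2], show π * ((N:ℝ) + 1) = π * √((N:ℝ) + 1) ^ 2 by rw [b2]]
  field_simp
  ring


/-- periodised version of `rcZ` -/
noncomputable def rcH (y : ℝ) : ℝ := rcZ (y - ⌈y⌉ + 1)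

lemma rcH_add_int (y : ℝ) (n : ℤ) : rcH (y + n) = rcH y := by
  unfold rcH; rw [Int.ceil_add_intCast]; push_cast; congr 1; ring

lemma rcH_of_mem {y : ℝ} (h0 : 0 < y) (h1 : y ≤ 1) : rcH y = rcZ y := by
  unfold rcH
  have : ⌈y⌉ = 1 := by rw [Int.ceil_eq_iff]; norm_num; exact ⟨h0, h1⟩
  rw [this]; norm_num

lemma rcH_zero : rcH 0 = rcZ 1 := by unfold rcH; simp

lemma rcH_eq {y : ℝ} (h0 : 0 < y) {N : ℕ} (hN : y ≤ N + 1) :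
    rcH y = rcZ y + ∑ m ∈ range N, 1 / √(y - (m + 1)) := by
  obtain ⟨n, hn⟩ : ∃ n : ℕ, ⌈y⌉₊ = n + 1 := ⟨⌈y⌉₊ - 1, by have := Nat.ceil_pos.2 h0; omega⟩
  have hn' : (⌈y⌉ : ℝ) = n + 1 := by
    rw [← natCast_ceil_eq_intCast_ceil h0.le, hn]; push_cast; ring
  have h1 : (n:ℝ) < y := by
    have := Nat.lt_ceil (a := y) (n := n); rw [hn] at this; exact this.1 (by omega)
  have h2 : y ≤ n + 1 := by
    have := Nat.le_ceil y; rw [hn] at this; push_cast at this; exact this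
  have hnN : n ≤ N := by
    have : (n:ℝ) < N + 1 := by linarith
    have : n < N + 1 := by exact_mod_cast this
    omega
  unfold rcH
  rw [hn', show y - (n + 1) + 1 = y - n by ring, rcZ_add_nat (x := y - n) (by linarith) n,
    sub_add_cancel, add_comm]
  congr 1
  rw [← sum_subset (range_mono hnN), ← sum_range_reflect]
  · apply sum_congr rfl
    intro m hm
    have := mem_range.1 hm
    rw [Nat.sub_sub, Nat.cast_sub (by omega)]; push_cast; congr 2; ring
  · intro m _ hm
    have : (n:ℝ) ≤ m := by exact_mod_cast not_lt.1 (fun h => hm (mem_range.2 h))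
    rw [Real.sqrt_eq_zero_of_nonpos (by linarith)]; simp

noncomputable def rcF (a : ℤ) (k : ℕ) : ℝ :=
  1 / √(k:ℝ) * ∑ n ∈ range k, rcH (a * n / k) * rcH (n / k)

noncomputable def rchz (k : ℕ) (j : ZMod k) : ℝ := rcH (j.val / k)

lemma rchz_int {k : ℕ} [NeZero k] (c : ℤ) : rchz k (c : ZMod k) = rcH (c / k) := by
  unfold rchz
  have h1 : ((c : ZMod k).val : ℤ) = c % k := ZMod.val_intCast c
  have h2 : (c:ℝ) = ((c : ZMod k).val : ℝ) + k * (c / k : ℤ) := by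
    have h3 : ((c : ZMod k).val : ℤ) + k * (c / k) = c := by rw [h1]; exact Int.emod_add_mul_ediv c k
    exact_mod_cast h3.symm
  have hk : (k:ℝ) ≠ 0 := by exact_mod_cast NeZero.ne k
  have h4 : (c:ℝ) / k = ((c : ZMod k).val : ℝ) / k + (c / k : ℤ) := by
    nth_rewrite 1 [h2]; field_simp
  rw [h4, rcH_add_int]

lemma rc_sum_zmod {k : ℕ} [NeZero k] {R : Type*} [AddCommMonoid R] (f : ZMod k → R) :
    ∑ n ∈ range k, f (n : ZMod k) = ∑ j : ZMod k, f j := by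
  refine sum_nbij' (fun n => (n : ZMod k)) (fun j => j.val) ?_ ?_ ?_ ?_ ?_
  · intro n _; exact mem_univ _
  · intro j _; exact mem_range.2 (ZMod.val_lt j)
  · intro n hn; exact ZMod.val_cast_of_lt (mem_range.1 hn)
  · intro j _; exact ZMod.natCast_zmod_val j
  · intro n _; rfl

lemma rcF_zmod (a : ℤ) (k : ℕ) [NeZero k] :
    rcF a k = 1 / √(k:ℝ) * ∑ j : ZMod k, rchz k (a * j) * rchz k j := by
  unfold rcF
  rw [← rc_sum_zmod]
  congr 1
  apply sum_congr rfl
  intro n _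
  have h1 := rchz_int (k := k) (a * n)
  have h2 := rchz_int (k := k) (n : ℤ)
  push_cast at h1 h2
  rw [h1, h2]

lemma rc_unit_sum {k : ℕ} [NeZero k] {R : Type*} [AddCommMonoid R] (f : ZMod k → R) (u : (ZMod k)ˣ) :
    ∑ j : ZMod k, f (u * j) = ∑ j : ZMod k, f j :=
  Fintype.sum_equiv (Units.mulLeft u) _ _ (fun _ => rfl)

lemma rc_unit_of_coprime {a : ℤ} {k : ℕ} (h : IsCoprime a (k:ℤ)) : ∃ u : (ZMod k)ˣ, (u : ZMod k) = a := by
  obtain ⟨x, y, hxy⟩ := h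
  have : (x : ZMod k) * a = 1 := by
    have := congrArg (fun z : ℤ => (z : ZMod k)) hxy
    push_cast at this; simpa using this
  exact ⟨⟨a, x, by rw [mul_comm]; exact this, this⟩, rfl⟩

lemma rc_sum_blocks (f : ℕ → ℝ) (k N : ℕ) :
    ∑ v ∈ range (k * N), f v = ∑ n ∈ range k, ∑ j ∈ range N, f (k * j + n) := by
  rw [sum_comm]
  induction N with
  | zero => simp
  | succ N ih => rw [Nat.mul_succ, sum_range_add, ih, sum_range_succ]

lemma rc_sum_shift (f : ℕ → ℝ) (k : ℕ) (h : f k = f 0) :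
    ∑ n ∈ range k, f (n + 1) = ∑ n ∈ range k, f n := by
  have h1 := sum_range_succ f k
  have h2 := sum_range_succ' f k
  linarith

lemma rc_sqrt_block {k : ℕ} (hk : 0 < k) (j n : ℕ) :
    1 / √(((k * j + n : ℕ) : ℝ) + 1) = 1 / √(k:ℝ) * (1 / √(((n:ℝ) + 1) / k + j)) := by
  have hk' : (0:ℝ) < k := by exact_mod_cast hk
  rw [one_div_mul_one_div, ← Real.sqrt_mul hk'.le]
  congr 2
  push_cast; field_simp; ring

lemma rcZ_nat_tail (t : ℝ) : Filter.Tendsto (fun N : ℕ => rcZ (t + N) + 2 * √(N:ℝ)) Filter.atTop (nhds 0) := by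
  have h1 := (rcZ_diff_tail t 0).add rcZ_tail
  have h2 := h1.comp tendsto_natCast_atTop_atTop
  simp only [Function.comp_def, zero_add, add_zero] at h2
  refine h2.congr fun N => ?_
  ring

/-- distribution relation -/
lemma rcZ_distrib {k : ℕ} (hk : 0 < k) : ∑ n ∈ range k, rcZ (((n:ℝ) + 1) / k) = √(k:ℝ) * rcZ 1 := by
  have hk' : (0:ℝ) < k := by exact_mod_cast hk
  have hs := Real.sqrt_pos.2 hk'
  have e : ∀ N : ℕ, ∑ n ∈ range k, rcZ (((n:ℝ) + 1) / k) - √(k:ℝ) * rcZ 1 =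
      ∑ n ∈ range k, (rcZ (((n:ℝ) + 1) / k + N) + 2 * √(N:ℝ)) -
        √(k:ℝ) * (rcZ (1 + (k * N : ℕ)) + 2 * √((k * N : ℕ):ℝ)) := by
    intro N
    have h1 : ∑ v ∈ range (k * N), 1 / √((v:ℝ) + 1) = rcZ 1 - rcZ (1 + (k * N : ℕ)) := rc_inv_sum _
    rw [rc_sum_blocks (fun v => 1 / √((v:ℝ) + 1))] at h1
    simp only [rc_sqrt_block hk] at h1
    have h2 : ∀ n : ℕ, rcZ (((n:ℝ) + 1) / k) = ∑ j ∈ range N, 1 / √(((n:ℝ) + 1) / k + j) + rcZ (((n:ℝ) + 1) / k + N) :=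
      fun n => rcZ_add_nat (by positivity) N
    have h3 : ∑ n ∈ range k, rcZ (((n:ℝ) + 1) / k) = √(k:ℝ) * (rcZ 1 - rcZ (1 + (k * N : ℕ))) + ∑ n ∈ range k, rcZ (((n:ℝ) + 1) / k + N) := by
      rw [← h1]
      simp only [← mul_sum]
      rw [← mul_assoc, mul_one_div_cancel hs.ne', one_mul, ← sum_add_distrib]
      exact sum_congr rfl fun n _ => h2 n
    rw [h3, sum_add_distrib]
    simp only [sum_const, card_range, nsmul_eq_mul]
    push_cast
    rw [Real.sqrt_mul hk'.le]
    have : √(k:ℝ) * √(k:ℝ) = k := Real.mul_self_sqrt hk'.le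
    linear_combination (2 * √(N:ℝ)) * this
  have t1 : Filter.Tendsto (fun N : ℕ => ∑ n ∈ range k, (rcZ (((n:ℝ) + 1) / k + N) + 2 * √(N:ℝ)) -
        √(k:ℝ) * (rcZ (1 + (k * N : ℕ)) + 2 * √((k * N : ℕ):ℝ))) Filter.atTop (nhds 0) := by
    have a1 : Filter.Tendsto (fun N : ℕ => ∑ n ∈ range k, (rcZ (((n:ℝ) + 1) / k + N) + 2 * √(N:ℝ))) Filter.atTop (nhds (∑ n ∈ range k, 0)) :=
      tendsto_finsetSum _ fun n _ => rcZ_nat_tail _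
    have a2 := ((rcZ_nat_tail 1).comp (Filter.tendsto_id.const_mul_atTop' hk)).const_mul √(k:ℝ)
    simpa [Function.comp_def] using a1.sub a2
  have t2 := t1.congr (fun N => (e N).symm)
  have := tendsto_nhds_unique t2 tendsto_const_nhds
  linarith

lemma rcF_tendsto {a : ℤ} {k : ℕ} (hk : 0 < k) (hcop : IsCoprime a (k:ℤ)) : Filter.Tendsto
    (fun N : ℕ => ∑ v ∈ range (k * N), 1 / √((v:ℝ) + 1) * rcH (a * (v + 1) / k) - 2 * √(N:ℝ) * rcZ 1)
    Filter.atTop (nhds (rcF a k)) := by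
  have hk' : (0:ℝ) < k := by exact_mod_cast hk
  have hs := Real.sqrt_pos.2 hk'
  have : NeZero k := ⟨hk.ne'⟩
  have hF : rcF a k = 1 / √(k:ℝ) * ∑ n ∈ range k, rcH (a * (n + 1) / k) * rcZ ((n + 1) / k) := by
    unfold rcF
    rw [← rc_sum_shift]
    · congr 1
      apply sum_congr rfl
      intro n hn
      have : (n:ℝ) + 1 ≤ k := by exact_mod_cast mem_range.1 hn
      push_cast
      rw [rcH_of_mem (y := ((n:ℝ) + 1) / k) (by positivity) (by rw [div_le_one hk']; exact this)]
    · have h1 := rcH_add_int 0 a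
      have h2 := rcH_add_int 0 1
      rw [zero_add] at h1 h2
      push_cast at h2
      simp only [Nat.cast_zero, mul_zero, zero_div]
      rw [mul_div_cancel_right₀ _ hk'.ne', div_self hk'.ne', h1, h2]
  have hsum : ∑ n ∈ range k, rcH (a * (n + 1) / k) = √(k:ℝ) * rcZ 1 := by
    rw [← rcZ_distrib hk]
    have s1 : ∑ n ∈ range k, rcH (a * (n + 1) / k) = ∑ j : ZMod k, rchz k (a * j) := by
      rw [← rc_sum_zmod]
      have := rc_sum_shift (fun n => rchz k (a * n)) k (by simp)
      rw [← this]
      apply sum_congr rfl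
      intro n _
      have h1 := rchz_int (k := k) (a * (n + 1))
      push_cast at h1 ⊢
      rw [h1]
    have s2 : ∑ n ∈ range k, rcZ (((n:ℝ) + 1) / k) = ∑ j : ZMod k, rchz k j := by
      rw [← rc_sum_zmod]
      have := rc_sum_shift (fun n => rchz k n) k (by simp)
      rw [← this]
      apply sum_congr rfl
      intro n hn
      have : (n:ℝ) + 1 ≤ k := by exact_mod_cast mem_range.1 hn
      have h1 := rchz_int (k := k) (n + 1)
      push_cast at h1 ⊢
      rw [h1, rcH_of_mem (y := ((n:ℝ) + 1) / k) (by positivity) (by rw [div_le_one hk']; exact this)]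
    obtain ⟨u, hu⟩ := rc_unit_of_coprime hcop
    rw [s1, s2, ← hu]
    exact rc_unit_sum (rchz k) u
  have e : ∀ N : ℕ, ∑ v ∈ range (k * N), 1 / √((v:ℝ) + 1) * rcH (a * (v + 1) / k) - 2 * √(N:ℝ) * rcZ 1 =
      rcF a k - 1 / √(k:ℝ) * ∑ n ∈ range k, rcH (a * (n + 1) / k) * (rcZ (((n:ℝ) + 1) / k + N) + 2 * √(N:ℝ)) := by
    intro N
    rw [rc_sum_blocks (fun v => 1 / √((v:ℝ) + 1) * rcH (a * (v + 1) / k)), hF]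
    have h1 : ∀ n ∈ range k, ∑ j ∈ range N, 1 / √(((k * j + n : ℕ):ℝ) + 1) * rcH (a * ((k * j + n : ℕ) + 1) / k) =
        1 / √(k:ℝ) * (rcH (a * (n + 1) / k) * (rcZ ((n + 1) / k) - rcZ (((n:ℝ) + 1) / k + N))) := by
      intro n _
      rw [rcZ_add_nat (x := ((n:ℝ) + 1) / k) (by positivity) N, add_sub_cancel_right, mul_sum, mul_sum]
      apply sum_congr rfl
      intro j _
      rw [rc_sqrt_block hk]
      have : (a:ℝ) * ((k * j + n : ℕ) + 1) / k = a * (n + 1) / k + (a * j : ℤ) := by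
        push_cast; field_simp; ring
      rw [this, rcH_add_int]; ring
    rw [sum_congr rfl h1, ← mul_sum]
    simp only [mul_sub, mul_add (rcH _), sum_sub_distrib, sum_add_distrib]
    rw [← sum_mul, hsum]
    field_simp
    ring
  simp only [e]
  have t1 : Filter.Tendsto (fun N : ℕ => ∑ n ∈ range k, rcH (a * (n + 1) / k) * (rcZ (((n:ℝ) + 1) / k + N) + 2 * √(N:ℝ)))
      Filter.atTop (nhds (∑ n ∈ range k, rcH (a * (n + 1) / k) * 0)) :=
    tendsto_finsetSum _ fun n _ => (rcZ_nat_tail _).const_mul _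
  simp only [mul_zero, sum_const_zero] at t1
  simpa using (t1.const_mul (1 / √(k:ℝ))).const_sub (rcF a k)

/-- The key reciprocity formula. -/
lemma rcF_recip {h k : ℕ} (hh : 0 < h) (hk : 0 < k) (hcop : Nat.Coprime h k) :
    rcF h k - rcF (-k) h = rcG (h / k) := by
  have hh' : (0:ℝ) < h := by exact_mod_cast hh
  have hk' : (0:ℝ) < k := by exact_mod_cast hk
  have c1 : IsCoprime (h:ℤ) (k:ℤ) := Nat.isCoprime_iff_coprime.2 hcop
  have c2 : IsCoprime (-(k:ℤ)) (h:ℤ) := (Nat.isCoprime_iff_coprime.2 hcop.symm).neg_left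
  have t1 := (rcF_tendsto hk c1).sub (rcF_tendsto hh c2)
  set x : ℝ := h / k with hx
  have hx0 : 0 < x := by positivity
  have hsx := Real.sqrt_pos.2 hx0
  refine tendsto_nhds_unique t1 ?_
  -- the explicit evaluation
  have e : ∀ N : ℕ, (∑ v ∈ range (k * N), 1 / √((v:ℝ) + 1) * rcH ((h:ℤ) * (v + 1) / k) - 2 * √(N:ℝ) * rcZ 1)
      - (∑ v ∈ range (h * N), 1 / √((v:ℝ) + 1) * rcH ((-(k:ℤ) : ℤ) * (v + 1) / h) - 2 * √(N:ℝ) * rcZ 1) =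
      ∑ v ∈ range (k * N), 1 / √((v:ℝ) + 1) * rcEE (x * (v + 1))
      - rcZ 1 * rcZ 1 + rcZ 1 * (rcZ (1 + (k * N : ℕ)) + 2 * √((k * N : ℕ):ℝ))
      - (∑ r ∈ range (h * N), 1 / √(((h * N : ℕ):ℝ) - r) * rcZ (1 + r / x) +
      (π * (h * N : ℕ) / √x + 2 * rcZ 1 * √((h * N : ℕ):ℝ) / √x)) := by
    intro N
    have hM : ((h * N : ℕ):ℝ) = x * (k * N : ℕ) := by rw [hx]; push_cast; field_simp
    set V := k * N with hV
    set M := h * N with hMd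
    have s1 : ∀ v ∈ range V, 1 / √((v:ℝ) + 1) * rcH ((h:ℤ) * (v + 1) / k) =
        1 / √((v:ℝ) + 1) * rcZ (x * (v + 1)) + ∑ m ∈ range M, 1 / √((v:ℝ) + 1) * (1 / √(x * (v + 1) - (m + 1))) := by
      intro v hv
      have : (v:ℝ) + 1 ≤ V := by exact_mod_cast mem_range.1 hv
      have e1 : ((h:ℤ):ℝ) * (v + 1) / k = x * (v + 1) := by rw [hx]; push_cast; ring
      rw [e1, rcH_eq (y := x * (v + 1)) (by positivity) (N := M) (by rw [hM]; nlinarith), mul_add, mul_sum]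
    have s2 : ∀ m ∈ range M, 1 / √((m:ℝ) + 1) * rcH ((-(k:ℤ) : ℤ) * (m + 1) / h) =
        1 / √((m:ℝ) + 1) * rcZ (1 + (M - (m + 1)) / x) + ∑ v ∈ range V, 1 / √((m:ℝ) + 1) * (√x * (1 / √(x * (v + 1) - (m + 1)))) := by
      intro m hm
      have h1 : (m:ℝ) + 1 ≤ M := by exact_mod_cast mem_range.1 hm
      have e1 : ((-(k:ℤ) : ℤ):ℝ) * (m + 1) / h = (1 + (M - (m + 1)) / x) + ((-(V + 1) : ℤ) : ℝ) := by
        rw [hM, hx]; push_cast; field_simp; ring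
      have h2 : 0 ≤ ((M:ℝ) - (m + 1)) / x := div_nonneg (by linarith) hx0.le
      have h3 : ((M:ℝ) - (m + 1)) / x ≤ V := by
        rw [div_le_iff₀ hx0, hM]; nlinarith [(Nat.cast_nonneg m : (0:ℝ) ≤ m)]
      rw [e1, rcH_add_int, rcH_eq (by linarith) (N := V) (by linarith), mul_add, mul_sum, ← sum_range_reflect]
      congr 1
      apply sum_congr rfl
      intro i hi
      have := mem_range.1 hi
      rw [Nat.sub_sub, Nat.cast_sub (by omega)]; push_cast
      congr 1
      have e2 : 1 + ((M:ℝ) - (m + 1)) / x - (V - (1 + i) + 1) = (x * (i + 1) - (m + 1)) / x := by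
        rw [hM]; field_simp; ring
      rw [e2, Real.sqrt_div' _ hx0.le, one_div_div]; ring
    rw [sum_congr rfl s1, sum_congr rfl s2, sum_add_distrib, sum_add_distrib]
    rw [sum_comm (s := range M)]
    have s3 : ∑ v ∈ range V, ∑ m ∈ range M, 1 / √((v:ℝ) + 1) * (1 / √(x * (v + 1) - (m + 1))) -
        ∑ v ∈ range V, ∑ m ∈ range M, 1 / √((m:ℝ) + 1) * (√x * (1 / √(x * (v + 1) - (m + 1)))) =
        ∑ v ∈ range V, 1 / √((v:ℝ) + 1) * rcg (x * (v + 1)) := by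
      rw [← sum_sub_distrib]
      apply sum_congr rfl
      intro v hv
      have h1 : (v:ℝ) + 1 ≤ V := by exact_mod_cast mem_range.1 hv
      rw [← sum_sub_distrib, rcg_eq (N := M) (by rw [hM]; nlinarith), mul_sum]
      apply sum_congr rfl
      intro m _
      have hv1 : 0 < √((v:ℝ) + 1) := Real.sqrt_pos.2 (by positivity)
      rcases le_or_gt (x * ((v:ℝ) + 1)) (m + 1) with hle | hlt
      · rw [rcs_zero hle, Real.sqrt_eq_zero_of_nonpos (x := x * ((v:ℝ) + 1) - (m + 1)) (by linarith)]; simp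
      · rw [rcs_eq2 (by positivity) hlt, Real.sqrt_mul hx0.le]
        field_simp
    have s4 : ∑ m ∈ range M, 1 / √((m:ℝ) + 1) * rcZ (1 + (M - (m + 1)) / x) =
        ∑ r ∈ range M, 1 / √((M:ℝ) - r) * rcZ (1 + r / x) := by
      rw [← sum_range_reflect]
      apply sum_congr rfl
      intro r hr
      have := mem_range.1 hr
      rw [Nat.sub_sub, Nat.cast_sub (by omega)]; push_cast
      rw [show (M:ℝ) - (1 + r) + 1 = M - r by ring, show (M:ℝ) - (M - r) = r by ring]
    have s5 : ∑ v ∈ range V, 1 / √((v:ℝ) + 1) * rcZ (x * (v + 1)) + ∑ v ∈ range V, 1 / √((v:ℝ) + 1) * rcg (x * (v + 1)) =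
        ∑ v ∈ range V, 1 / √((v:ℝ) + 1) * rcEE (x * (v + 1)) - π * √x * V - rcZ 1 * (rcZ 1 - rcZ (1 + V)) := by
      rw [← rc_inv_sum, mul_sum]
      have : π * √x * V = ∑ v ∈ range V, π * √x := by simp; ring
      rw [this, ← sum_add_distrib, ← sum_sub_distrib, ← sum_sub_distrib]
      apply sum_congr rfl
      intro v _
      have hv1 : 0 < √((v:ℝ) + 1) := Real.sqrt_pos.2 (by positivity)
      unfold rcEE
      rw [Real.sqrt_mul hx0.le]
      field_simp
      ring
    rw [s4]
    have s6 : π * (M:ℝ) / √x = π * √x * V := by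
      have : √x * √x = x := Real.mul_self_sqrt hx0.le
      rw [hM]; field_simp; linear_combination -(V:ℝ) * this
    have s7 : 2 * rcZ 1 * √(M:ℝ) / √x = 2 * rcZ 1 * √(V:ℝ) := by
      rw [hM, Real.sqrt_mul hx0.le]; field_simp
    rw [s6, s7]
    linarith
  refine Filter.Tendsto.congr (fun N => (e N).symm) ?_
  have u1 := ((rcD_summable hx0).hasSum.tendsto_sum_nat).comp (Filter.tendsto_id.const_mul_atTop' hk)
  have u2 := ((rcZ_nat_tail 1).comp (Filter.tendsto_id.const_mul_atTop' hk)).const_mul (rcZ 1)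
  have u3 := (rcS_tendsto hx0).comp (Filter.tendsto_id.const_mul_atTop' hh)
  have u4 := ((u1.sub_const (rcZ 1 * rcZ 1)).add u2).sub u3
  have : rcG x = ∑' v : ℕ, 1 / √((v:ℝ) + 1) * rcEE (x * (v + 1)) - rcZ 1 * rcZ 1 + rcZ 1 * 0 - -(π / 2 * √x) := by
    unfold rcG rcD; ring
  rw [this]
  simpa only [Function.comp_def, id] using u4


noncomputable def rcp (m y : ℝ) : ℝ := 1 / √y * (1 / √(m + y) - 1 / √m)
noncomputable def rcq (m y : ℝ) : ℝ := 1 / √y * rcs m y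

lemma rcp_eq {m y : ℝ} (hm : 0 < m) (hy : 0 < y) :
    rcp m y = -(1 / √m) * (1 / √(y + m)) + 2 * (1 / (√m * √(y + m) + √(y + m) * √(y + 0) + (y + m))) := by
  unfold rcp
  rw [add_comm m y, add_zero]
  have a2 : √m ^ 2 = m := Real.sq_sqrt hm.le
  have b2 : √y ^ 2 = y := Real.sq_sqrt hy.le
  have c2 : √(y + m) ^ 2 = y + m := Real.sq_sqrt (by linarith)
  have a0 := Real.sqrt_pos.2 hm
  have b0 := Real.sqrt_pos.2 hy
  have c0 : 0 < √(y + m) := Real.sqrt_pos.2 (by linarith)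
  rw [show √m * √(y + m) + √(y + m) * √y + (y + m) = √(y + m) * (√m + √y + √(y + m)) by linear_combination -c2]
  set a := √m
  set b := √y
  set c := √(y + m)
  have h : c ^ 2 = a ^ 2 + b ^ 2 := by linarith
  field_simp
  linear_combination -h

lemma rcq_eq {m y : ℝ} (hm : 0 < m) (hy : m ≤ y) :
    rcq m y = -(1 / √m) * (1 / √(y + 0)) + 2 * (1 / (√m * √(y + 0) + √(y + 0) * √(y + -m) + (y + 0))) := by
  unfold rcq
  rw [rcs_eq1 hm hy, add_zero, ← sub_eq_add_neg]
  have hy0 : 0 < y := by linarith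
  have b2 : √y ^ 2 = y := Real.sq_sqrt hy0.le
  have a0 := Real.sqrt_pos.2 hm
  have b0 := Real.sqrt_pos.2 hy0
  have c0 : 0 ≤ √(y - m) := Real.sqrt_nonneg _
  rw [show √m * √y + √y * √(y - m) + y = √y * (√m + √y + √(y - m)) by linear_combination -b2]
  field_simp

lemma rcp_abs {m y : ℝ} (hm : 0 < m) (hy : 0 ≤ y) : |rcp m y| ≤ √y * (1 / √m ^ 3) := by
  rcases hy.eq_or_lt with rfl | hy
  · simp [rcp]
  unfold rcp
  have := rc_inv_sqrt_sub (s := m) (t := m + y) hm (by linarith)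
  have b0 := Real.sqrt_pos.2 hy
  have b2 : √y ^ 2 = y := Real.sq_sqrt hy.le
  rw [abs_mul, abs_of_pos (by positivity), abs_sub_comm, abs_of_nonneg this.1]
  refine (mul_le_mul_of_nonneg_left this.2 (by positivity)).trans (le_of_eq ?_)
  rw [add_sub_cancel_left]
  have a0 := Real.sqrt_pos.2 hm
  field_simp; linarith

lemma rcq_abs {m y : ℝ} (hm : 0 < m) : |rcq m y| ≤ √(y - m) * (1 / √m ^ 3) / 2 := by
  rcases le_total y m with h | h
  · unfold rcq; rw [rcs_zero h]; simp; positivity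
  unfold rcq
  have := rcs_abs (y := y) hm
  have a0 := Real.sqrt_pos.2 hm
  have a2 : √m ^ 2 = m := Real.sq_sqrt hm.le
  have b0 : √m ≤ √y := Real.sqrt_le_sqrt h
  rw [abs_mul, abs_of_nonneg (by positivity)]
  calc 1 / √y * |rcs m y| ≤ 1 / √m * (√(y - m) / m / 2) := by gcongr
    _ = 1 / √m * (√(y - m) / √m ^ 2 / 2) := by rw [a2]
    _ = _ := by field_simp

lemma rcq_abs' {m y : ℝ} (hm : 0 < m) (hy : 0 ≤ y) : |rcq m y| ≤ √y * (1 / √m ^ 3) := by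
  refine (rcq_abs hm).trans ?_
  have h1 : √(y - m) ≤ √y := Real.sqrt_le_sqrt (by linarith)
  have h2 : 0 ≤ √y := Real.sqrt_nonneg _
  have h3 : 0 ≤ 1 / √m ^ 3 := by positivity
  nlinarith

lemma rc_anti_inv {S : Set ℝ} {f : ℝ → ℝ} (hf : MonotoneOn f S) (hp : ∀ y ∈ S, 0 < f y) :
    AntitoneOn (fun y => 1 / f y) S :=
  fun x hx y hy hxy => one_div_le_one_div_of_le (hp x hx) (hf hx hy hxy)

/-- generic bound -/
lemma rc_generic {f u1 u2 : ℝ → ℝ} {a h c : ℝ} (n : ℕ) (hh : 0 < h) (hc : 0 ≤ c)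
    (hf : ∀ y ∈ Set.Ici a, f y = -c * u1 y + 2 * u2 y)
    (x1 : ConvexOn ℝ (Set.Ici a) u1) (m1 : AntitoneOn u1 (Set.Ici a)) (c1 : ContinuousOn u1 (Set.Ici a))
    (x2 : ConvexOn ℝ (Set.Ici a) u2) (m2 : AntitoneOn u2 (Set.Ici a)) (c2 : ContinuousOn u2 (Set.Ici a)) :
    |∑ j ∈ range n, rcErr f (a + j * h) h| ≤ h * (|f a| + |f (a + h)| + 2 * c * (u1 a - u1 (a + h))) := by
  have e : ∀ j ∈ range n, rcErr f (a + j * h) h = -c * rcErr u1 (a + j * h) h + 2 * rcErr u2 (a + j * h) h := by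
    intro j _
    have hj : (0:ℝ) ≤ j * h := by positivity
    have hs : Set.Icc (a + j * h) (a + j * h + h) ⊆ Set.Ici a := fun y hy => by
      have := hy.1; simp only [Set.mem_Ici]; linarith
    rw [← rcErr_const_mul, ← rcErr_const_mul, ← rcErr_add (f := fun t => -c * u1 t) (g := fun t => 2 * u2 t) hh (continuousOn_const.mul (c1.mono hs)) (continuousOn_const.mul (c2.mono hs))]
    unfold rcErr
    rw [hf _ (hs ⟨le_rfl, by linarith⟩), hf _ (hs ⟨by linarith, le_rfl⟩)]
    congr 1
    apply intervalIntegral.integral_congr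
    intro y hy
    rw [Set.uIcc_of_le (by linarith)] at hy
    exact hf y (hs hy)
  rw [sum_congr rfl e, sum_add_distrib, ← mul_sum, ← mul_sum]
  have b1 := rcErr_sum_anti n hh x1 m1 c1
  have b2 := rcErr_sum_anti n hh x2 m2 c2
  have f1 := hf a (by simp)
  have f2 := hf (a + h) (by simp [hh.le])
  have g1 := neg_abs_le (f a); have g1' := le_abs_self (f a)
  have g2 := neg_abs_le (f (a + h)); have g2' := le_abs_self (f (a + h))
  have d : 0 ≤ u1 a - u1 (a + h) := sub_nonneg.2 (m1 (by simp) (by simp [hh.le]) (by linarith))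
  have d2 : 0 ≤ u2 a - u2 (a + h) := sub_nonneg.2 (m2 (by simp) (by simp [hh.le]) (by linarith))
  have p1 := mul_le_mul_of_nonneg_left b1.2 hc
  have p1' := mul_nonneg hc b1.1
  have k : 2 * (u2 a - u2 (a + h)) ≤ |f a| + |f (a + h)| + c * (u1 a - u1 (a + h)) := by
    rw [mul_sub] at *; nlinarith
  have k2 := mul_le_mul_of_nonneg_left k hh.le
  have d3 : 0 ≤ c * (u1 a - u1 (a + h)) := mul_nonneg hc d
  have d4 : 0 ≤ h * (c * (u1 a - u1 (a + h))) := mul_nonneg hh.le d3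
  have d5 : 0 ≤ h * (|f a| + |f (a + h)|) := by positivity
  rw [abs_le]
  constructor <;> nlinarith

lemma rc_sqrt_two (x : ℝ) : √(x + x) ≤ 2 * √x := by
  rw [show 2 * √x = √(2 ^ 2 * x) by rw [Real.sqrt_mul (by norm_num), Real.sqrt_sq (by norm_num)]]
  rcases le_total 0 x with h | h
  · exact Real.sqrt_le_sqrt (by linarith)
  · rw [Real.sqrt_eq_zero_of_nonpos (by linarith)]; positivity

lemma rc_le_sqrt {x : ℝ} (h0 : 0 ≤ x) (h1 : x ≤ 1) : x ≤ √x := by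
  apply Real.le_sqrt_of_sq_le; nlinarith

lemma rcp_err {m x : ℝ} (hm : 1 ≤ m) (hx : 0 < x) (hx1 : x ≤ 1) (n : ℕ) :
    |∑ j ∈ range n, rcErr (rcp m) (x + j * x) x| ≤ 5 * (x * √x) * (1 / √m ^ 3) := by
  have hm0 : 0 < m := by linarith
  have pos : ∀ y ∈ Set.Ici x, 0 < y := fun y hy => lt_of_lt_of_le hx hy
  have cv := convex_Ici x (𝕜 := ℝ)
  have cs : ConcaveOn ℝ (Set.Ici x) (fun y => √(y + m)) :=
    rc_concave_sqrt cv m fun y hy => by linarith [pos y hy]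
  have cg : ConcaveOn ℝ (Set.Ici x) (fun y => √(y + m) * √(y + 0)) :=
    rc_concave_gm cv m 0 (fun y hy => by linarith [pos y hy]) (fun y hy => by linarith [pos y hy])
  have ca : ConcaveOn ℝ (Set.Ici x) (fun y => y + m) := (concaveOn_id cv).add (concaveOn_const m cv)
  have ct : ConcaveOn ℝ (Set.Ici x) (fun y => √m * √(y + m) + √(y + m) * √(y + 0) + (y + m)) :=
    ((cs.smul (Real.sqrt_nonneg m)).add cg).add ca
  have p1 : ∀ y ∈ Set.Ici x, 0 < √(y + m) := fun y hy => Real.sqrt_pos.2 (by linarith [pos y hy])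
  have p2 : ∀ y ∈ Set.Ici x, 0 < √m * √(y + m) + √(y + m) * √(y + 0) + (y + m) := fun y hy => by
    have := pos y hy; positivity
  have mo1 : MonotoneOn (fun y => √(y + m)) (Set.Ici x) := fun a _ b _ hab => Real.sqrt_le_sqrt (by linarith)
  have mo2 : MonotoneOn (fun y => √m * √(y + m) + √(y + m) * √(y + 0) + (y + m)) (Set.Ici x) := by
    intro a _ b _ hab
    simp only
    gcongr
  have := rc_generic (f := rcp m) (a := x) (h := x) (c := 1 / √m) n hx (by positivity)
    (fun y hy => rcp_eq hm0 (pos y hy))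
    (rc_convex_inv cs p1) (rc_anti_inv mo1 p1)
    (ContinuousOn.div continuousOn_const (by fun_prop) fun y hy => (p1 y hy).ne')
    (rc_convex_inv ct p2) (rc_anti_inv mo2 p2)
    (ContinuousOn.div continuousOn_const (by fun_prop) fun y hy => (p2 y hy).ne')
  refine this.trans ?_
  have f1 := rcp_abs hm0 hx.le
  have f2 := rcp_abs hm0 (y := x + x) (by linarith)
  have g := (rc_inv_sqrt_sub (s := x + m) (t := x + x + m) (by linarith) (by linarith))
  have h1 := rc_sqrt_two x
  have h2 := rc_le_sqrt hx.le hx1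
  have m1 : 1 ≤ √m := Real.one_le_sqrt.2 hm
  have c1 : 1 / √m ≤ 1 := by rw [div_le_one (by linarith)]; exact m1
  have g2 : (x + x + m - (x + m)) / √(x + m) ^ 3 ≤ √x * (1 / √m ^ 3) := by
    rw [show x + x + m - (x + m) = x by ring, div_eq_mul_one_div]
    have : √m ≤ √(x + m) := Real.sqrt_le_sqrt (by linarith)
    gcongr
  set T := 1 / √m ^ 3
  have hT : 0 ≤ T := by positivity
  have k1 : √(x + x) * T ≤ 2 * √x * T := by gcongr
  have k2 : 1 / √m * (1 / √(x + m) - 1 / √(x + x + m)) ≤ 1 * (√x * T) :=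
    mul_le_mul c1 (g.2.trans g2) g.1 zero_le_one
  calc _ ≤ x * (√x * T + 2 * √x * T + 2 * (√x * T)) := by
        apply mul_le_mul_of_nonneg_left _ hx.le
        rw [mul_assoc 2 (1 / √m)]; linarith
    _ = _ := by ring

lemma rcq_err {m x : ℝ} (hm : 1 ≤ m) (hx : 0 < x) (hx1 : x ≤ 1) (n : ℕ) :
    |∑ j ∈ range n, rcErr (rcq m) (x + j * x) x| ≤ 6 * (x * √x) * (1 / √m ^ 3) := by
  have hm0 : 0 < m := by linarith
  obtain ⟨J, hJ⟩ : ∃ J : ℕ, ⌊m / x⌋₊ = J + 1 :=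
    ⟨⌊m / x⌋₊ - 1, by
      have : 0 < ⌊m / x⌋₊ := Nat.floor_pos.2 (by rw [le_div_iff₀ hx]; linarith)
      omega⟩
  have hJ1 : x * (J + 1) ≤ m := by
    have := Nat.floor_le (show 0 ≤ m / x by positivity)
    rw [hJ, le_div_iff₀ hx] at this; push_cast at this; linarith
  have hJ2 : m < x * (J + 2) := by
    have := Nat.lt_floor_add_one (m / x)
    rw [hJ, div_lt_iff₀ hx] at this; push_cast at this; linarith
  set T := 1 / √m ^ 3 with hTd
  have hT : 0 ≤ T := by positivity
  have h1 := rc_sqrt_two x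
  have h2 := rc_le_sqrt hx.le hx1
  -- early cells
  have z : ∀ j < J, rcErr (rcq m) (x + j * x) x = 0 := by
    intro j hj
    have hj' : (j:ℝ) + 1 ≤ J := by exact_mod_cast hj
    have : |rcErr (rcq m) (x + j * x) x| ≤ 2 * x * 0 := by
      apply rcErr_abs_le hx
      intro t ht
      have : t ≤ m := by nlinarith [ht.2]
      unfold rcq; rw [rcs_zero this]; simp
    simpa using this
  have st : |rcErr (rcq m) (x + J * x) x| ≤ x * √x * T := by
    have : |rcErr (rcq m) (x + J * x) x| ≤ 2 * x * (√x * T / 2) := by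
      apply rcErr_abs_le hx
      intro t ht
      refine (rcq_abs hm0).trans ?_
      have : √(t - m) ≤ √x := Real.sqrt_le_sqrt (by nlinarith [ht.2])
      gcongr
    refine this.trans (le_of_eq (by ring))
  have small : ∀ k ≤ J + 1, |∑ j ∈ range k, rcErr (rcq m) (x + j * x) x| ≤ x * √x * T := by
    intro k hk
    rcases Nat.lt_or_ge J k with h | h
    · have : k = J + 1 := by omega
      rw [this, sum_range_succ, sum_eq_zero (fun j hj => z j (mem_range.1 hj)), zero_add]
      exact st
    · rw [sum_eq_zero (fun j hj => z j (lt_of_lt_of_le (mem_range.1 hj) h))]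
      simp; positivity
  have xT : 0 ≤ x * √x * T := by positivity
  rcases le_total n (J + 1) with h | h
  · exact (small n h).trans (by linarith)
  obtain ⟨i, rfl⟩ := Nat.exists_eq_add_of_le h
  rw [sum_range_add]
  set a := x * (J + 2) with ha
  have e : ∑ j ∈ range i, rcErr (rcq m) (x + (J + 1 + j : ℕ) * x) x = ∑ j ∈ range i, rcErr (rcq m) (a + j * x) x := by
    apply sum_congr rfl; intro j _; rw [ha]; push_cast; congr 1; ring
  rw [e]
  have am : ∀ y ∈ Set.Ici a, m ≤ y := fun y hy => hJ2.le.trans hy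
  have pos : ∀ y ∈ Set.Ici a, 0 < y := fun y hy => lt_of_lt_of_le hm0 (am y hy)
  have cv := convex_Ici a (𝕜 := ℝ)
  have cs : ConcaveOn ℝ (Set.Ici a) (fun y => √(y + 0)) :=
    rc_concave_sqrt cv 0 fun y hy => by linarith [pos y hy]
  have cg : ConcaveOn ℝ (Set.Ici a) (fun y => √(y + 0) * √(y + -m)) :=
    rc_concave_gm cv 0 (-m) (fun y hy => by linarith [pos y hy]) (fun y hy => by linarith [am y hy])
  have ca : ConcaveOn ℝ (Set.Ici a) (fun y => y + 0) := (concaveOn_id cv).add (concaveOn_const 0 cv)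
  have ct : ConcaveOn ℝ (Set.Ici a) (fun y => √m * √(y + 0) + √(y + 0) * √(y + -m) + (y + 0)) :=
    ((cs.smul (Real.sqrt_nonneg m)).add cg).add ca
  have p1 : ∀ y ∈ Set.Ici a, 0 < √(y + 0) := fun y hy => Real.sqrt_pos.2 (by linarith [pos y hy])
  have p2 : ∀ y ∈ Set.Ici a, 0 < √m * √(y + 0) + √(y + 0) * √(y + -m) + (y + 0) := fun y hy => by
    have := pos y hy; positivity
  have mo1 : MonotoneOn (fun y => √(y + 0)) (Set.Ici a) := fun a _ b _ hab => Real.sqrt_le_sqrt (by linarith)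
  have mo2 : MonotoneOn (fun y => √m * √(y + 0) + √(y + 0) * √(y + -m) + (y + 0)) (Set.Ici a) := by
    intro a _ b _ hab
    simp only
    gcongr
  have := rc_generic (f := rcq m) (a := a) (h := x) (c := 1 / √m) i hx (by positivity)
    (fun y hy => rcq_eq hm0 (am y hy))
    (rc_convex_inv cs p1) (rc_anti_inv mo1 p1)
    (ContinuousOn.div continuousOn_const (by fun_prop) fun y hy => (p1 y hy).ne')
    (rc_convex_inv ct p2) (rc_anti_inv mo2 p2)
    (ContinuousOn.div continuousOn_const (by fun_prop) fun y hy => (p2 y hy).ne')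
  rw [add_zero, add_zero] at this
  have ax : a - m ≤ x := by rw [ha]; linarith
  have aT : |rcq m a| ≤ √x * T := by
    refine (rcq_abs hm0).trans ?_
    have : √(a - m) ≤ √x := Real.sqrt_le_sqrt ax
    have : √(a - m) * T ≤ √x * T := by gcongr
    have : 0 ≤ √x * T := by positivity
    linarith
  have bT : |rcq m (a + x)| ≤ √x * T := by
    refine (rcq_abs hm0).trans ?_
    have : √(a + x - m) ≤ √(x + x) := Real.sqrt_le_sqrt (by linarith)
    have : √(a + x - m) * T ≤ (2 * √x) * T := by gcongr; linarith
    linarith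
  have g := (rc_inv_sqrt_sub (s := a) (t := a + x) (by linarith) (by linarith))
  have m1 : 1 ≤ √m := Real.one_le_sqrt.2 hm
  have c1 : 1 / √m ≤ 1 := by rw [div_le_one (by linarith)]; exact m1
  have g2 : (a + x - a) / √a ^ 3 ≤ √x * T := by
    rw [show a + x - a = x by ring, div_eq_mul_one_div]
    have : √m ≤ √a := Real.sqrt_le_sqrt (by linarith)
    rw [hTd]
    gcongr
  have k2 : 1 / √m * (1 / √a - 1 / √(a + x)) ≤ 1 * (√x * T) :=
    mul_le_mul c1 (g.2.trans g2) g.1 zero_le_one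
  have k3 : |∑ j ∈ range i, rcErr (rcq m) (a + j * x) x| ≤ x * (√x * T + √x * T + 2 * (√x * T)) := by
    refine this.trans ?_
    apply mul_le_mul_of_nonneg_left _ hx.le
    rw [mul_assoc 2 (1 / √m)]; linarith
  refine (abs_add_le _ _).trans ?_
  have k4 := small (J + 1) le_rfl
  linarith


lemma rc_hasSum_congr {f g : ℕ → ℝ} {a : ℝ} (h : ∀ m, f m = g m) (hf : HasSum f a) : HasSum g a := by
  rwa [← funext h]

noncomputable def rcT (y : ℝ) : ℝ := 1 / √y * (rcZ (1 + y) - rcZ 1 + rcg y)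

lemma rcT_hasSum {y : ℝ} (hy : 0 ≤ y) :
    HasSum (fun m : ℕ => rcp ((m:ℝ) + 1) y + rcq ((m:ℝ) + 1) y) (rcT y) := by
  unfold rcT rcp rcq
  have h1 := (rcZ_hasSum (s := 1) (t := 1 + y) one_pos (by linarith)).neg
  have h2 : HasSum (fun m : ℕ => rcs ((m:ℝ) + 1) y) (rcg y) := by
    have : HasSum (fun m : ℕ => rcs ((m:ℝ) + 1) y) (∑ m ∈ range ⌊y⌋₊, rcs ((m:ℝ) + 1) y) := hasSum_sum_of_ne_finset_zero (by
      intro m hm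
      rw [mem_range, not_lt] at hm
      apply rcs_zero
      have h := Nat.lt_floor_add_one y
      have : (⌊y⌋₊ : ℝ) ≤ m := by exact_mod_cast hm
      linarith)
    exact this
  have h3 := (h1.add h2).mul_left (1 / √y)
  rw [neg_sub] at h3
  refine rc_hasSum_congr (fun m => ?_) h3
  rw [add_comm (m:ℝ) 1, show 1 + (m:ℝ) + y = 1 + y + m by ring]
  ring

lemma rcT_abs {y : ℝ} (hy : 0 ≤ y) : |rcT y| ≤ 2 * rcK * √y := by
  have h := tsum_of_norm_bounded (f := fun m : ℕ => rcp ((m:ℝ) + 1) y + rcq ((m:ℝ) + 1) y)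
    (rc_summable32.hasSum.mul_left (2 * √y)) (fun m => by
      have a := rcp_abs (m := (m:ℝ) + 1) (by positivity) hy
      have b := rcq_abs' (m := (m:ℝ) + 1) (by positivity) hy
      rw [Real.norm_eq_abs]
      refine (abs_add_le _ _).trans (by linarith))
  rw [(rcT_hasSum hy).tsum_eq, Real.norm_eq_abs] at h
  refine h.trans (le_of_eq ?_)
  unfold rcK; ring

lemma rcT_cont_pos : ContinuousOn rcT (Set.Ioi 0) := by
  unfold rcT
  refine ContinuousOn.mul (ContinuousOn.div continuousOn_const (by fun_prop) fun y hy => (Real.sqrt_pos.2 hy).ne') ?_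
  refine ContinuousOn.add (ContinuousOn.sub ?_ continuousOn_const) rcg_cont.continuousOn
  exact rcZ_cont.comp (by fun_prop) fun y hy => by simp only [Set.mem_Ioi] at *; linarith

lemma rcT_cont : ContinuousOn rcT (Set.Ici 0) := by
  intro y hy
  rcases (show (0:ℝ) ≤ y from hy).eq_or_lt with rfl | h
  · have h0 : rcT 0 = 0 := by simp [rcT]
    rw [ContinuousWithinAt, h0]
    refine squeeze_zero_norm' (a := fun y => 2 * rcK * √y) ?_ ?_
    · filter_upwards [self_mem_nhdsWithin] with z hz using rcT_abs hz
    · have : Continuous (fun y => 2 * rcK * √y) := by fun_prop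
      have := this.tendsto 0
      simp only [Real.sqrt_zero, mul_zero] at this
      exact this.mono_left nhdsWithin_le_nhds
  · exact (rcT_cont_pos.continuousAt (Ioi_mem_nhds h)).continuousWithinAt

lemma rcp_cont {m : ℝ} (hm : 0 < m) : ContinuousOn (rcp m) (Set.Ioi 0) := by
  unfold rcp
  refine ContinuousOn.mul (ContinuousOn.div continuousOn_const (by fun_prop) fun y hy => (Real.sqrt_pos.2 hy).ne') ?_
  refine ContinuousOn.sub (ContinuousOn.div continuousOn_const (by fun_prop) fun y hy => (Real.sqrt_pos.2 ?_).ne') continuousOn_const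
  have : 0 < y := hy
  linarith

lemma rcq_cont {m : ℝ} (hm : 0 < m) : ContinuousOn (rcq m) (Set.Ioi 0) := by
  unfold rcq
  exact ContinuousOn.mul (ContinuousOn.div continuousOn_const (by fun_prop) fun y hy => (Real.sqrt_pos.2 hy).ne') (rcs_cont hm).continuousOn

lemma rcT_err_hasSum {u h : ℝ} (hu : 0 < u) (hh : 0 < h) :
    HasSum (fun m : ℕ => rcErr (rcp ((m:ℝ) + 1)) u h + rcErr (rcq ((m:ℝ) + 1)) u h) (rcErr rcT u h) := by
  have hs : Set.Icc u (u + h) ⊆ Set.Ioi 0 := fun y hy => lt_of_lt_of_le hu hy.1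
  have e : ∀ m : ℕ, rcErr (rcp ((m:ℝ) + 1)) u h + rcErr (rcq ((m:ℝ) + 1)) u h =
      rcErr (fun y => rcp ((m:ℝ) + 1) y + rcq ((m:ℝ) + 1) y) u h := fun m =>
    (rcErr_add hh ((rcp_cont (by positivity)).mono hs) ((rcq_cont (by positivity)).mono hs)).symm
  simp_rw [e]
  unfold rcErr
  refine HasSum.sub ?_ ?_
  · have := ((rcT_hasSum hu.le).add (rcT_hasSum (y := u + h) (by linarith))).mul_left (h / 2)
    rw [show h * (rcT u + rcT (u + h)) / 2 = h / 2 * (rcT u + rcT (u + h)) by ring]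
    refine rc_hasSum_congr (fun m => ?_) this
    ring
  · have hsub : ∀ t ∈ Set.uIoc u (u + h), t ∈ Set.Icc u (u + h) := fun t ht => by
      rw [Set.uIoc_of_le (by linarith)] at ht; exact ⟨ht.1.le, ht.2⟩
    refine intervalIntegral.hasSum_integral_of_dominated_convergence
      (fun m t => 2 * √(u + h) * (1 / √((m:ℝ) + 1) ^ 3)) ?_ ?_ ?_ ?_ ?_
    · intro m
      have c : ContinuousOn (fun y => rcp ((m:ℝ) + 1) y + rcq ((m:ℝ) + 1) y) (Set.Icc u (u + h)) :=
        ((rcp_cont (by positivity)).mono hs).add ((rcq_cont (by positivity)).mono hs)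
      have := (ContinuousOn.intervalIntegrable_of_Icc (by linarith) c (μ := MeasureTheory.volume))
      exact (intervalIntegrable_iff.1 this).aestronglyMeasurable
    · intro m
      refine Filter.Eventually.of_forall fun t ht => ?_
      have ht := hsub t ht
      have t0 : 0 ≤ t := by linarith [ht.1]
      have a := rcp_abs (m := (m:ℝ) + 1) (by positivity) t0
      have b := rcq_abs' (m := (m:ℝ) + 1) (by positivity) t0
      have c : √t * (1 / √((m:ℝ) + 1) ^ 3) ≤ √(u + h) * (1 / √((m:ℝ) + 1) ^ 3) := by
        have := Real.sqrt_le_sqrt ht.2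
        gcongr
      rw [Real.norm_eq_abs]
      refine (abs_add_le _ _).trans (by linarith)
    · exact Filter.Eventually.of_forall fun t _ => rc_summable32.mul_left _
    · simp
    · exact Filter.Eventually.of_forall fun t ht => rcT_hasSum (by linarith [(hsub t ht).1])

lemma rcT_err {x : ℝ} (hx : 0 < x) (hx1 : x ≤ 1) (n : ℕ) :
    |∑ j ∈ range n, rcErr rcT (x + j * x) x| ≤ 11 * rcK * (x * √x) := by
  have h := hasSum_sum (s := range n) (fun j _ => rcT_err_hasSum (u := x + j * x) (h := x) (by positivity) hx)
  have h2 := tsum_of_norm_bounded (f := fun m : ℕ => ∑ j ∈ range n, (rcErr (rcp ((m:ℝ) + 1)) (x + j * x) x + rcErr (rcq ((m:ℝ) + 1)) (x + j * x) x))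
    (rc_summable32.hasSum.mul_left (11 * (x * √x))) (fun m => by
      have a := rcp_err (m := (m:ℝ) + 1) (by simp) hx hx1 n
      have b := rcq_err (m := (m:ℝ) + 1) (by simp) hx hx1 n
      rw [Real.norm_eq_abs, sum_add_distrib]
      refine (abs_add_le _ _).trans (by linarith))
  rw [h.tsum_eq, Real.norm_eq_abs] at h2
  refine h2.trans (le_of_eq ?_)
  unfold rcK; ring

lemma rc_err_inv {x : ℝ} (hx : 0 < x) : Filter.Tendsto (fun n : ℕ => ∑ j ∈ range n, rcErr (fun y => 1 / y) (x + j * x) x)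
    Filter.atTop (nhds (Real.eulerMascheroniConstant - 1 / 2)) := by
  have e : ∀ n : ℕ, ∑ j ∈ range n, rcErr (fun y => 1 / y) (x + j * x) x =
      ((harmonic n : ℝ) - Real.log (n + 1)) + (1 / ((n:ℝ) + 1) - 1) / 2 := by
    intro n
    have hn : x ≤ x + n * x := by nlinarith [(Nat.cast_nonneg n : (0:ℝ) ≤ n)]
    have hc : ContinuousOn (fun y : ℝ => 1 / y) (Set.Icc x (x + n * x)) :=
      ContinuousOn.div continuousOn_const continuousOn_id fun y hy => by
        have := hy.1; linarith
    rw [rcErr_sum_eq n hx hc, integral_one_div_of_pos hx (by linarith)]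
    have h1 : (x + n * x) / x = n + 1 := by field_simp; ring
    rw [h1]
    have h2 : ∑ j ∈ range n, 1 / (x + j * x) = (harmonic n : ℝ) / x := by
      unfold harmonic
      push_cast
      rw [sum_div]
      refine sum_congr rfl fun j _ => ?_
      have : (0:ℝ) < j + 1 := by positivity
      field_simp; ring
    rw [h2]
    have : (0:ℝ) < n + 1 := by positivity
    have h3 : x + n * x = x * (n + 1) := by ring
    rw [h3]
    field_simp
    ring
  simp_rw [e]
  have h1 := Real.tendsto_harmonic_sub_log_add_one
  have h2 := ((tendsto_one_div_add_atTop_nhds_zero_nat (𝕜 := ℝ)).sub_const 1).div_const 2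
  have := h1.add h2
  convert this using 2
  ring

lemma rc_err_sqrt {x : ℝ} (hx : 0 < x) : Filter.Tendsto (fun n : ℕ => ∑ j ∈ range n, rcErr (fun y => 1 / √y) (x + j * x) x)
    Filter.atTop (nhds (√x * (rcZ 1 + 3 / 2))) := by
  have e : ∀ n : ℕ, ∑ j ∈ range n, rcErr (fun y => 1 / √y) (x + j * x) x =
      √x * (rcZ 1 - (rcZ (1 + n) + 2 * √(1 + n)) + 3 / 2 + 1 / √(1 + (n:ℝ)) / 2) := by
    intro n
    have hn : x ≤ x + n * x := by nlinarith [(Nat.cast_nonneg n : (0:ℝ) ≤ n)]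
    have hc : ContinuousOn (fun y : ℝ => 1 / √y) (Set.Icc x (x + n * x)) :=
      ContinuousOn.div continuousOn_const (by fun_prop) fun y hy => by
        have := hy.1; exact (Real.sqrt_pos.2 (by linarith)).ne'
    rw [rcErr_sum_eq n hx hc]
    have hI : ∫ t in x..(x + n * x), 1 / √t = 2 * √(x + n * x) - 2 * √x := by
      refine intervalIntegral.integral_eq_sub_of_hasDerivAt (f := fun t => 2 * √t) ?_ ?_
      · intro t ht
        rw [Set.uIcc_of_le hn] at ht
        have t0 : 0 < t := by linarith [ht.1]
        have := (Real.hasDerivAt_sqrt t0.ne').const_mul 2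
        have s0 : 0 < √t := Real.sqrt_pos.2 t0
        exact this.congr_deriv (by field_simp)
      · exact ContinuousOn.intervalIntegrable_of_Icc hn hc
    have h2 : ∑ j ∈ range n, 1 / √(x + j * x) = (rcZ 1 - rcZ (1 + n)) / √x := by
      rw [← rc_inv_sum, sum_div]
      refine sum_congr rfl fun j _ => ?_
      rw [show x + j * x = x * (j + 1) by ring, Real.sqrt_mul hx.le]
      have : 0 < √((j:ℝ) + 1) := Real.sqrt_pos.2 (by positivity)
      field_simp
    rw [hI, h2, show x + n * x = x * (1 + n) by ring, Real.sqrt_mul hx.le]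
    have s1 : 0 < √(1 + (n:ℝ)) := Real.sqrt_pos.2 (by positivity)
    have s2 := Real.sqrt_pos.2 hx
    have s3 : √x ^ 2 = x := Real.sq_sqrt hx.le
    generalize √(1 + (n:ℝ)) = s at *
    rw [← s3]
    rw [Real.sqrt_sq s2.le]
    generalize √x = r at *
    field_simp
    ring
  simp_rw [e]
  have t1 : Filter.Tendsto (fun n : ℕ => 1 + (n:ℝ)) Filter.atTop Filter.atTop :=
    Filter.tendsto_atTop_add_const_left _ _ tendsto_natCast_atTop_atTop
  have h1 : Filter.Tendsto (fun n : ℕ => rcZ (1 + n) + 2 * √(1 + n)) Filter.atTop (nhds 0) := rcZ_tail.comp t1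
  have h2 : Filter.Tendsto (fun n : ℕ => 1 / √(1 + (n:ℝ))) Filter.atTop (nhds 0) := rc_tendsto_inv_sqrt.comp t1
  have := (((h1.const_sub (rcZ 1)).add_const (3 / 2)).add (h2.div_const 2)).const_mul (√x)
  rw [sub_zero, zero_div, add_zero] at this
  exact this


noncomputable def rcTh (y : ℝ) : ℝ := 1 / √y * rcEE y

lemma rcTh_eq {y : ℝ} (hy : 0 < y) :
    rcTh y = (1 / y + 2 * rcZ 1 * (1 / √y)) + (π * 1 + rcT y) := by
  unfold rcTh rcEE rcT
  rw [rcZ_succ hy, add_comm 1 y]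
  have s0 := Real.sqrt_pos.2 hy
  have s2 : √y ^ 2 = y := Real.sq_sqrt hy.le
  generalize rcZ (y + 1) = a
  generalize rcg y = g
  rw [show 1 / y = 1 / √y ^ 2 by rw [s2]]
  field_simp
  ring

lemma rcTh_cont : ContinuousOn rcTh (Set.Ioi 0) := by
  unfold rcTh
  exact ContinuousOn.mul (ContinuousOn.div continuousOn_const (by fun_prop) fun y hy => (Real.sqrt_pos.2 hy).ne') rcEE_cont

lemma rcTh_int : MeasureTheory.IntegrableOn rcTh (Set.Ioi 1) := by
  have h := (integrableOn_Ioi_rpow_of_lt (a := -(3/2)) (c := 1) (by norm_num) one_pos).const_mul rcCE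
  refine MeasureTheory.Integrable.mono' h ?_ ?_
  · exact (rcTh_cont.mono (Set.Ioi_subset_Ioi zero_le_one)).aestronglyMeasurable measurableSet_Ioi
  · rw [MeasureTheory.ae_restrict_iff' measurableSet_Ioi]
    refine Filter.Eventually.of_forall fun y hy => ?_
    have y0 : (0:ℝ) < y := lt_trans one_pos hy
    unfold rcTh
    have s0 := Real.sqrt_pos.2 y0
    rw [Real.norm_eq_abs, abs_mul, abs_of_pos (by positivity)]
    refine (mul_le_mul_of_nonneg_left (rcEE_bound y0) (by positivity)).trans (le_of_eq ?_)
    rw [Real.rpow_neg y0.le, show (3/2:ℝ) = 1 + 1/2 by norm_num, Real.rpow_add y0, Real.rpow_one, ← Real.sqrt_eq_rpow]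
    field_simp

lemma rc_err_const {x c : ℝ} (u : ℝ) : rcErr (fun _ => c) u x = 0 := by
  unfold rcErr; simp; ring

lemma rcTh_err {x : ℝ} (hx : 0 < x) (n : ℕ) :
    ∑ j ∈ range n, rcErr rcTh (x + j * x) x =
      ∑ j ∈ range n, rcErr (fun y => 1 / y) (x + j * x) x
      + 2 * rcZ 1 * ∑ j ∈ range n, rcErr (fun y => 1 / √y) (x + j * x) x
      + ∑ j ∈ range n, rcErr rcT (x + j * x) x := by
  rw [mul_sum, ← sum_add_distrib, ← sum_add_distrib]
  refine sum_congr rfl fun j _ => ?_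
  have hu : 0 < x + j * x := by positivity
  set u := x + j * x
  have hs : Set.Icc u (u + x) ⊆ Set.Ioi 0 := fun y hy => lt_of_lt_of_le hu hy.1
  have c1 : ContinuousOn (fun y : ℝ => 1 / y) (Set.Icc u (u + x)) :=
    ContinuousOn.div continuousOn_const continuousOn_id fun y hy => (hs hy).ne'
  have c2 : ContinuousOn (fun y : ℝ => 1 / √y) (Set.Icc u (u + x)) :=
    ContinuousOn.div continuousOn_const (by fun_prop) fun y hy => (Real.sqrt_pos.2 (hs hy)).ne'
  have c3 := rcT_cont_pos.mono hs
  have e : rcErr rcTh u x = rcErr (fun y => (1 / y + 2 * rcZ 1 * (1 / √y)) + (π * 1 + rcT y)) u x := by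
    unfold rcErr
    rw [rcTh_eq hu, rcTh_eq (show 0 < u + x by linarith)]
    congr 1
    apply intervalIntegral.integral_congr
    intro y hy
    rw [Set.uIcc_of_le (by linarith)] at hy
    exact rcTh_eq (hs hy)
  rw [e, rcErr_add (f := fun y => 1 / y + 2 * rcZ 1 * (1 / √y)) (g := fun y => π * 1 + rcT y) hx
    (c1.add (continuousOn_const.mul c2)) (continuousOn_const.add c3),
    rcErr_add (f := fun y => 1 / y) (g := fun y => 2 * rcZ 1 * (1 / √y)) hx c1 (continuousOn_const.mul c2),
    rcErr_add (f := fun _ => π * 1) (g := rcT) hx continuousOn_const c3, rc_err_const, rcErr_const_mul]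
  ring

lemma rc_int_inv_sqrt {x : ℝ} (hx : 0 < x) (hx1 : x ≤ 1) : ∫ t in x..1, 1 / √t = 2 - 2 * √x := by
  have hc : ContinuousOn (fun y : ℝ => 1 / √y) (Set.Icc x 1) :=
      ContinuousOn.div continuousOn_const (by fun_prop) fun y hy => by
        have := hy.1; exact (Real.sqrt_pos.2 (by linarith)).ne'
  have := intervalIntegral.integral_eq_sub_of_hasDerivAt (f := fun t => 2 * √t) (f' := fun t => 1 / √t) (a := x) (b := 1) ?_ ?_
  · rw [this]; simp
  · intro t ht
    rw [Set.uIcc_of_le hx1] at ht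
    have t0 : 0 < t := by linarith [ht.1]
    have := (Real.hasDerivAt_sqrt t0.ne').const_mul 2
    have s0 : 0 < √t := Real.sqrt_pos.2 t0
    exact this.congr_deriv (by field_simp)
  · exact ContinuousOn.intervalIntegrable_of_Icc hx1 hc

lemma rcTh_int01 {x : ℝ} (hx : 0 < x) (hx1 : x ≤ 1) :
    ∫ t in x..1, rcTh t = -Real.log x + 2 * rcZ 1 * (2 - 2 * √x) + π * (1 - x) +
      ((∫ t in (0:ℝ)..1, rcT t) - ∫ t in (0:ℝ)..x, rcT t) := by
  have hs : Set.Icc x 1 ⊆ Set.Ioi 0 := fun y hy => lt_of_lt_of_le hx hy.1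
  have c1 : ContinuousOn (fun y : ℝ => 1 / y) (Set.Icc x 1) :=
    ContinuousOn.div continuousOn_const continuousOn_id fun y hy => (hs hy).ne'
  have c2 : ContinuousOn (fun y : ℝ => 1 / √y) (Set.Icc x 1) :=
    ContinuousOn.div continuousOn_const (by fun_prop) fun y hy => (Real.sqrt_pos.2 (hs hy)).ne'
  have c3 := rcT_cont_pos.mono hs
  have i1 := ContinuousOn.intervalIntegrable_of_Icc hx1 c1 (μ := MeasureTheory.volume)
  have i2 := (ContinuousOn.intervalIntegrable_of_Icc hx1 c2 (μ := MeasureTheory.volume)).const_mul (2 * rcZ 1)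
  have i3 := ContinuousOn.intervalIntegrable_of_Icc hx1 c3 (μ := MeasureTheory.volume)
  have i4 : IntervalIntegrable (fun _ : ℝ => π * 1) MeasureTheory.volume x 1 := by simp
  have i0 : IntervalIntegrable rcT MeasureTheory.volume 0 x :=
    ContinuousOn.intervalIntegrable_of_Icc hx.le (rcT_cont.mono fun y hy => hy.1)
  have e : ∫ t in x..1, rcTh t = ∫ t in x..1, ((1 / t + 2 * rcZ 1 * (1 / √t)) + (π * 1 + rcT t)) := by
    apply intervalIntegral.integral_congr
    intro y hy
    rw [Set.uIcc_of_le hx1] at hy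
    exact rcTh_eq (hs hy)
  rw [e, intervalIntegral.integral_add (i1.add i2) (i4.add i3), intervalIntegral.integral_add i1 i2,
    intervalIntegral.integral_add i4 i3, integral_one_div_of_pos hx one_pos, intervalIntegral.integral_const_mul,
    rc_int_inv_sqrt hx hx1, ← intervalIntegral.integral_add_adjacent_intervals i0 i3]
  simp [Real.log_inv]
  ring

lemma rcT_int0 {x : ℝ} (hx : 0 < x) : |∫ t in (0:ℝ)..x, rcT t| ≤ 2 * rcK * (x * √x) := by
  have h := intervalIntegral.norm_integral_le_of_norm_le_const (a := 0) (b := x) (f := rcT) (C := 2 * rcK * √x) (by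
    intro t ht
    rw [Set.uIoc_of_le hx.le] at ht
    have := rcK_ge
    refine (rcT_abs ht.1.le).trans ?_
    have := Real.sqrt_le_sqrt ht.2
    gcongr)
  rw [Real.norm_eq_abs, sub_zero, abs_of_pos hx] at h
  linarith

noncomputable def rcC0 : ℝ := 4 * rcZ 1 + π + (∫ t in (0:ℝ)..1, rcT t) + ∫ t in Set.Ioi 1, rcTh t

lemma rcTh_sum_tendsto {x : ℝ} (hx : 0 < x) :
    Filter.Tendsto (fun n : ℕ => x * ∑ j ∈ range n, rcTh (x + j * x)) Filter.atTop (nhds (√x * rcD x)) := by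
  have h := ((rcD_summable hx).hasSum.tendsto_sum_nat).const_mul (√x)
  refine h.congr fun n => ?_
  rw [mul_sum, mul_sum]
  refine sum_congr rfl fun j _ => ?_
  unfold rcTh
  rw [show x + j * x = x * (j + 1) by ring, Real.sqrt_mul hx.le]
  have s0 := Real.sqrt_pos.2 hx
  have s1 : 0 < √((j:ℝ) + 1) := Real.sqrt_pos.2 (by positivity)
  have s2 : √x ^ 2 = x := Real.sq_sqrt hx.le
  generalize rcEE (x * (j + 1)) = E
  field_simp
  rw [s2, mul_comm]

lemma rcTh_tendsto_zero : Filter.Tendsto rcTh Filter.atTop (nhds 0) := by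
  have h : Filter.Tendsto (fun y : ℝ => rcCE * (1 / √y)) Filter.atTop (nhds 0) := by
    simpa using rc_tendsto_inv_sqrt.const_mul rcCE
  refine squeeze_zero_norm' ?_ h
  filter_upwards [Filter.eventually_ge_atTop 1] with y hy
  have y0 : (0:ℝ) < y := by linarith
  have s0 := Real.sqrt_pos.2 y0
  have := rcCE_pos
  unfold rcTh
  rw [Real.norm_eq_abs, abs_mul, abs_of_pos (by positivity), mul_comm]
  refine mul_le_mul_of_nonneg_right ((rcEE_bound y0).trans ?_) (by positivity)
  exact div_le_self this.le hy

/-- main small-x expansion -/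
lemma rcD_small {x : ℝ} (hx : 0 < x) (hx1 : x ≤ 1) :
    |√x * rcD x - (Real.eulerMascheroniConstant - Real.log x + rcC0 + 2 * rcZ 1 ^ 2 * √x - π * x / 2)|
      ≤ 14 * rcK * (x * √x) := by
  have tx : Filter.Tendsto (fun n : ℕ => x + (n:ℝ) * x) Filter.atTop Filter.atTop :=
    Filter.tendsto_atTop_add_const_left _ _ (tendsto_natCast_atTop_atTop.atTop_mul_const hx)
  have t1 := rcTh_sum_tendsto hx
  have t2 : Filter.Tendsto (fun n : ℕ => rcTh (x + n * x)) Filter.atTop (nhds 0) := rcTh_tendsto_zero.comp tx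
  have t3 : Filter.Tendsto (fun n : ℕ => ∫ t in (1:ℝ)..(x + n * x), rcTh t) Filter.atTop
    (nhds (∫ t in Set.Ioi 1, rcTh t)) := MeasureTheory.intervalIntegral_tendsto_integral_Ioi 1 rcTh_int tx
  have t4 := rc_err_inv hx
  have t5 := rc_err_sqrt hx
  have e : ∀ n : ℕ, ∑ j ∈ range n, rcErr rcT (x + j * x) x =
      (x * ∑ j ∈ range n, rcTh (x + j * x)) + x * ((rcTh (x + n * x) - rcTh x) / 2) -
        ((∫ t in x..1, rcTh t) + ∫ t in (1:ℝ)..(x + n * x), rcTh t)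
      - ∑ j ∈ range n, rcErr (fun y => 1 / y) (x + j * x) x
      - 2 * rcZ 1 * ∑ j ∈ range n, rcErr (fun y => 1 / √y) (x + j * x) x := by
    intro n
    have h1 := rcTh_err hx n
    have hn : x ≤ x + n * x := by nlinarith [(Nat.cast_nonneg n : (0:ℝ) ≤ n)]
    have hsub : ∀ a b : ℝ, 0 < a → 0 < b → IntervalIntegrable rcTh MeasureTheory.volume a b := by
      intro a b ha hb
      refine ContinuousOn.intervalIntegrable (rcTh_cont.mono ?_)
      intro y hy
      exact lt_of_lt_of_le (lt_min ha hb) hy.1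
    rw [rcErr_sum_eq n hx (rcTh_cont.mono fun y hy => lt_of_lt_of_le hx hy.1),
      ← intervalIntegral.integral_add_adjacent_intervals (hsub x 1 hx one_pos) (hsub 1 (x + n * x) one_pos (by linarith))] at h1
    linarith
  have lim := (((t1.add (((t2.sub_const (rcTh x)).div_const 2).const_mul x)).sub (t3.const_add (∫ t in x..1, rcTh t))).sub t4).sub (t5.const_mul (2 * rcZ 1))
  have lim2 := (lim.congr fun n => (e n).symm).abs
  have fin := le_of_tendsto lim2 (Filter.Eventually.of_forall fun n => rcT_err hx hx1 n)
  rw [rcTh_int01 hx hx1, rcTh_eq hx] at fin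
  have b1 := rcT_int0 hx
  have b2 := rcT_abs hx.le
  have b3 : |x * rcT x / 2| ≤ rcK * (x * √x) := by
    rw [abs_div, abs_mul, abs_of_pos hx, abs_two]
    have := mul_le_mul_of_nonneg_left b2 hx.le
    linarith
  have s0 := Real.sqrt_pos.2 hx
  have s2 : √x ^ 2 = x := Real.sq_sqrt hx.le
  have q1 : x * (1 / x) = 1 := by field_simp
  have q2 : x * (1 / √x) = √x := by field_simp; linarith
  have eq : √x * rcD x - (Real.eulerMascheroniConstant - Real.log x + rcC0 + 2 * rcZ 1 ^ 2 * √x - π * x / 2) =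
     (√x * rcD x + x * ((0 - (1 / x + 2 * rcZ 1 * (1 / √x) + (π * 1 + rcT x))) / 2) -
            (-Real.log x + 2 * rcZ 1 * (2 - 2 * √x) + π * (1 - x) +
                ((∫ t in (0:ℝ)..1, rcT t) - ∫ t in (0:ℝ)..x, rcT t) +
              ∫ (t : ℝ) in Set.Ioi 1, rcTh t) -
          (eulerMascheroniConstant - 1 / 2) -
        2 * rcZ 1 * (√x * (rcZ 1 + 3 / 2))) + (x * rcT x / 2 - ∫ t in (0:ℝ)..x, rcT t) := by
    unfold rcC0
    linear_combination (1/2) * q1 + rcZ 1 * q2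
  rw [eq]
  refine (abs_add_le _ _).trans ?_
  have := abs_sub (x * rcT x / 2) (∫ t in (0:ℝ)..x, rcT t)
  linarith

lemma rcG_small {x : ℝ} (hx : 0 < x) (hx1 : x ≤ 1) :
    |rcG x - 1 / √x * (Real.eulerMascheroniConstant - Real.log x + rcC0) - rcZ 1 ^ 2| ≤ 14 * rcK * x := by
  have h := rcD_small hx hx1
  have s0 := Real.sqrt_pos.2 hx
  have s2 : √x ^ 2 = x := Real.sq_sqrt hx.le
  have e : rcG x - 1 / √x * (Real.eulerMascheroniConstant - Real.log x + rcC0) - rcZ 1 ^ 2 =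
    1 / √x * (√x * rcD x - (Real.eulerMascheroniConstant - Real.log x + rcC0 + 2 * rcZ 1 ^ 2 * √x - π * x / 2)) := by
    unfold rcG
    field_simp
    linear_combination π * s2
  rw [e, abs_mul, abs_of_pos (by positivity)]
  refine (mul_le_mul_of_nonneg_left h (by positivity)).trans (le_of_eq ?_)
  field_simp


noncomputable def rcR (M : ℕ) (t : ℝ) : ℝ := ∑ j ∈ range M, 1 / √(t + ((j:ℝ) + 1))
noncomputable def rcSn (M : ℕ) (t : ℝ) : ℝ := rcR M t - 2 * √((M:ℝ) + 1)
noncomputable def rcW (t : ℝ) : ℝ := rcZ (1 + t) ^ 2 + 2 * rcZ (1 + t) * (1 / √t)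
noncomputable def rcWn (M : ℕ) (t : ℝ) : ℝ := rcSn M t ^ 2 + 2 * rcSn M t * (1 / √t)

lemma rcSn_approx (M : ℕ) {t : ℝ} (h0 : 0 ≤ t) (h1 : t ≤ 1) :
    |rcSn M t - rcZ (1 + t)| ≤ 3 * (1 / √((M:ℝ) + 1)) := by
  have hM : (0:ℝ) ≤ M := Nat.cast_nonneg M
  have e : rcZ (1 + t) = rcR M t + rcZ (1 + t + M) := by
    rw [rcZ_add_nat (by linarith) M]
    unfold rcR
    congr 1
    exact sum_congr rfl fun j _ => by rw [show 1 + t + (j:ℝ) = t + (j + 1) by ring]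
  have b := rcZ_bound (x := 1 + t + M) (by linarith)
  have s := rc_sqrt_sub (s := (M:ℝ) + 1) (t := 1 + t + M) (by linarith) (by linarith)
  have p0 : 1 ≤ √((M:ℝ) + 1) := Real.one_le_sqrt.2 (by linarith)
  have p1 : √((M:ℝ) + 1) ≤ √(1 + t + M) := Real.sqrt_le_sqrt (by linarith)
  have k1 : 1 / √(1 + t + M) ^ 3 ≤ 1 / √((M:ℝ) + 1) := by
    apply one_div_le_one_div_of_le (by linarith)
    refine p1.trans ?_
    exact le_self_pow₀ (by linarith) (by norm_num)
  have k2 : 1 / (2 * √(1 + t + M)) ≤ 1 / √((M:ℝ) + 1) := by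
    apply one_div_le_one_div_of_le (by linarith)
    linarith
  have k3 : (1 + t + M - ((M:ℝ) + 1)) / √((M:ℝ) + 1) ≤ 1 / √((M:ℝ) + 1) := by
    gcongr; linarith
  have k4 : 0 ≤ 1 / (2 * √(1 + t + M)) := by positivity
  have k5 : 0 ≤ 1 / √((M:ℝ) + 1) := by positivity
  unfold rcSn
  rw [e, abs_le]
  constructor <;> linarith

lemma rc_intble_inv_sqrt : IntervalIntegrable (fun t : ℝ => 1 / √t) MeasureTheory.volume 0 1 := by
  have := intervalIntegral.intervalIntegrable_rpow' (a := 0) (b := 1) (r := -(1/2)) (by norm_num)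
  refine this.congr ?_
  intro t ht
  rw [Set.uIoc_of_le zero_le_one] at ht
  simp only
  rw [Real.rpow_neg ht.1.le, ← Real.sqrt_eq_rpow, one_div]

lemma rcSn_cont (M : ℕ) : ContinuousOn (rcSn M) (Set.Ici 0) := by
  unfold rcSn rcR
  refine ContinuousOn.sub (continuousOn_finsetSum _ fun j _ => ?_) continuousOn_const
  refine ContinuousOn.div continuousOn_const (by fun_prop) fun t ht => (Real.sqrt_pos.2 ?_).ne'
  have : (0:ℝ) ≤ t := ht
  positivity

lemma rc_intble_sq {f : ℝ → ℝ} (hf : ContinuousOn f (Set.Ici 0)) :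
    IntervalIntegrable (fun t => f t ^ 2 + 2 * f t * (1 / √t)) MeasureTheory.volume 0 1 := by
  have hf' : ContinuousOn f (Set.uIcc 0 1) := hf.mono (by rw [Set.uIcc_of_le zero_le_one]; exact fun y hy => hy.1)
  refine IntervalIntegrable.add ?_ ?_
  · exact (hf'.pow 2).intervalIntegrable
  · exact rc_intble_inv_sqrt.continuousOn_mul (continuousOn_const.mul hf')

lemma rcZ1_cont : ContinuousOn (fun t => rcZ (1 + t)) (Set.Ici 0) :=
  rcZ_cont.comp (by fun_prop) fun y hy => by
    have : (0:ℝ) ≤ y := hy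
    simp only [Set.mem_Ioi]; linarith

lemma rcWn_tendsto : Filter.Tendsto (fun M : ℕ => ∫ t in (0:ℝ)..1, rcWn M t) Filter.atTop
    (nhds (∫ t in (0:ℝ)..1, rcW t)) := by
  have hK := rcK_ge
  set B := |rcZ 1| + rcK + 3 with hB
  have hB0 : 0 ≤ B := by have := abs_nonneg (rcZ 1); linarith
  have hd : Filter.Tendsto (fun M : ℕ => 3 * (1 / √((M:ℝ) + 1))) Filter.atTop (nhds 0) := by
    have := (rc_tendsto_inv_sqrt.comp (Filter.tendsto_atTop_add_const_right Filter.atTop (1:ℝ) tendsto_natCast_atTop_atTop)).const_mul 3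
    simpa using this
  refine intervalIntegral.tendsto_integral_filter_of_dominated_convergence
    (fun t => B ^ 2 + 2 * B * (1 / √t)) ?_ ?_ ?_ ?_
  · refine Filter.Eventually.of_forall fun M => ?_
    exact (intervalIntegrable_iff.1 (rc_intble_sq (rcSn_cont M))).aestronglyMeasurable
  · refine Filter.Eventually.of_forall fun M => Filter.Eventually.of_forall fun t ht => ?_
    rw [Set.uIoc_of_le zero_le_one] at ht
    have h1 := rcSn_approx M ht.1.le ht.2
    have h2 := rcZ_lip (s := 1) (t := 1 + t) le_rfl (by linarith [ht.1])
    have h3 : 1 / √((M:ℝ) + 1) ≤ 1 := by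
      rw [div_le_one (by positivity)]
      exact Real.one_le_sqrt.2 (by linarith [(Nat.cast_nonneg M : (0:ℝ) ≤ M)])
    have h4 : |rcSn M t| ≤ B := by
      rw [abs_le] at h1 ⊢
      have a := neg_abs_le (rcZ 1); have a' := le_abs_self (rcZ 1)
      have : rcK * (1 + t - 1) ≤ rcK := by nlinarith [ht.2]
      constructor <;> linarith
    unfold rcWn
    rw [Real.norm_eq_abs]
    refine (abs_add_le _ _).trans ?_
    rw [abs_pow, abs_mul, abs_mul, abs_two, abs_of_nonneg (show 0 ≤ 1 / √t by positivity)]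
    gcongr
  · exact rc_intble_sq continuousOn_const
  · refine Filter.Eventually.of_forall fun t ht => ?_
    rw [Set.uIoc_of_le zero_le_one] at ht
    have h : Filter.Tendsto (fun M : ℕ => rcSn M t) Filter.atTop (nhds (rcZ (1 + t))) := by
      rw [tendsto_iff_dist_tendsto_zero]
      refine squeeze_zero (fun _ => dist_nonneg) (fun M => ?_) hd
      rw [Real.dist_eq]; exact rcSn_approx M ht.1.le ht.2
    unfold rcWn rcW
    exact (h.pow 2).add ((h.const_mul 2).mul_const _)

noncomputable def rcLL (t i j : ℝ) : ℝ := 2 * Real.log (√(t + i) + √(t + j))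

lemma rcLL_deriv {t i j : ℝ} (hi : 0 < t + i) (hj : 0 < t + j) :
    HasDerivAt (fun t => rcLL t i j) (1 / √(t + i) * (1 / √(t + j))) t := by
  unfold rcLL
  have d1 : HasDerivAt (fun t => √(t + i)) (1 / (2 * √(t + i))) t :=
    ((hasDerivAt_id t).add_const i).sqrt hi.ne'
  have d2 : HasDerivAt (fun t => √(t + j)) (1 / (2 * √(t + j))) t :=
    ((hasDerivAt_id t).add_const j).sqrt hj.ne'
  have a := Real.sqrt_pos.2 hi
  have b := Real.sqrt_pos.2 hj
  have := ((d1.add d2).log (by simp only [Pi.add_apply]; positivity)).const_mul 2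
  refine this.congr_deriv ?_
  simp only [Pi.add_apply]
  field_simp
  ring

lemma rcLL_cont {i j : ℝ} (hi : 0 ≤ i) (hj : 0 < j) : ContinuousOn (fun t => rcLL t i j) (Set.Ici 0) := by
  unfold rcLL
  refine continuousOn_const.mul (ContinuousOn.log (by fun_prop) fun t ht => ?_)
  have : (0:ℝ) ≤ t := ht
  positivity

noncomputable def rcPhi (M : ℕ) (t : ℝ) : ℝ :=
  ∑ i ∈ range M, ∑ j ∈ range M, rcLL t ((i:ℝ) + 1) ((j:ℝ) + 1)
  + 2 * ∑ j ∈ range M, rcLL t 0 ((j:ℝ) + 1)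
  - 8 * √((M:ℝ) + 1) * (∑ j ∈ range M, √(t + ((j:ℝ) + 1)) + √t) + 4 * ((M:ℝ) + 1) * t

lemma rcPhi_cont (M : ℕ) : ContinuousOn (rcPhi M) (Set.Ici 0) := by
  unfold rcPhi
  refine ContinuousOn.add (ContinuousOn.sub (ContinuousOn.add ?_ ?_) (by fun_prop)) (by fun_prop)
  · exact continuousOn_finsetSum _ fun i _ => continuousOn_finsetSum _ fun j _ => rcLL_cont (by positivity) (by positivity)
  · exact continuousOn_const.mul (continuousOn_finsetSum _ fun j _ => rcLL_cont le_rfl (by positivity))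

lemma rcPhi_deriv (M : ℕ) {t : ℝ} (ht : 0 < t) : HasDerivAt (rcPhi M) (rcWn M t) t := by
  have d1 : HasDerivAt (fun t => ∑ i ∈ range M, ∑ j ∈ range M, rcLL t ((i:ℝ) + 1) ((j:ℝ) + 1))
      (∑ i ∈ range M, ∑ j ∈ range M, 1 / √(t + ((i:ℝ) + 1)) * (1 / √(t + ((j:ℝ) + 1)))) t :=
    HasDerivAt.fun_sum fun i _ => HasDerivAt.fun_sum fun j _ => rcLL_deriv (by positivity) (by positivity)
  have d2 : HasDerivAt (fun t => ∑ j ∈ range M, rcLL t 0 ((j:ℝ) + 1))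
      (∑ j ∈ range M, 1 / √(t + 0) * (1 / √(t + ((j:ℝ) + 1)))) t :=
    HasDerivAt.fun_sum fun j _ => rcLL_deriv (by linarith) (by positivity)
  have d3 : HasDerivAt (fun t => ∑ j ∈ range M, √(t + ((j:ℝ) + 1)))
      (∑ j ∈ range M, 1 / (2 * √(t + ((j:ℝ) + 1)))) t :=
    HasDerivAt.fun_sum fun j _ => ((hasDerivAt_id t).add_const _).sqrt (by simp only [id]; positivity)
  have d4 := Real.hasDerivAt_sqrt ht.ne'
  have d5 := (hasDerivAt_id t).const_mul (4 * ((M:ℝ) + 1))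
  have := ((d1.add (d2.const_mul 2)).sub ((d3.add d4).const_mul (8 * √((M:ℝ) + 1)))).add d5
  refine this.congr_deriv ?_
  unfold rcWn rcSn
  have e1 : ∑ i ∈ range M, ∑ j ∈ range M, 1 / √(t + ((i:ℝ) + 1)) * (1 / √(t + ((j:ℝ) + 1))) = rcR M t ^ 2 := by
    rw [sq, rcR, sum_mul_sum]
  have e2 : ∑ j ∈ range M, 1 / √(t + 0) * (1 / √(t + ((j:ℝ) + 1))) = 1 / √t * rcR M t := by
    rw [rcR, mul_sum, add_zero]
  have e3 : ∑ j ∈ range M, 1 / (2 * √(t + ((j:ℝ) + 1))) = rcR M t / 2 := by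
    rw [rcR, sum_div]
    exact sum_congr rfl fun j _ => by rw [mul_comm, div_div]
  rw [e1, e2, e3]
  have s : √((M:ℝ) + 1) ^ 2 = M + 1 := Real.sq_sqrt (by positivity)
  have s0 := Real.sqrt_pos.2 ht
  rw [show 1 / (2 * √t) = 1 / √t / 2 by rw [mul_comm, div_div]]
  linear_combination (-4) * s

lemma rcWn_int (M : ℕ) : ∫ t in (0:ℝ)..1, rcWn M t = rcPhi M 1 - rcPhi M 0 :=
  intervalIntegral.integral_eq_sub_of_hasDerivAt_of_le zero_le_one
    ((rcPhi_cont M).mono fun y hy => hy.1) (fun t ht => rcPhi_deriv M ht.1) (rc_intble_sq (rcSn_cont M))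


noncomputable def rclam (i j : ℕ) : ℝ := 2 * Real.log (√((i:ℝ) + 1) + √((j:ℝ) + 1))

lemma rclam_comm (i j : ℕ) : rclam i j = rclam j i := by unfold rclam; rw [add_comm]

noncomputable def rcf (t : ℝ) : ℝ := Real.log (1 + √t)

lemma rclam_eq (j M : ℕ) : rclam j M = Real.log ((M:ℝ) + 1) + 2 * rcf (((j:ℝ) + 1) / ((M:ℝ) + 1)) := by
  unfold rclam rcf
  have hM : (0:ℝ) < M + 1 := by positivity
  have hj : (0:ℝ) < j + 1 := by positivity
  have s0 := Real.sqrt_pos.2 hM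
  have s1 := Real.sqrt_pos.2 hj
  have e : √((j:ℝ) + 1) + √((M:ℝ) + 1) = √((M:ℝ) + 1) * (1 + √(((j:ℝ) + 1) / ((M:ℝ) + 1))) := by
    rw [Real.sqrt_div hj.le]; field_simp; ring
  rw [e, Real.log_mul s0.ne' (by positivity), Real.log_sqrt hM.le]
  ring

lemma rcPhi_diff (M : ℕ) : rcPhi M 1 - rcPhi M 0 =
    2 * ∑ j ∈ range M, rclam j M + rclam M M - rclam 0 0 - 2 * Real.log (M.factorial) - 4 * ((M:ℝ) + 1) := by
  have a1 : ∀ i j : ℕ, rcLL 1 ((i:ℝ) + 1) ((j:ℝ) + 1) = rclam (i + 1) (j + 1) := by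
    intro i j; unfold rcLL rclam; push_cast; rw [add_comm (1:ℝ), add_comm (1:ℝ)]
  have a2 : ∀ i j : ℕ, rcLL 0 ((i:ℝ) + 1) ((j:ℝ) + 1) = rclam i j := by
    intro i j; unfold rcLL rclam; rw [zero_add, zero_add]
  have a3 : ∀ j : ℕ, rcLL 1 0 ((j:ℝ) + 1) = rclam 0 (j + 1) := by
    intro j; unfold rcLL rclam; push_cast; rw [add_comm (1:ℝ) ((j:ℝ) + 1), add_zero, zero_add]
  have a4 : ∀ j : ℕ, rcLL 0 0 ((j:ℝ) + 1) = Real.log ((j:ℝ) + 1) := by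
    intro j; unfold rcLL; rw [zero_add, Real.sqrt_zero, zero_add, zero_add, Real.log_sqrt (by positivity)]; ring
  have t1 : ∑ i ∈ range (M + 1), ∑ j ∈ range (M + 1), rclam i j =
      ∑ i ∈ range M, ∑ j ∈ range M, rclam i j + 2 * ∑ j ∈ range M, rclam j M + rclam M M := by
    simp_rw [sum_range_succ]
    rw [sum_add_distrib]
    simp_rw [rclam_comm M]
    ring
  have t2 : ∑ i ∈ range (M + 1), ∑ j ∈ range (M + 1), rclam i j =
      ∑ i ∈ range M, ∑ j ∈ range M, rclam (i + 1) (j + 1) + 2 * ∑ j ∈ range M, rclam 0 (j + 1) + rclam 0 0 := by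
    simp_rw [sum_range_succ']
    rw [sum_add_distrib]
    simp_rw [fun i => rclam_comm (i + 1) 0]
    ring
  have t3 : ∑ j ∈ range M, √(1 + ((j:ℝ) + 1)) + 1 = ∑ j ∈ range M, √(0 + ((j:ℝ) + 1)) + √((M:ℝ) + 1) := by
    simp_rw [zero_add]
    rw [← sum_range_succ (fun j : ℕ => √((j:ℝ) + 1)), sum_range_succ']
    push_cast
    rw [zero_add, Real.sqrt_one]
    congr 1
    exact sum_congr rfl fun j _ => by rw [add_comm (1:ℝ)]
  have t4 : ∑ j ∈ range M, Real.log ((j:ℝ) + 1) = Real.log (M.factorial) := by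
    induction M with
    | zero => simp
    | succ M ih =>
      rw [sum_range_succ, Nat.factorial_succ]
      push_cast
      rw [Real.log_mul (by positivity) (by positivity)]
      have : ∑ j ∈ range M, Real.log ((j:ℝ) + 1) = Real.log (M.factorial) := by
        clear t1 t2 t3 ih
        induction M with
        | zero => simp
        | succ M ih =>
          rw [sum_range_succ, Nat.factorial_succ]
          push_cast
          rw [Real.log_mul (by positivity) (by positivity), ih]; ring
      rw [this]; ring
  have s : √((M:ℝ) + 1) ^ 2 = M + 1 := Real.sq_sqrt (by positivity)
  unfold rcPhi
  simp_rw [a1, a2, a3, a4]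
  rw [t4, Real.sqrt_one, Real.sqrt_zero, t3]
  rw [t1] at t2
  linear_combination (-1) * t2 - 8 * s

lemma rcf_concave : ConcaveOn ℝ (Set.Ici 0) rcf := by
  have h1 : ConcaveOn ℝ (Set.Ici (0:ℝ)) (fun y => √(y + 0)) :=
    rc_concave_sqrt (convex_Ici 0) 0 fun y hy => by simpa using hy
  refine ⟨convex_Ici 0, ?_⟩
  intro x hx y hy a b ha hb hab
  have h2 := h1.2 hx hy ha hb hab
  have h3 := strictConcaveOn_log_Ioi.concaveOn.2 (x := 1 + √x) (y := 1 + √y)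
    (by simp only [Set.mem_Ioi]; positivity) (by simp only [Set.mem_Ioi]; positivity) ha hb hab
  simp only [smul_eq_mul, add_zero] at *
  refine h3.trans ?_
  unfold rcf
  apply Real.log_le_log
  · have : 0 ≤ a * √x := by positivity
    have : 0 ≤ b * √y := by positivity
    nlinarith
  · nlinarith

lemma rcf_cont : Continuous rcf := by
  unfold rcf
  exact Continuous.log (by fun_prop) fun t => by positivity

lemma rcf_mono : Monotone rcf := fun x y h => by
  unfold rcf
  exact Real.log_le_log (by positivity) (by have := Real.sqrt_le_sqrt h; linarith)

lemma rcf_int : ∫ t in (0:ℝ)..1, rcf t = 1 / 2 := by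
  have := intervalIntegral.integral_eq_sub_of_hasDerivAt_of_le (f := fun t => t * rcf t - t / 2 + √t - rcf t) (f' := rcf) (a := 0) (b := 1) zero_le_one ?_ ?_ (rcf_cont.intervalIntegrable _ _)
  · rw [this]; simp [rcf]; norm_num; ring
  · have := rcf_cont
    exact Continuous.continuousOn (by fun_prop)
  · intro t ht
    have t0 : 0 < t := ht.1
    have s0 := Real.sqrt_pos.2 t0
    have s2 : √t ^ 2 = t := Real.sq_sqrt t0.le
    have d1 := Real.hasDerivAt_sqrt t0.ne'
    have d2 : HasDerivAt rcf (1 / (2 * √t) / (1 + √t)) t := (d1.const_add 1).log (by positivity)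
    have := ((((hasDerivAt_id t).mul d2).sub ((hasDerivAt_id t).div_const 2)).add d1).sub d2
    refine this.congr_deriv ?_
    simp only [id]
    generalize rcf t = F
    rw [← s2]
    rw [Real.sqrt_sq s0.le]
    generalize √t = r at *
    field_simp
    ring

lemma rcf_sum (M : ℕ) : |∑ j ∈ range M, rcf (((j:ℝ) + 1) / ((M:ℝ) + 1)) - (((M:ℝ) + 1) / 2 - Real.log 2 / 2)|
    ≤ rcf (1 / ((M:ℝ) + 1)) := by
  have hN : (0:ℝ) < (M:ℝ) + 1 := by positivity
  set h := 1 / ((M:ℝ) + 1) with hh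
  have h0 : 0 < h := by positivity
  have hb := rcErr_sum_anti (f := fun t => -rcf t) (a := 0) (h := h) (M + 1) h0 rcf_concave.neg
    (fun x _ y _ hxy => neg_le_neg (rcf_mono hxy)) rcf_cont.neg.continuousOn
  rw [rcErr_sum_eq (f := fun t => -rcf t) (M + 1) h0 rcf_cont.neg.continuousOn] at hb
  have e1 : (0:ℝ) + (M + 1 : ℕ) * h = 1 := by rw [hh]; push_cast; field_simp; ring
  have f0 : rcf 0 = 0 := by simp [rcf]
  have f1 : rcf 1 = Real.log 2 := by simp [rcf]; norm_num
  rw [e1, intervalIntegral.integral_neg, rcf_int, sum_range_succ'] at hb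
  have e2 : ∑ j ∈ range M, -rcf (0 + (j + 1 : ℕ) * h) = - ∑ j ∈ range M, rcf (((j:ℝ) + 1) / ((M:ℝ) + 1)) := by
    rw [sum_neg_distrib]
    congr 1
    refine sum_congr rfl fun j _ => ?_
    rw [hh]; push_cast; rw [zero_add, mul_one_div]
  rw [e2] at hb
  simp only [Nat.cast_zero, zero_mul, add_zero, zero_add, f0, f1, neg_zero, sub_zero] at hb
  set S := ∑ j ∈ range M, rcf (((j:ℝ) + 1) / ((M:ℝ) + 1))
  obtain ⟨b1, b2⟩ := hb
  have hm : h * ((M:ℝ) + 1) = 1 := by rw [hh]; field_simp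
  have c1 := mul_nonneg hN.le b1
  have c2 := mul_le_mul_of_nonneg_left b2 hN.le
  have k1 : ((M:ℝ) + 1) * (h * (-S + (-Real.log 2) / 2) - -(1 / 2)) = -S - Real.log 2 / 2 + ((M:ℝ) + 1) / 2 := by
    linear_combination (-S - Real.log 2 / 2) * hm
  have k2 : ((M:ℝ) + 1) * (h * (0 - -rcf h)) = rcf h := by
    linear_combination (rcf h) * hm
  rw [k1] at c1 c2
  have c3 : ((M:ℝ) + 1) * (h * (- -rcf h)) = rcf h := by linear_combination (rcf h) * hm
  rw [abs_le]
  constructor <;> linarith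

lemma rcWn_int_tendsto : Filter.Tendsto (fun M : ℕ => ∫ t in (0:ℝ)..1, rcWn M t) Filter.atTop
    (nhds (-Real.log (8 * π))) := by
  have e : ∀ M : ℕ, ∫ t in (0:ℝ)..1, rcWn M t =
      4 * (∑ j ∈ range M, rcf (((j:ℝ) + 1) / ((M:ℝ) + 1)) - (((M:ℝ) + 1) / 2 - Real.log 2 / 2))
       - 2 * Real.log (Stirling.stirlingSeq (M + 1)) - 3 * Real.log 2 := by
    intro M
    have hN : (0:ℝ) < (M:ℝ) + 1 := by positivity
    rw [rcWn_int, rcPhi_diff, Stirling.log_stirlingSeq_formula, Nat.factorial_succ]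
    simp_rw [rclam_eq]
    rw [div_self (by positivity)]
    push_cast
    rw [Real.log_mul (by positivity) (by positivity), Real.log_mul (by positivity) (by positivity),
      Real.log_div (by positivity) (by positivity), Real.log_exp, sum_add_distrib, ← mul_sum]
    have f1 : rcf 1 = Real.log 2 := by simp [rcf]; norm_num
    simp only [sum_const, card_range, nsmul_eq_mul, f1]
    norm_num [f1]
    ring
  have hs := (Stirling.tendsto_stirlingSeq_sqrt_pi.comp (Filter.tendsto_add_atTop_nat 1)).log (by positivity)
  have hd : Filter.Tendsto (fun M : ℕ => rcf (1 / ((M:ℝ) + 1))) Filter.atTop (nhds 0) := by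
    have f0 : rcf 0 = 0 := by simp [rcf]
    have := (rcf_cont.tendsto 0).comp (tendsto_one_div_add_atTop_nhds_zero_nat (𝕜 := ℝ))
    rw [f0] at this
    exact this
  have hf := squeeze_zero_norm (fun M => by rw [Real.norm_eq_abs]; exact rcf_sum M) hd
  have := ((hf.const_mul 4).sub (hs.const_mul 2)).sub_const (3 * Real.log 2)
  have e2 : (4 * 0 - 2 * Real.log √π) - 3 * Real.log 2 = -Real.log (8 * π) := by
    rw [Real.log_sqrt pi_pos.le, Real.log_mul (by norm_num) pi_ne_zero, show (8:ℝ) = 2 ^ 3 by norm_num, Real.log_pow]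
    push_cast; ring
  rw [e2] at this
  exact this.congr fun M => (e M).symm

lemma rcW_int : ∫ t in (0:ℝ)..1, rcW t = -Real.log (8 * π) :=
  tendsto_nhds_unique rcWn_tendsto rcWn_int_tendsto


lemma rc_riemann {f : ℝ → ℝ} (hf : ContinuousOn f (Set.Icc 0 1)) :
    Filter.Tendsto (fun M : ℕ => 1 / ((M:ℝ) + 1) * ∑ n ∈ range (M + 1), f (((n:ℝ) + 1) / ((M:ℝ) + 1)))
      Filter.atTop (nhds (∫ t in (0:ℝ)..1, f t)) := by
  have hu := isCompact_Icc.uniformContinuousOn_of_continuous hf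
  rw [Metric.uniformContinuousOn_iff] at hu
  rw [Metric.tendsto_atTop]
  intro ε hε
  obtain ⟨δ, hδ, hu⟩ := hu (ε / 2) (by linarith)
  obtain ⟨N, hN⟩ := exists_nat_gt (1 / δ)
  refine ⟨N, fun M hM => ?_⟩
  have hM1 : (0:ℝ) < (M:ℝ) + 1 := by positivity
  set k := (M:ℝ) + 1 with hk
  have hkd : 1 / k < δ := by
    have : (N:ℝ) ≤ M := by exact_mod_cast hM
    rw [div_lt_iff₀ hδ] at hN
    rw [div_lt_iff₀ hM1]
    nlinarith
  have hsub : ∀ n < M + 1, Set.Icc ((n:ℝ) / k) (((n + 1 : ℕ):ℝ) / k) ⊆ Set.Icc 0 1 := by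
    intro n hn y hy
    have hn' : ((n + 1 : ℕ):ℝ) ≤ k := by rw [hk]; exact_mod_cast hn
    refine ⟨le_trans (by positivity) hy.1, hy.2.trans ?_⟩
    rw [div_le_one hM1]; exact hn'
  have hle : ∀ n : ℕ, (n:ℝ) / k ≤ ((n + 1 : ℕ):ℝ) / k := fun n => by
    push_cast; gcongr; linarith
  have hintg : ∀ n < M + 1, IntervalIntegrable f MeasureTheory.volume ((n:ℝ) / k) (((n + 1 : ℕ):ℝ) / k) :=
    fun n hn => ContinuousOn.intervalIntegrable_of_Icc (hle n) (hf.mono (hsub n hn))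
  have hsum := intervalIntegral.sum_integral_adjacent_intervals (a := fun n : ℕ => (n:ℝ) / k) (n := M + 1) hintg
  have e1 : ((M + 1 : ℕ):ℝ) / k = 1 := by rw [hk]; push_cast; exact div_self hM1.ne'
  simp only [e1, Nat.cast_zero, zero_div] at hsum
  rw [← hsum, mul_sum, Real.dist_eq, ← sum_sub_distrib]
  have hb : ∀ n ∈ range (M + 1), |1 / k * f (((n:ℝ) + 1) / k) - ∫ t in ((n:ℝ) / k)..(((n + 1 : ℕ):ℝ) / k), f t| ≤ ε / 2 * (1 / k) := by
    intro n hn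
    have hn := mem_range.1 hn
    have ed : ((n + 1 : ℕ):ℝ) / k - (n:ℝ) / k = 1 / k := by push_cast; field_simp; ring
    have e2 : 1 / k * f (((n:ℝ) + 1) / k) = ∫ t in ((n:ℝ) / k)..(((n + 1 : ℕ):ℝ) / k), f (((n:ℝ) + 1) / k) := by
      rw [intervalIntegral.integral_const, ed, smul_eq_mul]
    rw [e2, ← intervalIntegral.integral_sub (by simp) (hintg n hn)]
    have := intervalIntegral.norm_integral_le_of_norm_le_const (a := (n:ℝ) / k) (b := ((n + 1 : ℕ):ℝ) / k)
      (f := fun t => f (((n:ℝ) + 1) / k) - f t) (C := ε / 2) (by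
        intro t ht
        rw [Set.uIoc_of_le (hle n)] at ht
        have hlt := hu (((n:ℝ) + 1) / k) (hsub n hn ⟨by have := hle n; push_cast at this; exact this, by push_cast; exact le_rfl⟩)
          t (hsub n hn ⟨ht.1.le, ht.2⟩) (by
            rw [Real.dist_eq, abs_of_nonneg (by have := ht.2; push_cast at this; linarith)]
            have a := ht.1
            push_cast at ed
            linarith)
        rw [Real.dist_eq] at hlt
        exact hlt.le)
    rw [ed, abs_of_pos (show 0 < 1 / k by positivity)] at this
    exact this
  refine lt_of_le_of_lt (abs_sum_le_sum_abs _ _) (lt_of_le_of_lt (sum_le_sum hb) ?_)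
  rw [sum_const, card_range, nsmul_eq_mul, show ((M + 1 : ℕ):ℝ) = k by rw [hk]; push_cast; rfl]
  have : k * (ε / 2 * (1 / k)) = ε / 2 := by field_simp
  linarith

noncomputable def rcgg (t : ℝ) : ℝ := rcZ (1 + t) ^ 2 + 2 * (1 / √t * (rcZ (1 + t) - rcZ 1))

lemma rcgg_eq (t : ℝ) : rcW t = rcgg t + 2 * rcZ 1 * (1 / √t) := by
  unfold rcW rcgg; ring

lemma rcgg_cont : ContinuousOn rcgg (Set.Icc 0 1) := by
  unfold rcgg
  have hz := rcZ1_cont.mono (Set.Icc_subset_Ici_self : Set.Icc (0:ℝ) 1 ⊆ Set.Ici 0)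
  refine (hz.pow 2).add (continuousOn_const.mul ?_)
  have hc : ContinuousOn (fun t => rcT t - 1 / √t * rcg t) (Set.Icc 0 1) := by
    refine (rcT_cont.mono (Set.Icc_subset_Ici_self : Set.Icc (0:ℝ) 1 ⊆ Set.Ici 0)).sub ?_
    refine (continuousOn_const (c := (0:ℝ))).congr fun t ht => ?_
    rw [rcg_eq (N := 0) (by simpa using ht.2)]; simp
  refine hc.congr fun t _ => ?_
  unfold rcT; ring

lemma rcW_int_eq : ∫ t in (0:ℝ)..1, rcW t = (∫ t in (0:ℝ)..1, rcgg t) + 4 * rcZ 1 := by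
  simp_rw [rcgg_eq]
  rw [intervalIntegral.integral_add (rcgg_cont.intervalIntegrable_of_Icc zero_le_one) (rc_intble_inv_sqrt.const_mul _),
    intervalIntegral.integral_const_mul]
  have : ∫ t in (0:ℝ)..1, 1 / √t = 2 := by
    have := intervalIntegral.integral_eq_sub_of_hasDerivAt_of_le (f := fun t => 2 * √t) (f' := fun t => 1 / √t) (a := 0) (b := 1) zero_le_one (by fun_prop) ?_ rc_intble_inv_sqrt
    · rw [this]; simp
    · intro t ht
      have t0 : 0 < t := ht.1
      have := (Real.hasDerivAt_sqrt t0.ne').const_mul 2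
      have s0 : 0 < √t := Real.sqrt_pos.2 t0
      exact this.congr_deriv (by field_simp)
  rw [this]; ring

lemma rcF_one (a : ℤ) : rcF a 1 = rcZ 1 ^ 2 := by
  unfold rcF; simp [rcH_zero]; ring

lemma rcF_diag (M : ℕ) : 1 / √((M:ℝ) + 1) * rcF 1 (M + 1) =
    (harmonic (M + 1) : ℝ) + (1 / ((M:ℝ) + 1) * ∑ n ∈ range (M + 1), rcgg (((n:ℝ) + 1) / ((M:ℝ) + 1)))
      + 2 * rcZ 1 * (1 / √((M:ℝ) + 1) * (rcZ 1 - rcZ (1 + (M + 1 : ℕ)))) := by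
  have hk : (0:ℝ) < (M:ℝ) + 1 := by positivity
  unfold rcF
  push_cast
  set k := (M:ℝ) + 1 with hkd
  have s0 := Real.sqrt_pos.2 hk
  have s2 : √k ^ 2 = k := Real.sq_sqrt hk.le
  have e1 : ∑ n ∈ range (M + 1), rcH (1 * n / k) * rcH (n / k) = ∑ n ∈ range (M + 1), rcZ (((n:ℝ) + 1) / k) ^ 2 := by
    rw [sum_range_succ', sum_range_succ]
    simp only [Nat.cast_zero, mul_zero, zero_div, rcH_zero]
    rw [← hkd, div_self hk.ne', ← sq]
    congr 1
    refine sum_congr rfl fun n hn => ?_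
    have hn' : (n:ℝ) + 1 ≤ M := by exact_mod_cast (mem_range.1 hn)
    push_cast
    rw [one_mul, rcH_of_mem (by positivity) (by rw [div_le_one hk]; linarith), sq]
  have e2 : ∀ n ∈ range (M + 1), rcZ (((n:ℝ) + 1) / k) ^ 2 =
      k * (1 / ((n:ℝ) + 1)) + (rcgg (((n:ℝ) + 1) / k) + 2 * rcZ 1 * (√k * (1 / √((n:ℝ) + 1)))) := by
    intro n _
    have hn : (0:ℝ) < n + 1 := by positivity
    have hp : 0 < ((n:ℝ) + 1) / k := by positivity
    have q1 : 1 / √(((n:ℝ) + 1) / k) = √k * (1 / √((n:ℝ) + 1)) := by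
      rw [Real.sqrt_div hn.le]; field_simp
    have q2 : (√k * (1 / √((n:ℝ) + 1))) ^ 2 = k * (1 / ((n:ℝ) + 1)) := by
      rw [mul_pow, s2, div_pow, Real.sq_sqrt hn.le, one_pow]
    rw [rcZ_succ hp, add_comm (((n:ℝ) + 1) / k) (1:ℝ)]
    unfold rcgg
    rw [q1]
    linear_combination q2
  rw [e1, sum_congr rfl e2, sum_add_distrib, sum_add_distrib, ← mul_sum, ← mul_sum, ← mul_sum, rc_inv_sum]
  have e3 : ∑ n ∈ range (M + 1), 1 / ((n:ℝ) + 1) = (harmonic (M + 1) : ℝ) := by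
    unfold harmonic; push_cast; simp
  rw [e3]
  push_cast
  rw [← hkd]
  field_simp
  linear_combination (-(k * (harmonic (M + 1) : ℝ) + ∑ n ∈ range (M + 1), rcgg (((n:ℝ) + 1) / k))) * s2

lemma rcC0_eq : rcC0 = -Real.log (8 * π) := by
  rw [← rcW_int, rcW_int_eq]
  have ht : Filter.Tendsto (fun n : ℕ => (n:ℝ) + 1) Filter.atTop Filter.atTop :=
    Filter.tendsto_atTop_add_const_right _ _ tendsto_natCast_atTop_atTop
  have hi : Filter.Tendsto (fun n : ℕ => 1 / √((n:ℝ) + 1)) Filter.atTop (nhds 0) := rc_tendsto_inv_sqrt.comp ht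
  have hi1 : Filter.Tendsto (fun n : ℕ => 1 / ((n:ℝ) + 1)) Filter.atTop (nhds 0) := tendsto_one_div_add_atTop_nhds_zero_nat
  -- right side limit
  have hz : Filter.Tendsto (fun M : ℕ => 1 / √((M:ℝ) + 1) * (rcZ 1 - rcZ (1 + (M + 1 : ℕ)))) Filter.atTop (nhds 2) := by
    have t2 : Filter.Tendsto (fun n : ℕ => (n:ℝ) + 1 + 1) Filter.atTop Filter.atTop :=
      Filter.tendsto_atTop_add_const_right _ _ ht
    have h1 : Filter.Tendsto (fun n : ℕ => rcZ ((n:ℝ) + 1) + 2 * √((n:ℝ) + 1)) Filter.atTop (nhds 0) := rcZ_tail.comp ht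
    have h2 := ((h1.const_sub (rcZ 1)).mul hi).add_const 2
    have h3 := h2.add (hi.mul hi)
    simp only [mul_zero, zero_add, add_zero] at h3
    refine h3.congr fun M => ?_
    have hk : (0:ℝ) < (M:ℝ) + 1 := by positivity
    push_cast
    rw [add_comm (1:ℝ), rcZ_succ hk]
    have s0 := Real.sqrt_pos.2 hk
    field_simp
    ring
  have hh : Filter.Tendsto (fun M : ℕ => (harmonic (M + 1) : ℝ) - Real.log ((M:ℝ) + 1)) Filter.atTop
      (nhds Real.eulerMascheroniConstant) := by
    have := Real.tendsto_harmonic_sub_log.comp (Filter.tendsto_add_atTop_nat 1)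
    refine this.congr fun M => ?_
    simp
  have hR := (hh.add (rc_riemann rcgg_cont)).add (hz.const_mul (2 * rcZ 1))
  -- left side limit
  have hL : Filter.Tendsto (fun M : ℕ => 1 / √((M:ℝ) + 1) * rcF 1 (M + 1) - Real.log ((M:ℝ) + 1)) Filter.atTop
      (nhds (Real.eulerMascheroniConstant + rcC0)) := by
    have hb : ∀ M : ℕ, |(1 / √((M:ℝ) + 1) * rcF 1 (M + 1) - Real.log ((M:ℝ) + 1)) - (Real.eulerMascheroniConstant + rcC0)
        - 2 * rcZ 1 ^ 2 * (1 / √((M:ℝ) + 1))| ≤ 14 * rcK * (1 / ((M:ℝ) + 1)) := by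
      intro M
      have hk : (0:ℝ) < (M:ℝ) + 1 := by positivity
      have s0 := Real.sqrt_pos.2 hk
      have h1 := rcF_recip (h := 1) (k := M + 1) one_pos (by omega) (Nat.coprime_one_left _)
      rw [rcF_one] at h1
      push_cast at h1
      have h2 := rcG_small (x := 1 / ((M:ℝ) + 1)) (by positivity) (by rw [div_le_one hk]; linarith [(Nat.cast_nonneg M : (0:ℝ) ≤ M)])
      rw [← h1, Real.sqrt_div zero_le_one, Real.sqrt_one, one_div_one_div, one_div, Real.log_inv] at h2
      have s1 : 1 / √((M:ℝ) + 1) ≤ 1 := by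
        rw [div_le_one s0]; exact Real.one_le_sqrt.2 (by linarith [(Nat.cast_nonneg M : (0:ℝ) ≤ M)])
      rw [one_div ((M:ℝ) + 1)]
      refine le_trans ?_ h2
      have e : (1 / √((M:ℝ) + 1) * rcF 1 (M + 1) - Real.log ((M:ℝ) + 1)) - (Real.eulerMascheroniConstant + rcC0)
        - 2 * rcZ 1 ^ 2 * (1 / √((M:ℝ) + 1)) = 1 / √((M:ℝ) + 1) * (rcF 1 (M + 1) - rcZ 1 ^ 2 -
          √((M:ℝ) + 1) * (Real.eulerMascheroniConstant - -Real.log ((M:ℝ) + 1) + rcC0) - rcZ 1 ^ 2) := by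
        field_simp; ring
      rw [e, abs_mul, abs_of_pos (by positivity)]
      exact mul_le_of_le_one_left (abs_nonneg _) s1
    have hlim := hi1.const_mul (14 * rcK)
    rw [mul_zero] at hlim
    simp only [← Real.norm_eq_abs] at hb
    have h0 := squeeze_zero_norm hb hlim
    have := (h0.add (hi.const_mul (2 * rcZ 1 ^ 2))).add_const (Real.eulerMascheroniConstant + rcC0)
    simp only [mul_zero, zero_add] at this
    refine this.congr fun M => ?_
    ring
  have hR2 := hR.congr (f₂ := fun M : ℕ => 1 / √((M:ℝ) + 1) * rcF 1 (M + 1) - Real.log ((M:ℝ) + 1)) fun M => by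
    rw [rcF_diag]; ring
  have := tendsto_nhds_unique hL hR2
  linarith


lemma rc_cpow_deriv {c : ℝ} (hc : 0 < c) (s : ℂ) :
    HasDerivAt (fun t : ℝ => ((t : ℂ)) ^ s) (s * (c:ℂ) ^ (s - 1)) c := by
  have h : HasDerivAt (fun z : ℂ => z ^ s) (s * (c:ℂ) ^ (s - 1)) (c:ℂ) := by
    have := (hasDerivAt_id (c:ℂ)).cpow_const (c := s) (Or.inl (by simpa using hc))
    simpa using this
  exact h.comp_ofReal

noncomputable def rcLt (x : ℝ) (n : ℕ) (s : ℂ) : ℂ :=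
  ((n + x : ℝ) : ℂ) ^ (-s) - (((n + x + 1 : ℝ) : ℂ) ^ (1 - s) - ((n + x : ℝ) : ℂ) ^ (1 - s)) / (1 - s)

lemma rcLt_le {c : ℝ} (hc : 0 < c) {s : ℂ} (hs : s ≠ 1) (h0 : 0 < s.re) :
    ‖(c : ℂ) ^ (-s) - (((c + 1 : ℝ) : ℂ) ^ (1 - s) - (c : ℂ) ^ (1 - s)) / (1 - s)‖ ≤
      ‖s‖ * c ^ (-s.re - 1) := by
  have hs' : 1 - s ≠ 0 := sub_ne_zero.2 hs.symm
  have key : ∀ y ∈ Set.Icc c (c + 1), ‖(y:ℂ) ^ (-s) - (c:ℂ) ^ (-s)‖ ≤ ‖s‖ * c ^ (-s.re - 1) := by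
    intro y hy
    have := Convex.norm_image_sub_le_of_norm_hasDerivWithin_le (f := fun t : ℝ => (t:ℂ) ^ (-s))
      (f' := fun t : ℝ => -s * (t:ℂ) ^ (-s - 1)) (C := ‖s‖ * c ^ (-s.re - 1)) (s := Set.Icc c (c + 1)) (x := c) (y := y)
      (fun t ht => (rc_cpow_deriv (lt_of_lt_of_le hc ht.1) (-s)).hasDerivWithinAt)
      (fun t ht => by
        rw [norm_mul, norm_neg, Complex.norm_cpow_eq_rpow_re_of_pos (lt_of_lt_of_le hc ht.1)]
        refine mul_le_mul_of_nonneg_left ?_ (norm_nonneg _)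
        simp only [sub_re, neg_re, one_re]
        exact Real.rpow_le_rpow_of_nonpos hc ht.1 (by linarith)) (convex_Icc _ _)
      (Set.left_mem_Icc.2 (by linarith)) hy
    refine this.trans ?_
    have h1 : ‖y - c‖ ≤ 1 := by
      rw [Real.norm_eq_abs, abs_le]; constructor <;> linarith [hy.1, hy.2]
    exact mul_le_of_le_one_right (by positivity) h1
  have := Convex.norm_image_sub_le_of_norm_hasDerivWithin_le
      (f := fun t : ℝ => (t:ℂ) ^ (1 - s) / (1 - s) - (t:ℂ) * (c:ℂ) ^ (-s))
      (f' := fun t : ℝ => (t:ℂ) ^ (-s) - (c:ℂ) ^ (-s)) (C := ‖s‖ * c ^ (-s.re - 1)) (s := Set.Icc c (c + 1)) (x := c) (y := c + 1)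
      (fun t ht => by
        have h1 := ((rc_cpow_deriv (lt_of_lt_of_le hc ht.1) (1 - s)).div_const (1 - s))
        have h2 := (Complex.ofRealCLM.hasDerivAt (x := t)).mul_const ((c:ℂ) ^ (-s))
        have h3 := (h1.sub h2).hasDerivWithinAt (s := Set.Icc c (c + 1))
        refine h3.congr_deriv ?_
        rw [mul_div_cancel_left₀ _ hs']
        simp) key (convex_Icc _ _)
      (Set.left_mem_Icc.2 (by linarith)) (Set.right_mem_Icc.2 (by linarith))
  rw [show c + 1 - c = 1 by ring, norm_one, mul_one] at this
  rw [← norm_neg]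
  refine le_of_eq_of_le (congrArg norm ?_) this
  push_cast
  ring

def rcU : Set ℂ := {s | 1/4 < s.re ∧ s.re - s.im < 1 ∧ ‖s‖ < 4}

lemma rcU_open : IsOpen rcU :=
  (isOpen_lt continuous_const Complex.continuous_re).inter
    ((isOpen_lt (Complex.continuous_re.sub Complex.continuous_im) continuous_const).inter
      (isOpen_lt continuous_norm continuous_const))

lemma rcU_convex : Convex ℝ rcU := by
  refine (convex_halfSpace_re_gt _).inter (Convex.inter ?_ ?_)
  · have : IsLinearMap ℝ (fun s : ℂ => s.re - s.im) := by
      constructor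
      · intro x y; simp; ring
      · intro c x; simp; ring
    exact convex_halfSpace_lt this 1
  · have := convex_ball (0:ℂ) 4
    have e : Metric.ball (0:ℂ) 4 = {s : ℂ | ‖s‖ < 4} := by ext s; simp
    rw [e] at this
    exact this

lemma rcU_ne {s : ℂ} (hs : s ∈ rcU) : s ≠ 1 := by
  rintro rfl
  have := hs.2.1
  simp at this

lemma rcLt_bound {x : ℝ} (hx : 0 < x) (n : ℕ) {s : ℂ} (hs : s ∈ rcU) :
    ‖rcLt x n s‖ ≤ 4 * (1 / |(n:ℝ) + x| ^ (5/4 : ℝ) + 1 / |(n:ℝ) + x| ^ (5:ℝ)) := by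
  have hc : (0:ℝ) < n + x := by positivity
  obtain ⟨h1, -, h3⟩ := id hs
  refine (rcLt_le hc (rcU_ne hs) (by linarith)).trans ?_
  have h4 : s.re ≤ 4 := (Complex.re_le_norm s).trans h3.le
  rw [abs_of_pos hc]
  have : ((n:ℝ) + x) ^ (-s.re - 1) ≤ 1 / ((n:ℝ) + x) ^ (5/4 : ℝ) + 1 / ((n:ℝ) + x) ^ (5:ℝ) := by
    rw [one_div, one_div, ← Real.rpow_neg hc.le, ← Real.rpow_neg hc.le]
    have p1 := Real.rpow_pos_of_pos hc (-(5/4))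
    have p2 := Real.rpow_pos_of_pos hc (-5)
    rcases le_total 1 ((n:ℝ) + x) with h | h
    · have := Real.rpow_le_rpow_of_exponent_le h (show -s.re - 1 ≤ -(5/4) by linarith)
      linarith
    · have := Real.rpow_le_rpow_of_exponent_ge hc h (show -5 ≤ -s.re - 1 by linarith)
      linarith
  exact mul_le_mul h3.le this (by positivity) (by norm_num)

lemma rcLt_summ (x : ℝ) : Summable fun n : ℕ => 4 * (1 / |(n:ℝ) + x| ^ (5/4 : ℝ) + 1 / |(n:ℝ) + x| ^ (5:ℝ)) :=
  (((Real.summable_one_div_nat_add_rpow x (5/4)).2 (by norm_num)).add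
    ((Real.summable_one_div_nat_add_rpow x 5).2 (by norm_num))).mul_left 4

noncomputable def rcL (x : ℝ) (s : ℂ) : ℂ := (x:ℂ) ^ (1 - s) / (s - 1) + ∑' n, rcLt x n s

lemma rcL_diff {x : ℝ} (hx : 0 < x) : DifferentiableOn ℂ (rcL x) rcU := by
  have hcp : ∀ c : ℝ, 0 < c → Differentiable ℂ fun s : ℂ => (c:ℂ) ^ (1 - s) := fun c hc =>
    Differentiable.const_cpow (by fun_prop) (Or.inl (by exact_mod_cast hc.ne'))
  have hcm : ∀ c : ℝ, 0 < c → Differentiable ℂ fun s : ℂ => (c:ℂ) ^ (-s) := fun c hc =>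
    Differentiable.const_cpow (by fun_prop) (Or.inl (by exact_mod_cast hc.ne'))
  refine DifferentiableOn.add ?_ (differentiableOn_tsum_of_summable_norm (rcLt_summ x) ?_ rcU_open fun n w hw => rcLt_bound hx n hw)
  · exact (hcp x hx).differentiableOn.div (by fun_prop) fun s hs => sub_ne_zero.2 (rcU_ne hs)
  · intro n
    unfold rcLt
    refine (hcm _ (by positivity)).differentiableOn.sub (DifferentiableOn.div ?_ (by fun_prop) fun s hs => sub_ne_zero.2 (rcU_ne hs).symm)
    exact (hcp _ (by positivity)).differentiableOn.sub (hcp _ (by positivity)).differentiableOn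

lemma rcL_partial {x : ℝ} (s : ℂ) (N : ℕ) : ∑ n ∈ range N, rcLt x n s =
    ∑ n ∈ range N, ((n + x : ℝ) : ℂ) ^ (-s) - (((N + x : ℝ) : ℂ) ^ (1 - s) - (x : ℂ) ^ (1 - s)) / (1 - s) := by
  induction N with
  | zero => simp
  | succ N ih =>
    rw [sum_range_succ, ih, sum_range_succ, rcLt, show ((N + 1 : ℕ) : ℝ) + x = N + x + 1 by push_cast; ring]
    ring

lemma rcL_tendsto {x : ℝ} (hx : 0 < x) {s : ℂ} (hs : s ∈ rcU) :
    Filter.Tendsto (fun N : ℕ => (x:ℂ) ^ (1 - s) / (s - 1) + (∑ n ∈ range N, ((n + x : ℝ) : ℂ) ^ (-s)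
      - (((N + x : ℝ) : ℂ) ^ (1 - s) - (x : ℂ) ^ (1 - s)) / (1 - s))) Filter.atTop (nhds (rcL x s)) := by
  have hsum : Summable fun n => rcLt x n s := Summable.of_norm_bounded (rcLt_summ x) fun n => rcLt_bound hx n hs
  have := (hsum.hasSum.tendsto_sum_nat).const_add ((x:ℂ) ^ (1 - s) / (s - 1))
  simp only [rcL_partial] at this
  exact this

lemma rcL_eq {x : ℝ} (hx : 0 < x) (hx1 : x ≤ 1) {s : ℂ} (hs : s ∈ rcU) (h1 : 1 < s.re) :
    HurwitzZeta.hurwitzZeta (x : UnitAddCircle) s = rcL x s := by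
  have h := (HurwitzZeta.hasSum_hurwitzZeta_of_one_lt_re (a := x) ⟨hx.le, hx1⟩ h1).tendsto_sum_nat
  have hz : Filter.Tendsto (fun N : ℕ => ((N + x : ℝ) : ℂ) ^ (1 - s)) Filter.atTop (nhds 0) := by
    rw [tendsto_zero_iff_norm_tendsto_zero]
    have : Filter.Tendsto (fun N : ℕ => ((N:ℝ) + x) ^ (-(s.re - 1))) Filter.atTop (nhds 0) :=
      (tendsto_rpow_neg_atTop (by linarith)).comp
        (Filter.tendsto_atTop_add_const_right _ _ tendsto_natCast_atTop_atTop)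
    refine this.congr fun N => ?_
    rw [Complex.norm_cpow_eq_rpow_re_of_pos (by positivity)]
    simp
  have h2 := ((h.sub (((hz.sub_const ((x:ℂ) ^ (1 - s))).div_const (1 - s)))).const_add ((x:ℂ) ^ (1 - s) / (s - 1)))
  have h3 := h2.congr (f₂ := fun N : ℕ => (x:ℂ) ^ (1 - s) / (s - 1) + (∑ n ∈ range N, ((n + x : ℝ) : ℂ) ^ (-s)
      - (((N + x : ℝ) : ℂ) ^ (1 - s) - (x : ℂ) ^ (1 - s)) / (1 - s))) fun N => by
    have e : ∀ n ∈ range N, 1 / ((n:ℂ) + x) ^ s = ((n + x : ℝ) : ℂ) ^ (-s) := fun n _ => by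
      rw [Complex.cpow_neg, one_div]; push_cast; rfl
    rw [sum_congr rfl e]
  have := tendsto_nhds_unique h3 (rcL_tendsto hx hs)
  rw [← this]
  have e1 : s - 1 ≠ 0 := sub_ne_zero.2 (rcU_ne hs)
  have e2 : 1 - s ≠ 0 := sub_ne_zero.2 (rcU_ne hs).symm
  field_simp
  ring

lemma rcL_half {x : ℝ} (hx : 0 < x) : rcL x (1/2) = (rcZ x : ℂ) := by
  have hs : (1/2 : ℂ) ∈ rcU := by
    refine ⟨?_, ?_, ?_⟩ <;> norm_num
  have hcs : ∀ c : ℝ, 0 < c → (c:ℂ) ^ (1 - (1/2:ℂ)) = (√c : ℝ) := by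
    intro c hc
    rw [Real.sqrt_eq_rpow, Complex.ofReal_cpow hc.le]; norm_num
  have hcm : ∀ c : ℝ, 0 < c → (c:ℂ) ^ (-(1/2:ℂ)) = ((1 / √c : ℝ) : ℂ) := by
    intro c hc
    rw [Real.sqrt_eq_rpow, one_div (c ^ (1/2:ℝ)), ← Real.rpow_neg hc.le, Complex.ofReal_cpow hc.le]; norm_num
  have h1 := rcL_tendsto hx hs
  have t : Filter.Tendsto (fun n : ℕ => x + (n:ℝ)) Filter.atTop Filter.atTop :=
    Filter.tendsto_atTop_add_const_left _ _ tendsto_natCast_atTop_atTop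
  have h2 : Filter.Tendsto (fun N : ℕ => rcZ x - (rcZ (x + N) + 2 * √(x + N))) Filter.atTop (nhds (rcZ x)) := by
    simpa using (rcZ_tail.comp t).const_sub (rcZ x)
  have h3 := (Complex.continuous_ofReal.tendsto (rcZ x)).comp h2
  refine tendsto_nhds_unique h1 (h3.congr fun N => ?_)
  rw [hcs x hx, hcs _ (by positivity), sum_congr rfl fun n _ => hcm _ (by positivity)]
  simp only [Function.comp]
  rw [rcZ_add_nat hx N, add_comm x (N:ℝ)]
  simp only [add_comm x]
  push_cast
  ring

lemma rc_hurwitz {x : ℝ} (hx : 0 < x) (hx1 : x ≤ 1) :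
    HurwitzZeta.hurwitzZeta (x : UnitAddCircle) (1/2) = (rcZ x : ℂ) := by
  rw [← rcL_half hx]
  have hU : IsPreconnected rcU := rcU_convex.isPreconnected
  have hf : AnalyticOnNhd ℂ (HurwitzZeta.hurwitzZeta (x : UnitAddCircle)) rcU :=
    DifferentiableOn.analyticOnNhd (fun s hs => (HurwitzZeta.differentiableAt_hurwitzZeta _ (rcU_ne hs)).differentiableWithinAt) rcU_open
  have hg : AnalyticOnNhd ℂ (rcL x) rcU := (rcL_diff hx).analyticOnNhd rcU_open
  have h2 : (2 + 2 * I : ℂ) ∈ rcU := by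
    refine ⟨by norm_num, by norm_num, ?_⟩
    rw [Complex.norm_def, Real.sqrt_lt' (by norm_num)]
    simp [Complex.normSq_apply]; norm_num
  refine hf.eqOn_of_preconnected_of_eventuallyEq hg hU h2 ?_ ?_
  · have ho : IsOpen {s : ℂ | 1 < s.re} := isOpen_lt continuous_const Complex.continuous_re
    filter_upwards [rcU_open.mem_nhds h2, ho.mem_nhds (by simp)] with s a b
    exact rcL_eq hx hx1 a b
  · refine ⟨?_, ?_, ?_⟩ <;> norm_num

lemma rc_zeta_half : riemannZeta (1/2) = (rcZ 1 : ℂ) := by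
  rw [← rc_hurwitz one_pos le_rfl, AddCircle.coe_period, HurwitzZeta.hurwitzZeta_zero]


lemma rc_hz_add {q : ℕ} [NeZero q] (j : ZMod q) :
    HurwitzZeta.hurwitzZeta (ZMod.toAddCircle j) (1/2) = (rchz q j : ℂ) := by
  have hq : (0:ℝ) < q := by exact_mod_cast Nat.pos_of_ne_zero (NeZero.ne q)
  by_cases h : j = 0
  · subst h
    rw [map_zero, HurwitzZeta.hurwitzZeta_zero, rc_zeta_half]
    unfold rchz
    rw [ZMod.val_zero, Nat.cast_zero, zero_div, rcH_zero]
  · have hv : 0 < j.val := Nat.pos_of_ne_zero (by rwa [Ne, ZMod.val_eq_zero])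
    have hv' : (0:ℝ) < j.val := by exact_mod_cast hv
    have h1 : 0 < (j.val : ℝ) / q := by positivity
    have h2 : (j.val : ℝ) / q ≤ 1 := by
      rw [div_le_one hq]; exact_mod_cast (ZMod.val_lt j).le
    rw [ZMod.toAddCircle_apply, rc_hurwitz h1 h2]
    unfold rchz
    rw [rcH_of_mem h1 h2]

lemma rc_char_sum {q : ℕ} [Fact q.Prime] (j b : ZMod q) :
    ∑ χ : DirichletCharacter ℂ q, (starRingEnd ℂ) (χ j) * χ b =
      if j = 0 then 0 else if j = b then (q.totient : ℂ) else 0 := by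
  by_cases h : j = 0
  · rw [if_pos h]
    subst h
    refine sum_eq_zero fun χ _ => ?_
    rw [MulChar.map_nonunit χ (by simp)]; simp
  · rw [if_neg h, ← DirichletCharacter.sum_char_inv_mul_char_eq ℂ (isUnit_iff_ne_zero.2 h) b]
    refine sum_congr rfl fun χ _ => ?_
    congr 1
    have e := MulChar.star_apply χ j
    rw [MulChar.star_eq_inv, MulChar.inv_apply'] at e
    exact e.symm

lemma rc_Mstar {q : ℕ} (hq : q.Prime) {a : ℤ} (ha : IsCoprime a (q:ℤ)) [NeZero q] :
    Mstar 0 a q = (rcF a q : ℂ) := by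
  have : Fact q.Prime := ⟨hq⟩
  have hq0 : (0:ℝ) < q := by exact_mod_cast hq.pos
  have hq1 : (1:ℝ) < q := by exact_mod_cast hq.one_lt
  obtain ⟨u, hu⟩ := rc_unit_of_coprime ha
  set H : ZMod q → ℂ := fun j => (rchz q j : ℂ) with hH
  have hs : ∑ χ : DirichletCharacter ℂ q, (∑ j : ZMod q, (starRingEnd ℂ) (χ j) * H j) * (∑ l : ZMod q, χ l * H l) * χ (a : ZMod q)
      = (q.totient : ℂ) * (∑ l : ZMod q, H (a * l) * H l - H 0 * H 0) := by
    have e1 : ∀ χ : DirichletCharacter ℂ q, (∑ j : ZMod q, (starRingEnd ℂ) (χ j) * H j) * (∑ l : ZMod q, χ l * H l) * χ (a : ZMod q)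
        = ∑ l : ZMod q, ∑ j : ZMod q, H j * H l * ((starRingEnd ℂ) (χ j) * χ (a * l)) := by
      intro χ
      rw [mul_comm (∑ j : ZMod q, (starRingEnd ℂ) (χ j) * H j), sum_mul_sum, sum_mul]
      refine sum_congr rfl fun l _ => ?_
      rw [sum_mul]
      refine sum_congr rfl fun j _ => ?_
      rw [map_mul]; ring
    simp_rw [e1]
    rw [sum_comm]
    have e2 : ∀ l : ZMod q, ∑ χ : DirichletCharacter ℂ q, ∑ j : ZMod q, H j * H l * ((starRingEnd ℂ) (χ j) * χ (a * l))
        = (q.totient : ℂ) * (H (a * l) * H l) - if l = 0 then (q.totient : ℂ) * (H 0 * H 0) else 0 := by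
      intro l
      rw [sum_comm]
      simp_rw [← mul_sum, rc_char_sum]
      rw [sum_eq_single (a * l : ZMod q)]
      · have : (a * l : ZMod q) = 0 ↔ l = 0 := by rw [← hu]; simp
        by_cases hl : l = 0
        · simp [hl]
        · simp only [this, hl, if_false, if_true]; ring
      · intro j _ hj
        simp [hj]
      · simp
    simp_rw [e2]
    rw [sum_sub_distrib, sum_ite_eq' univ (0 : ZMod q), if_pos (mem_univ _), ← mul_sum]
    ring
  have hcp : (q:ℂ) ^ ((1:ℂ)/2) = (√q : ℝ) := by
    rw [Real.sqrt_eq_rpow, Complex.ofReal_cpow hq0.le]; norm_num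
  have hcm : (q:ℂ) ^ (-(1:ℂ)/2) = ((1/√q : ℝ) : ℂ) := by
    rw [Real.sqrt_eq_rpow, one_div ((q:ℝ) ^ (1/2:ℝ)), ← Real.rpow_neg hq0.le, Complex.ofReal_cpow hq0.le]; norm_num
  have hcm' : (q:ℂ) ^ (-((1:ℂ)/2)) = ((1/√q : ℝ) : ℂ) := by rw [← hcm]; congr 1; ring
  unfold Mstar
  simp only [Nat.cast_zero, sub_zero, add_zero, neg_zero, Complex.cpow_zero]
  unfold DirichletCharacter.LFunction ZMod.LFunction
  simp_rw [rc_hz_add, MulChar.ringHomComp_apply]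
  rw [rc_zeta_half, hcp, hcm, hcm']
  have e3 : ∑ χ : DirichletCharacter ℂ q, ((1/√q : ℝ) : ℂ) * (∑ j : ZMod q, (starRingEnd ℂ) (χ j) * H j) *
      (((1/√q : ℝ) : ℂ) * (∑ l : ZMod q, χ l * H l)) * χ (a : ZMod q) = ((1/√q : ℝ) : ℂ) ^ 2 *
      ((q.totient : ℂ) * (∑ l : ZMod q, H (a * l) * H l - H 0 * H 0)) := by
    rw [← hs, mul_sum]
    refine sum_congr rfl fun χ _ => ?_
    ring
  rw [e3, rcF_zmod]
  have h0 : H 0 = (rcZ 1 : ℂ) := by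
    simp only [hH]; unfold rchz; simp [rcH_zero]
  have e4 : ∑ l : ZMod q, H (a * l) * H l = ((∑ j : ZMod q, rchz q (a * j) * rchz q j : ℝ) : ℂ) := by
    push_cast; rfl
  rw [e4, h0, Nat.totient_prime hq]
  generalize (∑ j : ZMod q, rchz q (a * j) * rchz q j : ℝ) = S
  rw [Nat.cast_sub hq.one_le, show (q:ℂ) = ((q:ℝ) : ℂ) by norm_cast]
  norm_cast
  have s0 := Real.sqrt_pos.2 hq0
  have s2 : √(q:ℝ) ^ 2 = q := Real.sq_sqrt hq0.le
  have hne : (q:ℝ) - 1 ≠ 0 := by linarith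
  push_cast
  rw [← s2] at hne ⊢
  rw [Real.sqrt_sq s0.le]
  field_simp
  ring


noncomputable def rcPh (x : ℝ) : ℝ :=
  if 0 < x then -rcD (1 / x) else if x < 0 then
    rcG (-x) - 1 / √(-x) * (Real.eulerMascheroniConstant - Real.log (-x) - Real.log (8 * π)) - rcZ 1 ^ 2
  else 0

noncomputable def rcPsi (x : ℝ) : ℝ := rcPh (max (-1) (min 1 x))

lemma rcPsi_eq {x : ℝ} (hx : |x| ≤ 1) : rcPsi x = rcPh x := by
  have := abs_le.1 hx
  unfold rcPsi
  rw [min_eq_right this.2, max_eq_right this.1]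

noncomputable def rcCC : ℝ := rcCE * rcK + 14 * rcK

lemma rcCC_pos : 0 < rcCC := by
  unfold rcCC
  have := rcK_ge
  have := rcCE_pos
  positivity

lemma rcPh_bound {x : ℝ} (hx : |x| ≤ 1) : |rcPh x| ≤ rcCC * |x| := by
  have k1 : 0 < rcK := by linarith [rcK_ge]
  have k2 := rcCE_pos
  unfold rcPh rcCC
  split_ifs with h1 h2
  · rw [abs_neg, abs_of_pos h1]
    refine (rcD_bound (by positivity)).trans ?_
    rw [div_div_eq_mul_div, div_one]
    have : 0 ≤ 14 * rcK * x := by positivity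
    nlinarith
  · rw [abs_of_neg h2] at hx ⊢
    have h3 : 0 < -x := by linarith
    have := rcG_small h3 hx
    rw [rcC0_eq, ← sub_eq_add_neg] at this
    refine this.trans ?_
    have : 0 ≤ rcCE * rcK * (-x) := by positivity
    nlinarith
  · have : x = 0 := by linarith
    simp [this]

lemma rcPh_cont : ContinuousOn rcPh (Set.Icc (-1) 1) := by
  intro x hx
  have ha : |x| ≤ 1 := abs_le.2 hx
  rcases lt_trichotomy x 0 with h | h | h
  · refine ContinuousAt.continuousWithinAt ?_
    have hn : 0 < -x := by linarith
    have hc : ContinuousAt (fun x : ℝ => rcG (-x) - 1 / √(-x) *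
        (Real.eulerMascheroniConstant - Real.log (-x) - Real.log (8 * π)) - rcZ 1 ^ 2) x := by
      have s0 := Real.sqrt_pos.2 hn
      have hd : ContinuousAt (fun x : ℝ => rcD (-x)) x :=
        ContinuousAt.comp (f := fun x : ℝ => -x) (g := rcD) (rcD_cont.continuousAt (Ioi_mem_nhds hn)) continuous_neg.continuousAt
      have hs : ContinuousAt (fun x : ℝ => √(-x)) x := by fun_prop
      have hl : ContinuousAt (fun x : ℝ => Real.log (-x)) x :=
        ContinuousAt.log continuous_neg.continuousAt hn.ne'
      unfold rcG
      refine ContinuousAt.sub (ContinuousAt.sub ((((hs.const_mul _).sub continuousAt_const)).add hd) ?_) continuousAt_const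
      exact (continuousAt_const.div hs s0.ne').mul ((continuousAt_const.sub hl).sub continuousAt_const)
    refine hc.congr ?_
    filter_upwards [Iio_mem_nhds h] with y hy
    have hy' : y < 0 := hy
    unfold rcPh
    rw [if_neg (by linarith), if_pos hy']
  · subst h
    have h0 : rcPh 0 = 0 := by simp [rcPh]
    unfold ContinuousWithinAt
    rw [h0]
    have hl : Filter.Tendsto (fun y : ℝ => rcCC * |y|) (nhdsWithin 0 (Set.Icc (-1) 1)) (nhds 0) := by
      have : Continuous fun y : ℝ => rcCC * |y| := by fun_prop
      have := this.tendsto 0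
      simp only [abs_zero, mul_zero] at this
      exact this.mono_left nhdsWithin_le_nhds
    refine squeeze_zero_norm' ?_ hl
    filter_upwards [self_mem_nhdsWithin] with y hy
    exact rcPh_bound (abs_le.2 hy)
  · refine ContinuousAt.continuousWithinAt ?_
    have hc : ContinuousAt (fun x : ℝ => -rcD (1 / x)) x := by
      refine ContinuousAt.neg ?_
      refine ContinuousAt.comp (f := fun x : ℝ => 1 / x) (g := rcD) (rcD_cont.continuousAt (Ioi_mem_nhds (by positivity))) ?_
      exact continuousAt_const.div continuousAt_id h.ne'
    refine hc.congr ?_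
    filter_upwards [Ioi_mem_nhds h] with y hy
    have hy' : 0 < y := hy
    unfold rcPh
    rw [if_pos hy']

lemma rcPsi_cont : Continuous rcPsi := by
  unfold rcPsi
  refine rcPh_cont.comp_continuous (by fun_prop) fun x => ?_
  exact ⟨le_max_left _ _, max_le (by norm_num) (min_le_left _ _)⟩

lemma rcPsi_bound (x : ℝ) (hx : |x| ≤ 1) : |rcPsi x| ≤ rcCC * |x| := by
  rw [rcPsi_eq hx]; exact rcPh_bound hx

lemma rcF_congr {a b : ℤ} {k : ℕ} [NeZero k] (h : (a : ZMod k) = b) : rcF a k = rcF b k := by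
  rw [rcF_zmod, rcF_zmod, h]

lemma rcF_symm {a b : ℤ} {k : ℕ} [NeZero k] (h : (a : ZMod k) * b = 1) : rcF a k = rcF b k := by
  rw [rcF_zmod, rcF_zmod]
  congr 1
  let u : (ZMod k)ˣ := ⟨b, a, by rw [mul_comm]; exact h, h⟩
  rw [← rc_unit_sum (fun j : ZMod k => rchz k ((a : ZMod k) * j) * rchz k j) u]
  refine sum_congr rfl fun j _ => ?_
  have : (a : ZMod k) * (u * j) = j := by
    rw [← mul_assoc]; show (a : ZMod k) * b * j = j; rw [h, one_mul]
  rw [this, mul_comm]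

/-- one reciprocity step, sign plus -/
lemma rc_step_pos {u v : ℕ} (hu : 0 < u) (huv : u ≤ v) (hc : Nat.Coprime u v) :
    rcF u v = √((v:ℝ) / u) * (Real.log ((v:ℝ) / u) + Real.eulerMascheroniConstant - Real.log (8 * π))
      + rcZ 1 ^ 2 + rcPsi (-((u:ℝ) / v)) + rcF (-v) u := by
  have hv : 0 < v := lt_of_lt_of_le hu huv
  have hu' : (0:ℝ) < u := by exact_mod_cast hu
  have hv' : (0:ℝ) < v := by exact_mod_cast hv
  have h := rcF_recip hu hv hc
  have h0 : (0:ℝ) < u / v := by positivity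
  have h1 : (u:ℝ) / v ≤ 1 := by rw [div_le_one hv']; exact_mod_cast huv
  rw [rcPsi_eq (by rw [abs_neg, abs_of_pos h0]; exact h1)]
  unfold rcPh
  rw [if_neg (by linarith), if_pos (by linarith), neg_neg, ← h]
  have e1 : 1 / √((u:ℝ) / v) = √((v:ℝ) / u) := by
    rw [one_div, ← Real.sqrt_inv, inv_div]
  have e2 : Real.log ((u:ℝ) / v) = - Real.log ((v:ℝ) / u) := by
    rw [← Real.log_inv, inv_div]
  rw [e1, e2]; ring

/-- one reciprocity step, sign minus -/
lemma rc_step_neg {u v : ℕ} (hu : 0 < u) (huv : u ≤ v) (hc : Nat.Coprime u v) :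
    rcF (-u) v = -(π / 2 * √((v:ℝ) / u)) + rcZ 1 ^ 2 + rcPsi ((u:ℝ) / v) + rcF v u := by
  have hv : 0 < v := lt_of_lt_of_le hu huv
  have hu' : (0:ℝ) < u := by exact_mod_cast hu
  have hv' : (0:ℝ) < v := by exact_mod_cast hv
  have h := rcF_recip hv hu hc.symm
  have h0 : (0:ℝ) < u / v := by positivity
  have h1 : (u:ℝ) / v ≤ 1 := by rw [div_le_one hv']; exact_mod_cast huv
  rw [rcPsi_eq (by rw [abs_of_pos h0]; exact h1)]
  unfold rcPh
  rw [if_pos h0, one_div_div]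
  unfold rcG at h
  linarith


lemma rc_rem (q : ℕ) : ∀ a : ℕ, ∃ R : ℕ → ℕ, R 0 = a ∧ R 1 = q ∧
    (∀ j < (cfList a q).length, R j = (cfList a q).getD j 0 * R (j + 1) + R (j + 2) ∧ R (j + 2) < R (j + 1)) ∧
    R ((cfList a q).length + 1) = 0 ∧ R ((cfList a q).length) = Nat.gcd a q := by
  induction q using Nat.strong_induction_on with
  | _ q ih =>
    intro a
    rcases Nat.eq_zero_or_pos q with h | h
    · subst h
      have e : cfList a 0 = [] := by rw [cfList]; simp
      refine ⟨fun j => if j = 0 then a else 0, rfl, rfl, ?_, ?_, ?_⟩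
      · intro j hj; rw [e] at hj; simp at hj
      · simp
      · rw [e]; simp
    · have e : cfList a q = (a / q) :: cfList q (a % q) := by
        rw [cfList]; simp [h.ne']
      obtain ⟨R, r0, r1, r2, r3, r4⟩ := ih (a % q) (Nat.mod_lt _ h) q
      refine ⟨fun j => match j with | 0 => a | (j + 1) => R j, rfl, r0, ?_, ?_, ?_⟩
      · intro j hj
        rw [e] at hj ⊢
        cases j with
        | zero =>
          simp only [List.getD_cons_zero, r0, r1]
          exact ⟨(Nat.div_add_mod' a q).symm, Nat.mod_lt _ h⟩
        | succ j =>
          simp only [List.getD_cons_succ]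
          exact r2 j (by simpa using hj)
      · rw [e]; simpa using r3
      · rw [e]; simp only [List.length_cons]
        rw [r4, Nat.gcd_comm q, Nat.gcd_comm a, Nat.gcd_rec q a]

lemma rc_cf {a q : ℕ} (hq : 2 ≤ q) (hc : Nat.Coprime a q) :
    1 ≤ (cfList a q).length - 1 ∧
    (∀ j, 1 ≤ j → j ≤ (cfList a q).length - 1 → 1 ≤ (cfList a q).getD j 0) ∧
    cfDen a q ((cfList a q).length - 1) = q ∧
    ((a : ℤ) : ZMod q) * (cfDen a q ((cfList a q).length - 1 - 1) : ℤ) = (-1) ^ ((cfList a q).length - 1 - 1) := by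
  obtain ⟨R, r0, r1, r2, r3, r4⟩ := rc_rem q a
  rw [Nat.Coprime] at hc
  rw [hc] at r4
  generalize hn : (cfList a q).length = n at *
  have hn2 : 2 ≤ n := by
    by_contra hlt
    interval_cases n
    · simp at r3; omega
    · omega
  obtain ⟨m, rfl⟩ : ∃ m, n = m + 2 := ⟨n - 2, by omega⟩
  set b := fun j => (cfList a q).getD j 0 with hb
  have d0 : cfDen a q 0 = 1 := rfl
  have d1 : cfDen a q 1 = b 1 := rfl
  have d2 : ∀ j, cfDen a q (j + 2) = b (j + 2) * cfDen a q (j + 1) + cfDen a q j := fun j => rfl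
  have r2' : ∀ j < m + 2, R j = b j * R (j + 1) + R (j + 2) ∧ R (j + 2) < R (j + 1) := r2
  have key : ∀ j, j ≤ m → cfDen a q (j + 1) * R (j + 2) + cfDen a q j * R (j + 3) = q ∧
      (a : ZMod q) * cfDen a q j = (-1) ^ j * R (j + 2) ∧
      (a : ZMod q) * cfDen a q (j + 1) = (-1) ^ (j + 1) * R (j + 3) := by
    intro j
    induction j with
    | zero =>
      intro _
      have h0 := (r2' 0 (by omega)).1
      have h1 := (r2' 1 (by omega)).1
      simp only [zero_add, r0, r1] at h0 h1
      have h0' : (a : ZMod q) = R 2 := by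
        have := congrArg (fun z : ℕ => (z : ZMod q)) h0
        push_cast at this
        simpa using this
      have h1' : (0 : ZMod q) = b 1 * R 2 + R 3 := by
        have := congrArg (fun z : ℕ => (z : ZMod q)) h1
        push_cast at this
        simpa using this
      refine ⟨?_, ?_, ?_⟩
      · rw [d0, d1]; simpa using h1.symm
      · rw [d0]; simpa using h0'
      · rw [d1, h0']; simp only [zero_add, pow_one]; linear_combination -h1'
    | succ j ih =>
      intro hj
      obtain ⟨i1, i2, i3⟩ := ih (by omega)
      have h1 := (r2' (j + 2) (by omega)).1
      have h1' : (R (j + 2) : ZMod q) = b (j + 2) * R (j + 3) + R (j + 4) := by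
        have := congrArg (fun z : ℕ => (z : ZMod q)) h1
        push_cast at this
        exact this
      refine ⟨?_, i3, ?_⟩
      · rw [d2]
        conv_rhs => rw [← i1, h1]
        ring
      · rw [d2]; push_cast
        have : (-1 : ZMod q) ^ (j + 1 + 1) = (-1) ^ j := by rw [pow_succ, pow_succ]; ring
        rw [this, show j + 1 + 3 = j + 4 from rfl]
        rw [pow_succ] at i3
        linear_combination (b (j + 2) : ZMod q) * i3 + i2 + (-1) ^ j * h1'
  obtain ⟨k1, k2, -⟩ := key m le_rfl
  have e1 : m + 2 - 1 = m + 1 := by omega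
  have e2 : m + 2 - 1 - 1 = m := by omega
  rw [e2, e1]
  refine ⟨by omega, ?_, ?_, ?_⟩
  · intro j h1 h2
    have p1 := r2' j (by omega)
    have p2 := (r2' (j - 1) (by omega)).2
    rw [show j - 1 + 2 = j + 1 by omega, show j - 1 + 1 = j by omega] at p2
    show 1 ≤ b j
    rcases Nat.eq_zero_or_pos (b j) with h | h
    · rw [h] at p1; omega
    · exact h
  · rw [r4, r3] at k1; simpa using k1
  · rw [r4] at k2; simpa using k2

lemma rc_tele {a q K : ℕ} (hb : ∀ j, 1 ≤ j → j ≤ K → 1 ≤ (cfList a q).getD j 0) :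
    ∀ m, m + 1 ≤ K → 0 < cfDen a q m ∧ cfDen a q m ≤ cfDen a q (m + 1) ∧
      Nat.Coprime (cfDen a q m) (cfDen a q (m + 1)) := by
  intro m
  induction m with
  | zero =>
    intro h
    have := hb 1 le_rfl h
    exact ⟨one_pos, this, Nat.coprime_one_left _⟩
  | succ m ih =>
    intro h
    obtain ⟨i1, i2, i3⟩ := ih (by omega)
    have hb2 := hb (m + 2) (by omega) h
    have d2 : cfDen a q (m + 1 + 1) = (cfList a q).getD (m + 2) 0 * cfDen a q (m + 1) + cfDen a q m := rfl
    refine ⟨by omega, ?_, ?_⟩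
    · rw [d2]
      have := Nat.le_mul_of_pos_left (cfDen a q (m + 1)) hb2
      omega
    · rw [d2, Nat.coprime_mul_right_add_right]
      exact i3.symm

noncomputable def rcVp (a q : ℕ) : ℕ → ℕ
  | 0 => 0
  | (j + 1) => cfDen a q j

lemma rc_final {a q K : ℕ} (hb : ∀ j, 1 ≤ j → j ≤ K → 1 ≤ (cfList a q).getD j 0) {ε : ℤ} (hε : ε = 1 ∨ ε = -1) :
    ∀ m, m ≤ K → rcF (-ε * (-1) ^ m * rcVp a q m) (cfDen a q m) =
      (∑ j ∈ Finset.Icc 1 m,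
              if (-1:ℤ)^j = -ε then
                Real.sqrt ((cfDen a q j : ℝ) / cfDen a q (j-1)) *
                  (Real.log ((cfDen a q j : ℝ) / cfDen a q (j-1))
                    + Real.eulerMascheroniConstant - Real.log (8*π))
              else 0 : ℝ)
          - (π/2 * ∑ j ∈ Finset.Icc 1 m,
              if (-1:ℤ)^j = ε then
                Real.sqrt ((cfDen a q j : ℝ) / cfDen a q (j-1))
              else 0 : ℝ)
          + (rcZ 1)^2 * ((m:ℝ) + 1)
          + (∑ j ∈ Finset.Icc 1 m,
              rcPsi ((ε:ℝ) * (-1:ℝ)^j * ((cfDen a q (j-1) : ℝ) / cfDen a q j)) : ℝ) := by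
  intro m
  induction m with
  | zero =>
    intro _
    have : cfDen a q 0 = 1 := rfl
    rw [this, rcF_one]; simp
  | succ m ih =>
    intro hm
    have ih := ih (by omega)
    obtain ⟨t1, t2, t3⟩ := rc_tele hb m hm
    have : NeZero (cfDen a q m) := ⟨t1.ne'⟩
    have hz : ((cfDen a q (m + 1) : ℕ) : ZMod (cfDen a q m)) = rcVp a q m := by
      cases m with
      | zero =>
        have : cfDen a q 0 = 1 := rfl
        have : Subsingleton (ZMod (cfDen a q 0)) := by rw [this]; infer_instance
        exact Subsingleton.elim _ _
      | succ m =>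
        have d2 : cfDen a q (m + 1 + 1) = (cfList a q).getD (m + 2) 0 * cfDen a q (m + 1) + cfDen a q m := rfl
        rw [d2]; push_cast; simp [rcVp]
    rw [sum_Icc_succ_top (by omega), sum_Icc_succ_top (by omega), sum_Icc_succ_top (by omega)]
    simp only [Nat.add_sub_cancel]
    have hv : rcVp a q (m + 1) = cfDen a q m := rfl
    rw [hv]
    push_cast
    have hσ : (-1:ℤ) ^ (m + 1) = -ε ∨ (-1:ℤ) ^ (m + 1) = ε := by
      rcases neg_one_pow_eq_or ℤ (m + 1) with h | h <;> rcases hε with h' | h' <;> rw [h, h'] <;> simp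
    have hne : -ε ≠ ε := by rcases hε with h' | h' <;> rw [h'] <;> norm_num
    have hεε : ε * ε = 1 := by rcases hε with h' | h' <;> rw [h'] <;> norm_num
    have hpm : (-1:ℤ) ^ m = -(-1:ℤ) ^ (m + 1) := by rw [pow_succ]; ring
    rcases hσ with h | h
    · have hR : (ε:ℝ) * (-1:ℝ) ^ (m + 1) = -1 := by
        have : ε * (-1:ℤ) ^ (m + 1) = -1 := by rw [h]; linarith
        exact_mod_cast this
      have e1 : -ε * (-1) ^ (m + 1) * (cfDen a q m : ℤ) = cfDen a q m := by rw [h]; linear_combination (cfDen a q m : ℤ) * hεε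
      have e2 : rcF (-(cfDen a q (m + 1) : ℕ)) (cfDen a q m) = rcF (-ε * (-1) ^ m * rcVp a q m) (cfDen a q m) := by
        refine rcF_congr ?_
        have : -ε * (-1) ^ m * (rcVp a q m : ℤ) = -(rcVp a q m : ℤ) := by rw [hpm, h]; linear_combination -(rcVp a q m : ℤ) * hεε
        rw [this]; push_cast; rw [hz]
      rw [e1, rc_step_pos t1 t2 t3, e2, ih, if_pos h, if_neg (by rw [h]; exact hne), hR, neg_one_mul]
      ring
    · have hR : (ε:ℝ) * (-1:ℝ) ^ (m + 1) = 1 := by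
        have : ε * (-1:ℤ) ^ (m + 1) = 1 := by rw [h]; linarith
        exact_mod_cast this
      have e1 : -ε * (-1) ^ (m + 1) * (cfDen a q m : ℤ) = -cfDen a q m := by rw [h]; linear_combination -(cfDen a q m : ℤ) * hεε
      have e2 : rcF ((cfDen a q (m + 1) : ℕ)) (cfDen a q m) = rcF (-ε * (-1) ^ m * rcVp a q m) (cfDen a q m) := by
        refine rcF_congr ?_
        have : -ε * (-1) ^ m * (rcVp a q m : ℤ) = (rcVp a q m : ℤ) := by rw [hpm, h]; linear_combination (rcVp a q m : ℤ) * hεε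
        rw [this]; push_cast; rw [hz]
      rw [e1, rc_step_neg t1 t2 t3, e2, ih, if_pos h, if_neg (by rw [h]; exact hne.symm), hR, one_mul]
      ring

theorem reciprocity_continued_fraction :
    ∃ (ψ : ℝ → ℝ) (C : ℝ), Continuous ψ ∧ 0 < C ∧
      (∀ x : ℝ, |x| ≤ 1 → |ψ x| ≤ C * |x|) ∧
      ∀ (q a : ℕ) (hq : q.Prime), 0 < a → Nat.Coprime a q →
        ∀ (ε : ℤ), ε = 1 ∨ ε = -1 →
        haveI : NeZero q := ⟨hq.ne_zero⟩
        Mstar 0 (ε * a) q =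
          ((∑ j ∈ Finset.Icc 1 ((cfList a q).length - 1),
              if (-1:ℤ)^j = -ε then
                Real.sqrt ((cfDen a q j : ℝ) / cfDen a q (j-1)) *
                  (Real.log ((cfDen a q j : ℝ) / cfDen a q (j-1))
                    + Real.eulerMascheroniConstant - Real.log (8*π))
              else 0 : ℝ) : ℂ)
          - ((π/2 * ∑ j ∈ Finset.Icc 1 ((cfList a q).length - 1),
              if (-1:ℤ)^j = ε then
                Real.sqrt ((cfDen a q j : ℝ) / cfDen a q (j-1))
              else 0 : ℝ) : ℂ)
          + (riemannZeta (1/2))^2 * (((cfList a q).length - 1 : ℕ) + 1)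
          + ((∑ j ∈ Finset.Icc 1 ((cfList a q).length - 1),
              ψ ((ε:ℝ) * (-1:ℝ)^j * ((cfDen a q (j-1) : ℝ) / cfDen a q j)) : ℝ) : ℂ) := by
  refine ⟨rcPsi, rcCC, rcPsi_cont, rcCC_pos, rcPsi_bound, ?_⟩
  intro q a hq ha hc ε hε
  have : NeZero q := ⟨hq.ne_zero⟩
  obtain ⟨c1, c2, c3, c4⟩ := rc_cf hq.two_le hc
  have hcop : IsCoprime (ε * a : ℤ) (q : ℤ) := by
    have h1 : IsCoprime (a : ℤ) (q : ℤ) := Nat.isCoprime_iff_coprime.2 hc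
    rcases hε with h | h
    · rw [h, one_mul]; exact h1
    · rw [h, neg_one_mul]; exact h1.neg_left
  have h := rc_final c2 hε _ le_rfl
  rw [rc_Mstar hq hcop, rc_zeta_half]
  generalize (cfList a q).length - 1 = K at *
  rw [c3] at h
  have hk : rcF (ε * a) q = rcF (-ε * (-1) ^ K * rcVp a q K) q := by
    refine rcF_symm ?_
    obtain ⟨m, rfl⟩ : ∃ m, K = m + 1 := ⟨K - 1, by omega⟩
    have hεε : ((ε : ℤ) : ZMod q) * ε = 1 := by
      rcases hε with h' | h' <;> rw [h'] <;> simp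
    have hv : rcVp a q (m + 1) = cfDen a q m := rfl
    have hp : ((-1 : ZMod q) ^ m) * (-1) ^ m = 1 := by rw [← mul_pow]; simp
    rw [hv]
    rw [Nat.add_sub_cancel] at c4
    push_cast at c4 ⊢
    rw [pow_succ]
    linear_combination (ε : ZMod q) * ε * (-1) ^ m * c4 + (ε : ZMod q) * ε * hp + hεε
  rw [hk, h]
  push_cast
  rfl
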